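/- Assume λ₁(0), λ₂(0) are real and nonzero with λ₁(0) ≠ λ₂(0), and that for all ζ in a neighborhood of 0 in ℝ^l there are no resonances of first or second type of any order, i.e., p₁λ₁(ζ) + p₂λ₂(ζ) ≠ 0 for all nonnegative integers p₁, p₂ with p₁ + p₂ ≥ 1, and p₁λ₁(ζ) + p₂λ₂(ζ) ∉ {λ₁(ζ), λ₂(ζ)} for all nonnegative integers p₁, p₂ with p₁ + p₂ ≥ 2. Then there exists a C^∞ function μ defined on a neighborhood of 0 in ℝ^l with μ(0) = λ₁(0)/λ₂(0) such that the germ of V at 0 is C^∞-smoothly orbitally equivalent to the germ at 0 of the vector field ξ̇ = μ(ζ)·ξ, η̇ = η, ζ̇_i = 0 (i = 1, …, l). -/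

import Mathlib

open Filter Topology

/-- Two vector fields `V`, `N` with marked points `x₀`, `y₀` are `C^∞`-smoothly orbitally
equivalent (as germs) if there are open neighborhoods `U ∋ x₀`, `U' ∋ y₀` with `U`
contained in the domain `Dom`, a `C^∞` diffeomorphism `Φ : U → U'` with `Φ x₀ = y₀`, and
a `C^∞` nowhere-vanishing function `h : U → ℝ` with `DΦ(x)·V(x) = h(x)·N(Φ(x))` on `U`. -/
def OrbEquiv {E : Type*} [NormedAddCommGroup E] [NormedSpace ℝ E]
    (Dom : Set E) (V N : E → E) (x₀ y₀ : E) : Prop :=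
  ∃ (U U' : Set E) (Φ Ψ : E → E) (h : E → ℝ),
    IsOpen U ∧ IsOpen U' ∧ x₀ ∈ U ∧ y₀ ∈ U' ∧ U ⊆ Dom ∧
    ContDiffOn ℝ (⊤ : ℕ∞) Φ U ∧ ContDiffOn ℝ (⊤ : ℕ∞) Ψ U' ∧
    Φ x₀ = y₀ ∧ Set.MapsTo Φ U U' ∧ Set.MapsTo Ψ U' U ∧
    (∀ x ∈ U, Ψ (Φ x) = x) ∧ (∀ y ∈ U', Φ (Ψ y) = y) ∧
    ContDiffOn ℝ (⊤ : ℕ∞) h U ∧ (∀ x ∈ U, h x ≠ 0) ∧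
    ∀ x ∈ U, fderiv ℝ Φ x (V x) = h x • N (Φ x)

/-
By Hadamard's lemma a field vanishing on the axis `{ξ = η = 0}` has the form `V = ξ F₁ + η F₂`.
Its linear parts along the axis have distinct real eigenvalues `λ₁`, `λ₂` depending smoothly on
`ζ`; taking the corresponding eigenforms as coordinates makes these linear parts diagonal.

Such a field is linearized by solving equations `V f - c f = G` near the origin, where `G` vanishes
on the axis to an order from which on `p λ₁ + q λ₂ - c` has no zeros. Non-resonance gives a solution
to every order along the axis, and by Borel's theorem a smooth `f` whose error is flat on the axis.
A flat right-hand side is split over cones on which a quadratic function is monotone along the flow,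
and on each of them the equation is solved by integrating along trajectories.

This yields first integrals `Θ` with `Θ = ζ` on the axis and functions `X`, `Y` with linear parts
`ξ`, `η` such that `V X = λ₁(Θ) X` and `V Y = λ₂(Θ) Y`. By the inverse function theorem
`(X, Y, Θ)` is a local diffeomorphism; it maps `V` to `(λ₁ ξ, λ₂ η, 0)`, which is `λ₂` times the
model with `μ = λ₁ / λ₂`.
-/

namespace OrbitalLinearization

open scoped ContDiff

section Superposition

variable {K : Type*} [TopologicalSpace K] [CompactSpace K]
  {E F : Type*} [NormedAddCommGroup E] [NormedSpace ℝ E] [NormedAddCommGroup F] [NormedSpace ℝ F]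

/-- The linear operator between spaces of curves that applies a curve of operators pointwise. -/
noncomputable def pointwiseApply (a : C(K, E →L[ℝ] F)) : C(K, E) →L[ℝ] C(K, F) :=
  LinearMap.mkContinuous
    { toFun := fun h : C(K, E) => (⟨fun t => a t (h t), by fun_prop⟩ : C(K, F))
      map_add' := fun _ _ => by ext; simp
      map_smul' := fun _ _ => by ext; simp }
    ‖a‖ fun h => by
      rw [ContinuousMap.norm_le _ (by positivity)]
      exact fun t => (a t).le_of_opNorm_le_of_le (a.norm_coe_le_norm t) (h.norm_coe_le_norm t)

/-- Pointwise application of a curve of multilinear maps to curves; the iterated derivatives of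
`V` along `γ` give in this way the iterated derivatives of `γ ↦ V ∘ γ`. -/
noncomputable def pointwiseMultilinear {n : ℕ} (a : C(K, E [×n]→L[ℝ] F)) :
    C(K, E) [×n]→L[ℝ] C(K, F) :=
  MultilinearMap.mkContinuous
    { toFun := fun h : Fin n → C(K, E) => (⟨fun t => a t fun i => h i t, by fun_prop⟩ : C(K, F))
      map_update_add' := fun h i x y => by
        ext t
        simp [Function.apply_update (fun _ (g : C(K, E)) => g t)]
      map_update_smul' := fun h i c x => by
        ext t
        simp [Function.apply_update (fun _ (g : C(K, E)) => g t)] }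
    ‖a‖ fun h => by
      rw [ContinuousMap.norm_le _ (by positivity)]
      exact fun t => ContinuousMultilinearMap.le_mul_prod_of_opNorm_le_of_le
        (a.norm_coe_le_norm t) fun i => (h i).norm_coe_le_norm t

@[simp] lemma pointwiseMultilinear_apply {n : ℕ} (a : C(K, E [×n]→L[ℝ] F)) (h : Fin n → C(K, E))
    (t : K) : pointwiseMultilinear a h t = a t fun i => h i t := rfl

lemma norm_pointwiseMultilinear_le {n : ℕ} (a : C(K, E [×n]→L[ℝ] F)) :
    ‖pointwiseMultilinear a‖ ≤ ‖a‖ :=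
  MultilinearMap.mkContinuous_norm_le _ (norm_nonneg a) _

/-- `pointwiseMultilinear` as a continuous linear map. -/
noncomputable def pointwiseMultilinearCLM (n : ℕ) :
    C(K, E [×n]→L[ℝ] F) →L[ℝ] (C(K, E) [×n]→L[ℝ] C(K, F)) :=
  LinearMap.mkContinuous
    { toFun := fun a : C(K, E [×n]→L[ℝ] F) =>
        (pointwiseMultilinear a : C(K, E) [×n]→L[ℝ] C(K, F))
      map_add' := fun _ _ => by ext; simp
      map_smul' := fun _ _ => by ext; simp }
    1 fun a => by
      rw [one_mul]
      exact norm_pointwiseMultilinear_le a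

lemma hasFDerivAt_comp_curve {V : C(E, F)} {V' : C(E, E →L[ℝ] F)}
    (hV : ∀ x, HasFDerivAt V (V' x) x) (γ : C(K, E)) :
    HasFDerivAt (V.comp : C(K, E) → C(K, F)) (pointwiseApply (V'.comp γ)) γ := by
  rw [hasFDerivAt_iff_isLittleO_nhds_zero, Asymptotics.isLittleO_iff]
  intro ε hε
  obtain ⟨δ, hδ, hV'δ⟩ := Metric.continuousAt_iff (f := (V'.comp : C(K, E) → C(K, E →L[ℝ] F))).1
    (V'.continuous_postcomp.continuousAt (x := γ)) ε hε
  filter_upwards [Metric.ball_mem_nhds (0 : C(K, E)) hδ] with h hh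
  rw [ContinuousMap.norm_le _ (by positivity)]
  intro t
  have hV'_sub : ∀ y ∈ segment ℝ (γ t) (γ t + h t), ‖V' y - V' (γ t)‖ ≤ ε := by
    rw [segment_eq_image']
    rintro _ ⟨s, hs, rfl⟩
    have hdist : dist (γ + s • h) γ < δ := by
      rw [dist_eq_norm, add_sub_cancel_left, norm_smul, Real.norm_of_nonneg hs.1]
      exact (mul_le_of_le_one_left (norm_nonneg _) hs.2).trans_lt (mem_ball_zero_iff.1 hh)
    have := (ContinuousMap.dist_lt_iff hε).1 (hV'δ hdist) t
    rw [dist_eq_norm] at this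
    simpa only [add_sub_cancel_left, ContinuousMap.comp_apply, ContinuousMap.add_apply,
      ContinuousMap.smul_apply] using this.le
  have hmean := (convex_segment (γ t) (γ t + h t)).norm_image_sub_le_of_norm_hasFDerivWithin_le'
    (fun y _ => (hV y).hasFDerivWithinAt) hV'_sub
    (left_mem_segment ℝ _ _) (right_mem_segment ℝ _ _)
  rw [add_sub_cancel_left] at hmean
  exact hmean.trans (by gcongr; exact h.norm_coe_le_norm t)

/-- The derivative of a `C^∞` map, as a bundled continuous map. -/
noncomputable def fderivMap {V : C(E, F)} (hV : ContDiff ℝ ∞ V) : C(E, E →L[ℝ] F) :=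
  ⟨fderiv ℝ V, hV.continuous_fderiv (by simp)⟩

/-- The `n`-th derivative of a `C^∞` map, as a bundled continuous map. -/
noncomputable def iteratedFDerivMap {V : C(E, F)} (hV : ContDiff ℝ ∞ V) (n : ℕ) :
    C(E, E [×n]→L[ℝ] F) :=
  ⟨iteratedFDeriv ℝ n V, hV.continuous_iteratedFDeriv (mod_cast le_top)⟩

lemma contDiff_iteratedFDerivMap {V : C(E, F)} (hV : ContDiff ℝ ∞ V) (n : ℕ) :
    ContDiff ℝ ∞ (iteratedFDerivMap hV n) :=
  hV.iteratedFDeriv_right (mod_cast le_top)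

lemma hasFDerivAt_comp_curve_fderivMap {V : C(E, F)} (hV : ContDiff ℝ ∞ V) (γ : C(K, E)) :
    HasFDerivAt (V.comp : C(K, E) → C(K, F)) (pointwiseApply ((fderivMap hV).comp γ)) γ :=
  hasFDerivAt_comp_curve (fun x => (hV.differentiable (by simp) x).hasFDerivAt) γ

lemma hasFTaylorSeriesUpTo_comp_curve {V : C(E, F)} (hV : ContDiff ℝ ∞ V) :
    HasFTaylorSeriesUpTo ∞ (V.comp : C(K, E) → C(K, F)) fun γ n =>
      pointwiseMultilinear ((iteratedFDerivMap hV n).comp γ) where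
  zero_eq _ := rfl
  fderiv m _ γ := by
    have hderiv := (pointwiseMultilinearCLM m).hasFDerivAt.comp γ
      (hasFDerivAt_comp_curve_fderivMap (contDiff_iteratedFDerivMap hV m) γ)
    exact hderiv.congr_fderiv rfl
  cont m _ := (pointwiseMultilinearCLM m).continuous.comp (ContinuousMap.continuous_postcomp _)

lemma contDiff_comp_curve {V : C(E, F)} (hV : ContDiff ℝ ∞ V) :
    ContDiff ℝ ∞ (V.comp : C(K, E) → C(K, F)) :=
  (hasFTaylorSeriesUpTo_comp_curve hV).contDiff

lemma norm_iteratedFDeriv_comp_curve_le {V : C(E, F)} (hV : ContDiff ℝ ∞ V) {n : ℕ} {γ : C(K, E)}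
    {C : ℝ} (hC : 0 ≤ C) (hVC : ∀ t, ‖iteratedFDeriv ℝ n V (γ t)‖ ≤ C) :
    ‖iteratedFDeriv ℝ n (V.comp : C(K, E) → C(K, F)) γ‖ ≤ C := by
  rw [← (hasFTaylorSeriesUpTo_comp_curve hV).eq_iteratedFDeriv (mod_cast le_top)]
  exact (norm_pointwiseMultilinear_le _).trans ((ContinuousMap.norm_le _ hC).2 hVC)

end Superposition

section Flow

open unitInterval

variable {E : Type*} [NormedAddCommGroup E] [NormedSpace ℝ E]

lemma norm_integral_IccExtend_le (γ : C(I, E)) (t : I) :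
    ‖∫ s in (0 : ℝ)..t, γ.IccExtend zero_le_one s‖ ≤ ‖γ‖ := by
  refine (intervalIntegral.norm_integral_le_of_norm_le_const fun s _ =>
    γ.norm_coe_le_norm _).trans ?_
  rw [sub_zero, abs_of_nonneg t.2.1]
  exact mul_le_of_le_one_right (norm_nonneg γ) t.2.2

/-- The primitive vanishing at `0` of a curve on the unit interval. -/
noncomputable def primitive : C(I, E) →L[ℝ] C(I, E) :=
  LinearMap.mkContinuous
    { toFun := fun γ : C(I, E) =>
        (⟨fun t => ∫ s in (0 : ℝ)..t, γ.IccExtend zero_le_one s,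
          (intervalIntegral.continuous_primitive (fun _ _ =>
            (γ.IccExtend zero_le_one).continuous.intervalIntegrable _ _) 0).comp
            continuous_subtype_val⟩ : C(I, E))
      map_add' := fun γ δ => by
        ext t
        exact intervalIntegral.integral_add
          ((γ.IccExtend zero_le_one).continuous.intervalIntegrable _ _)
          ((δ.IccExtend zero_le_one).continuous.intervalIntegrable _ _)
      map_smul' := fun c γ => by
        ext t
        exact intervalIntegral.integral_smul c (γ.IccExtend zero_le_one) }
    1 fun γ => by
      rw [one_mul, ContinuousMap.norm_le _ (norm_nonneg γ)]
      exact norm_integral_IccExtend_le γ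

lemma primitive_apply (γ : C(I, E)) (t : I) :
    primitive γ t = ∫ s in (0 : ℝ)..t, γ.IccExtend zero_le_one s := rfl

lemma norm_primitive_le (γ : C(I, E)) : ‖primitive γ‖ ≤ ‖γ‖ :=
  (ContinuousMap.norm_le _ (norm_nonneg γ)).2 (norm_integral_IccExtend_le γ)

variable [CompleteSpace E]

lemma eq_const_add_primitive_iff {γ δ : C(I, E)} {x : E} :
    γ = ContinuousMap.const I x + primitive δ ↔ γ 0 = x ∧ ∀ t ∈ Set.Ioo (0 : ℝ) 1,
      HasDerivAt (γ.IccExtend zero_le_one) (δ.IccExtend zero_le_one t) t := by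
  have hδ : Continuous (δ.IccExtend zero_le_one) := (δ.IccExtend zero_le_one).continuous
  constructor
  · intro h
    refine ⟨by simp [h, primitive_apply], fun t ht => ?_⟩
    have hprim := (intervalIntegral.integral_hasDerivAt_right (hδ.intervalIntegrable 0 t)
      (hδ.stronglyMeasurableAtFilter _ _) hδ.continuousAt).const_add x
    refine hprim.congr_of_eventuallyEq ?_
    filter_upwards [Ioo_mem_nhds ht.1 ht.2] with s hs
    rw [ContinuousMap.coe_IccExtend, Set.IccExtend_of_mem _ _ ⟨hs.1.le, hs.2.le⟩, h]
    rfl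
  · rintro ⟨rfl, h⟩
    ext t
    have hsub := intervalIntegral.integral_eq_sub_of_hasDerivAt_of_le t.2.1
      (γ.IccExtend zero_le_one).continuous.continuousOn
      (fun s hs => h s ⟨hs.1, hs.2.trans_le t.2.2⟩) (hδ.intervalIntegrable _ _)
    rw [ContinuousMap.add_apply, primitive_apply, hsub]
    simp only [ContinuousMap.const_apply, ContinuousMap.coe_IccExtend, Set.IccExtend_val,
      Set.IccExtend_left]
    exact (add_sub_cancel _ _).symm

/-- The defect `γ(t) - ∫₀ᵗ X(γ)` of a curve in the integral equation for integral curves of `X`,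
which are the curves with constant defect. -/
noncomputable def picardDefect (X : C(E, E)) (γ : C(I, E)) : C(I, E) := γ - primitive (X.comp γ)

omit [CompleteSpace E] in
lemma approximatesLinearOn_picardDefect {X : C(E, E)} (hX : LipschitzWith (1 / 2) X) :
    ApproximatesLinearOn (picardDefect X)
      (ContinuousLinearEquiv.refl ℝ C(I, E) : C(I, E) →L[ℝ] C(I, E)) Set.univ (1 / 2) := by
  intro γ _ δ _
  have hsub : picardDefect X γ - picardDefect X δ - (γ - δ) =
      -primitive (X.comp γ - X.comp δ) := by
    simp only [picardDefect, map_sub]; abel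
  rw [ContinuousLinearEquiv.coe_refl, ContinuousLinearMap.id_apply, hsub, norm_neg]
  refine (norm_primitive_le _).trans ?_
  rw [ContinuousMap.norm_le _ (by positivity)]
  intro t
  exact (hX.norm_sub_le _ _).trans (by gcongr; exact (γ - δ).norm_coe_le_norm t)

omit [CompleteSpace E] in
lemma subsingleton_or_half_lt_nnnorm_refl_symm_inv (F : Type*) [NormedAddCommGroup F]
    [NormedSpace ℝ F] : Subsingleton F ∨
      (1 / 2 : NNReal) < ‖((ContinuousLinearEquiv.refl ℝ F).symm : F →L[ℝ] F)‖₊⁻¹ := by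
  rcases subsingleton_or_nontrivial F with h | h
  · exact Or.inl h
  · right
    have : ‖((ContinuousLinearEquiv.refl ℝ F).symm : F →L[ℝ] F)‖₊ = 1 :=
      NNReal.eq ContinuousLinearMap.norm_id
    rw [this, inv_one]
    exact NNReal.half_lt_self one_ne_zero

/-- The Picard defect of a vector field with small Lipschitz constant is a homeomorphism of the
space of curves. -/
noncomputable def picardHomeomorph {X : C(E, E)} (hX : LipschitzWith (1 / 2) X) :
    C(I, E) ≃ₜ C(I, E) :=
  (approximatesLinearOn_picardDefect hX).toHomeomorph _
    (subsingleton_or_half_lt_nnnorm_refl_symm_inv _)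

/-- The integral curve on the unit interval issued from `x`. -/
noncomputable def integralCurve {X : C(E, E)} (hX : LipschitzWith (1 / 2) X) (x : E) : C(I, E) :=
  (picardHomeomorph hX).symm (ContinuousMap.const I x)

lemma eq_integralCurve_iff {X : C(E, E)} (hX : LipschitzWith (1 / 2) X) {γ : C(I, E)} {x : E} :
    γ = integralCurve hX x ↔ γ = ContinuousMap.const I x + primitive (X.comp γ) :=
  (Homeomorph.eq_symm_apply _).trans sub_eq_iff_eq_add

lemma eq_integralCurve_iff_hasDerivAt {X : C(E, E)} (hX : LipschitzWith (1 / 2) X) {γ : C(I, E)}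
    {x : E} : γ = integralCurve hX x ↔ γ 0 = x ∧ ∀ t ∈ Set.Ioo (0 : ℝ) 1,
      HasDerivAt (γ.IccExtend zero_le_one) (X (γ.IccExtend zero_le_one t)) t :=
  (eq_integralCurve_iff hX).trans eq_const_add_primitive_iff

lemma hasDerivAt_integralCurve {X : C(E, E)} (hX : LipschitzWith (1 / 2) X) (x : E) {t : ℝ}
    (ht : t ∈ Set.Ioo (0 : ℝ) 1) :
    HasDerivAt ((integralCurve hX x).IccExtend zero_le_one)
      (X ((integralCurve hX x).IccExtend zero_le_one t)) t :=
  ((eq_integralCurve_iff_hasDerivAt hX).1 rfl).2 t ht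

@[simp] lemma integralCurve_zero {X : C(E, E)} (hX : LipschitzWith (1 / 2) X) (x : E) :
    integralCurve hX x 0 = x :=
  ((eq_integralCurve_iff_hasDerivAt hX).1 rfl).1

lemma exists_hasFDerivAt_picardDefect {X : C(E, E)} (hX : LipschitzWith (1 / 2) X)
    (hXs : ContDiff ℝ ∞ X) (γ : C(I, E)) :
    ∃ D : C(I, E) ≃L[ℝ] C(I, E), HasFDerivAt (picardDefect X) (D : C(I, E) →L[ℝ] C(I, E)) γ ∧
      ∀ h, D h = h - primitive (pointwiseApply ((fderivMap hXs).comp γ) h) := by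
  set T : C(I, E) →L[ℝ] C(I, E) := primitive.comp (pointwiseApply ((fderivMap hXs).comp γ))
  have hnorm : ‖T‖ < 1 := by
    refine (ContinuousLinearMap.opNorm_le_bound _ one_half_pos.le fun h => ?_).trans_lt
      one_half_lt_one
    refine (norm_primitive_le _).trans ?_
    rw [ContinuousMap.norm_le _ (by positivity)]
    refine fun t => ContinuousLinearMap.le_of_opNorm_le_of_le _ ?_ (h.norm_coe_le_norm t)
    exact (norm_fderiv_le_of_lipschitz ℝ hX).trans (by simp)
  refine ⟨ContinuousLinearEquiv.ofUnit (Units.oneSub T hnorm), ?_, fun h => rfl⟩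
  have hcomp := (primitive (E := E)).hasFDerivAt.comp γ (hasFDerivAt_comp_curve_fderivMap hXs γ)
  exact (hasFDerivAt_id γ).sub hcomp

lemma contDiff_integralCurve {X : C(E, E)} (hX : LipschitzWith (1 / 2) X)
    (hXs : ContDiff ℝ ∞ X) : ContDiff ℝ ∞ (integralCurve hX) := by
  choose D hD _ using exists_hasFDerivAt_picardDefect hX hXs
  have hdefect : ContDiff ℝ ∞ (picardDefect X) :=
    contDiff_id.sub (primitive.contDiff.comp (contDiff_comp_curve hXs))
  exact ((picardHomeomorph hX).contDiff_symm hD hdefect).comp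
    (ContinuousLinearMap.const ℝ I : E →L[ℝ] C(I, E)).contDiff

/-- Both sides solve the linearized integral equation. -/
lemma fderiv_integralCurve_apply_self {X : C(E, E)} (hX : LipschitzWith (1 / 2) X)
    (hXs : ContDiff ℝ ∞ X) (x : E) :
    fderiv ℝ (integralCurve hX) x (X x) = X.comp (integralCurve hX x) := by
  obtain ⟨D, hD, hD_apply⟩ := exists_hasFDerivAt_picardDefect hX hXs (integralCurve hX x)
  apply D.injective
  have hdefect : D (fderiv ℝ (integralCurve hX) x (X x)) = ContinuousMap.const I (X x) := by
    have hcomp : HasFDerivAt (picardDefect X ∘ integralCurve hX)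
        ((D : C(I, E) →L[ℝ] C(I, E)).comp (fderiv ℝ (integralCurve hX) x)) x :=
      hD.comp x ((contDiff_integralCurve hX hXs).differentiable (by simp) x).hasFDerivAt
    have hconst : picardDefect X ∘ integralCurve hX = (ContinuousLinearMap.const ℝ I : E →L[ℝ] _) :=
      funext fun x => (picardHomeomorph hX).apply_symm_apply _
    rw [hconst] at hcomp
    exact congrArg (· (X x)) (hcomp.unique (ContinuousLinearMap.hasFDerivAt _))
  rw [hdefect, hD_apply, eq_sub_iff_add_eq, eq_comm, eq_const_add_primitive_iff]
  refine ⟨by simp, fun t ht => ?_⟩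
  exact ((hXs.differentiable (by simp) _).hasFDerivAt).comp_hasDerivAt t
    (hasDerivAt_integralCurve hX x ht)

end Flow

section DerivativeBounds

variable {E F G : Type*} [NormedAddCommGroup E] [NormedSpace ℝ E]
  [NormedAddCommGroup F] [NormedSpace ℝ F] [NormedAddCommGroup G] [NormedSpace ℝ G]

lemma exists_bound_forall_le {ι : Type*} {a : ℕ → ι → ℝ} (ha : ∀ i, ∃ C, ∀ x, a i x ≤ C) (n : ℕ) :
    ∃ C, 1 ≤ C ∧ ∀ i ≤ n, ∀ x, a i x ≤ C := by
  choose C hC using ha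
  obtain ⟨M, hM⟩ := ((Finset.range (n + 1)).image C).exists_le
  exact ⟨max 1 M, le_max_left _ _, fun i hi x => (hC i x).trans ((hM _ (Finset.mem_image_of_mem _
    (Finset.mem_range.2 (by omega)))).trans (le_max_right _ _))⟩

lemma exists_bound_iteratedFDeriv {f : E → F} (hf : ContDiff ℝ ∞ f) (hc : HasCompactSupport f)
    (i : ℕ) : ∃ C, ∀ x, ‖iteratedFDeriv ℝ i f x‖ ≤ C :=
  (hf.continuous_iteratedFDeriv (mod_cast le_top)).bounded_above_of_compact_support
    (hc.iteratedFDeriv i)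

lemma exists_bound_iteratedFDeriv_le {f : E → F} (hf : ContDiff ℝ ∞ f) (hc : HasCompactSupport f)
    (n : ℕ) : ∃ C, 0 ≤ C ∧ ∀ i ≤ n, ∀ x, ‖iteratedFDeriv ℝ i f x‖ ≤ C := by
  obtain ⟨C, hC1, hC⟩ := exists_bound_forall_le (exists_bound_iteratedFDeriv hf hc) n
  exact ⟨C, zero_le_one.trans hC1, hC⟩

/-- All derivatives of positive order of `f` are bounded. This class contains the flows of the
truncated vector fields and is stable under composition. -/
def BoundedDerivs (f : E → F) : Prop :=
  ∀ i, 1 ≤ i → ∃ C, ∀ x, ‖iteratedFDeriv ℝ i f x‖ ≤ C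

lemma boundedDerivs_clm (A : E →L[ℝ] F) : BoundedDerivs A := by
  rintro (_ | _ | k) hk
  · omega
  · exact ⟨‖A‖, fun x => by simp [norm_iteratedFDeriv_one]⟩
  · have hconst : fderiv ℝ A = fun _ => A := by ext1 x; exact A.fderiv
    refine ⟨0, fun x => ?_⟩
    rw [← norm_iteratedFDeriv_fderiv, hconst]
    simp [iteratedFDeriv_succ_const]

lemma boundedDerivs_of_hasCompactSupport_sub {f : E → F} (hf : ContDiff ℝ ∞ f) (A : E →L[ℝ] F)
    (hc : HasCompactSupport fun x => f x - A x) : BoundedDerivs f := by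
  intro k hk
  have hsub : ContDiff ℝ ∞ fun x => f x - A x := hf.sub A.contDiff
  obtain ⟨C, hC⟩ := exists_bound_iteratedFDeriv hsub hc k
  obtain ⟨C', hC'⟩ := boundedDerivs_clm A k hk
  refine ⟨C + C', fun x => ?_⟩
  have hf_eq : f = (fun x => f x - A x) + A := by ext x; simp
  rw [hf_eq, iteratedFDeriv_add (hsub.of_le (mod_cast le_top)) A.contDiff]
  exact (norm_add_le _ _).trans (add_le_add (hC x) (hC' x))

lemma BoundedDerivs.clm_comp {f : E → F} (hf : BoundedDerivs f) (hs : ContDiff ℝ ∞ f)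
    (A : F →L[ℝ] G) : BoundedDerivs (A ∘ f) := by
  intro i hi
  obtain ⟨C, hC⟩ := hf i hi
  refine ⟨‖A‖ * C, fun x => (A.norm_iteratedFDeriv_comp_left (N := ∞) hs.contDiffAt
    (mod_cast le_top)).trans ?_⟩
  gcongr
  exact hC x

lemma BoundedDerivs.exists_pow_bound {f : E → F} (hf : BoundedDerivs f) (n : ℕ) :
    ∃ D : ℝ, 1 ≤ D ∧ ∀ i, 1 ≤ i → i ≤ n → ∀ x, ‖iteratedFDeriv ℝ i f x‖ ≤ D ^ i := by
  obtain ⟨D, hD1, hD⟩ := exists_bound_forall_le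
    (a := fun i x => ‖iteratedFDeriv ℝ (i + 1) f x‖) (fun i => hf (i + 1) (by omega)) n
  refine ⟨D, hD1, fun i hi hin x => ?_⟩
  obtain ⟨k, rfl⟩ := Nat.exists_eq_add_of_le' hi
  exact (hD k (by omega) x).trans (le_self_pow₀ hD1 (by omega))

lemma BoundedDerivs.exists_comp_bound {f : E → F} (hf : BoundedDerivs f) (hs : ContDiff ℝ ∞ f)
    (n : ℕ) : ∃ K : ℝ, 0 ≤ K ∧ ∀ g : F → G, ContDiff ℝ ∞ g → ∀ (x : E) (C : ℝ),
      (∀ i ≤ n, ‖iteratedFDeriv ℝ i g (f x)‖ ≤ C) →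
      ∀ i ≤ n, ‖iteratedFDeriv ℝ i (g ∘ f) x‖ ≤ K * C := by
  obtain ⟨D, hD1, hD⟩ := hf.exists_pow_bound n
  refine ⟨n.factorial * D ^ n, by positivity, fun g hg x C hC i hi => ?_⟩
  have hC0 : 0 ≤ C := (norm_nonneg _).trans (hC 0 (Nat.zero_le _))
  calc ‖iteratedFDeriv ℝ i (g ∘ f) x‖ ≤ i.factorial * C * D ^ i :=
        norm_iteratedFDeriv_comp_le (N := ∞) hg hs (mod_cast le_top) x
          (fun j hj => hC j (hj.trans hi)) (fun j hj hji => hD j hj (hji.trans hi) x)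
    _ ≤ n.factorial * C * D ^ n := by gcongr
    _ = n.factorial * D ^ n * C := by ring

lemma contDiff_iterate {f : E → E} (hf : ContDiff ℝ ∞ f) (m : ℕ) : ContDiff ℝ ∞ f^[m] := by
  induction m with
  | zero => exact contDiff_id
  | succ m ih => exact ih.comp hf

lemma BoundedDerivs.exists_iterate_bound {f : E → E} (hf : BoundedDerivs f)
    (hs : ContDiff ℝ ∞ f) (n : ℕ) : ∃ K : ℝ, 0 ≤ K ∧ ∀ (m : ℕ) (g : E → G), ContDiff ℝ ∞ g →
      ∀ (x : E) (C : ℝ), (∀ i ≤ n, ‖iteratedFDeriv ℝ i g (f^[m] x)‖ ≤ C) →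
      ∀ i ≤ n, ‖iteratedFDeriv ℝ i (g ∘ f^[m]) x‖ ≤ K ^ m * C := by
  obtain ⟨K, hK0, hK⟩ := hf.exists_comp_bound (G := G) hs n
  refine ⟨K, hK0, fun m => ?_⟩
  induction m with
  | zero => intro g _ x C hC; simpa using hC
  | succ m ih =>
    intro g hg x C hC
    rw [Function.iterate_succ, ← Function.comp_assoc, pow_succ', mul_assoc]
    exact hK _ (hg.comp (contDiff_iterate hs m)) x _ (ih g hg (f x) C hC)

end DerivativeBounds

section Series

variable {E F : Type*} [NormedAddCommGroup E] [NormedSpace ℝ E]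
  [NormedAddCommGroup F] [NormedSpace ℝ F] [CompleteSpace F]

lemma hasFDerivAt_tsum_of_locally_bounded {f : ℕ → E → F} {f' : ℕ → E → E →L[ℝ] F} {u : ℕ → ℝ}
    {b : E → ℝ} (hu : Summable u) (hu0 : ∀ n, 0 ≤ u n) (hb : Continuous b)
    (hf : ∀ n x, HasFDerivAt (f n) (f' n x) x) (hf' : ∀ n x, ‖f' n x‖ ≤ u n * b x) {x : E}
    (hx : Summable fun n => f n x) : HasFDerivAt (fun y => ∑' n, f n y) (∑' n, f' n x) x := by
  obtain ⟨r, hr, hball⟩ := Metric.nhds_basis_ball.mem_iff.1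
    (hb.continuousAt.eventually_lt continuousAt_const (lt_add_one (b x)))
  refine hasFDerivAt_tsum_of_isPreconnected (hu.mul_right (b x + 1)) Metric.isOpen_ball
    Metric.isPreconnected_ball (fun n y _ => hf n y) (fun n y hy => (hf' n y).trans ?_)
    (Metric.mem_ball_self hr) hx (Metric.mem_ball_self hr)
  exact mul_le_mul_of_nonneg_left (hball hy).le (hu0 n)

lemma hasFTaylorSeriesUpTo_tsum {f : ℕ → E → F} (hf : ∀ n, ContDiff ℝ ∞ (f n)) {u : ℕ → ℝ}
    (hu : Summable u) (hu0 : ∀ n, 0 ≤ u n)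
    (hfu : ∀ k, ∃ b : E → ℝ, Continuous b ∧ ∀ n x, ‖iteratedFDeriv ℝ k (f n) x‖ ≤ u n * b x) :
    HasFTaylorSeriesUpTo ∞ (fun x => ∑' n, f n x) fun x k => ∑' n, iteratedFDeriv ℝ k (f n) x := by
  have hsumm (k : ℕ) (x : E) : Summable fun n => iteratedFDeriv ℝ k (f n) x := by
    obtain ⟨b, -, hb⟩ := hfu k
    exact Summable.of_norm_bounded (hu.mul_right (b x)) fun n => hb n x
  have hderiv (k : ℕ) (x : E) : HasFDerivAt (fun y => ∑' n, iteratedFDeriv ℝ k (f n) y)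
      (∑' n, iteratedFDeriv ℝ (k + 1) (f n) x).curryLeft x := by
    obtain ⟨b, hb, hbound⟩ := hfu (k + 1)
    refine (hasFDerivAt_tsum_of_locally_bounded hu hu0 hb (fun n y =>
      ((hf n).differentiable_iteratedFDeriv (mod_cast ENat.natCast_lt_top k) y).hasFDerivAt)
      (fun n y => ?_) (hsumm k x)).congr_fderiv ?_
    · rw [norm_fderiv_iteratedFDeriv]
      exact hbound n y
    · exact (tsum_congr fun n => congrFun (fderiv_iteratedFDeriv (n := k)) x).trans
        (continuousMultilinearCurryLeftEquiv ℝ (fun _ : Fin (k + 1) => E)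
          F).toContinuousLinearEquiv.map_tsum.symm
  exact {
    zero_eq := fun x =>
      ((continuousMultilinearCurryFin0 ℝ E F).toContinuousLinearEquiv.map_tsum).trans
        (tsum_congr fun n => (iteratedFDeriv_zero_eq_comp (𝕜 := ℝ) (f := f n)) ▸ rfl)
    fderiv := fun k _ x => hderiv k x
    cont := fun k _ => continuous_iff_continuousAt.2 fun x => (hderiv k x).continuousAt }

end Series

section LinearAtInfinity

open unitInterval

variable {E : Type*} [NormedAddCommGroup E] [NormedSpace ℝ E]

lemma exists_clm_eq_integralCurve [CompleteSpace E] {A : E →L[ℝ] E}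
    (hA : LipschitzWith (1 / 2) (A : C(E, E))) :
    ∃ Q : E →L[ℝ] C(I, E), ⇑Q = integralCurve hA := by
  obtain ⟨D, -, hD⟩ := exists_hasFDerivAt_picardDefect hA A.contDiff 0
  refine ⟨(D.symm : C(I, E) →L[ℝ] C(I, E)) ∘L ContinuousLinearMap.const ℝ I, funext fun x => ?_⟩
  have hAD (γ : C(I, E)) : D γ = γ - primitive ((A : C(E, E)).comp γ) := by
    rw [hD]
    congr 2
    ext t
    exact congrArg (· (γ t)) (A.fderiv (x := 0))
  rw [eq_integralCurve_iff, ← sub_eq_iff_eq_add, ← hAD]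
  exact D.apply_symm_apply _

lemma norm_le_two_mul_norm_integralCurve [CompleteSpace E] {X : C(E, E)}
    (hX : LipschitzWith (1 / 2) X) (hXle : ∀ y, ‖X y‖ ≤ 1 / 4 * ‖y‖) (x : E) (t : I) :
    ‖x‖ ≤ 2 * ‖integralCurve hX x t‖ := by
  set γ := integralCurve hX x with hγ
  have hγ_eq : γ = ContinuousMap.const I x + primitive (X.comp γ) := (eq_integralCurve_iff hX).1 hγ
  have hprim : ‖primitive (X.comp γ)‖ ≤ 1 / 4 * ‖γ‖ := by
    refine (norm_primitive_le _).trans ((ContinuousMap.norm_le _ (by positivity)).2 fun s => ?_)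
    exact (hXle _).trans (by gcongr; exact γ.norm_coe_le_norm s)
  have hclose (s : I) : ‖γ s - x‖ ≤ 1 / 4 * ‖γ‖ := by
    have hs : γ s - x = primitive (X.comp γ) s :=
      sub_eq_iff_eq_add'.2 (DFunLike.congr_fun hγ_eq s)
    rw [hs]
    exact ((primitive (X.comp γ)).norm_coe_le_norm s).trans hprim
  have hγ_le : ‖γ‖ ≤ ‖x‖ + 1 / 4 * ‖γ‖ := by
    refine (ContinuousMap.norm_le _ (by positivity)).2 fun s => ?_
    exact (norm_le_norm_add_norm_sub' _ _).trans (add_le_add_right (hclose s) _)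
  have hx_le : ‖x‖ ≤ ‖γ t‖ + 1 / 4 * ‖γ‖ :=
    (norm_le_norm_add_norm_sub _ _).trans (add_le_add_right (hclose t) _)
  linarith [norm_nonneg (γ t)]

lemma boundedDerivs_integralCurve [ProperSpace E] {X : C(E, E)} (hX : LipschitzWith (1 / 2) X)
    (hXs : ContDiff ℝ ∞ X) {A : E →L[ℝ] E} (hA : ‖A‖ ≤ 1 / 4)
    (hXA : HasCompactSupport fun x => X x - A x) : BoundedDerivs (integralCurve hX) := by
  have hAle (y : E) : ‖A y‖ ≤ 1 / 4 * ‖y‖ := A.le_of_opNorm_le hA y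
  have hAL : LipschitzWith (1 / 2) (A : C(E, E)) :=
    A.lipschitz.weaken (NNReal.coe_le_coe.1 (hA.trans (by norm_num)))
  obtain ⟨Q, hQ⟩ := exists_clm_eq_integralCurve hAL
  obtain ⟨R, hR⟩ := hXA.isCompact.isBounded.subset_closedBall 0
  refine boundedDerivs_of_hasCompactSupport_sub (contDiff_integralCurve hX hXs) Q
    (HasCompactSupport.intro (isCompact_closedBall (0 : E) (2 * R)) fun x hx => ?_)
  rw [sub_eq_zero, eq_comm, eq_integralCurve_iff, hQ]
  have hXA_comp : X.comp (integralCurve hAL x) = (A : C(E, E)).comp (integralCurve hAL x) := by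
    ext t
    refine sub_eq_zero.1 (image_eq_zero_of_notMem_tsupport
      (f := fun x => X x - A x) fun ht => hx ?_)
    rw [mem_closedBall_zero_iff]
    exact (norm_le_two_mul_norm_integralCurve hAL hAle x t).trans
      (by gcongr; exact mem_closedBall_zero_iff.1 (hR ht))
  rw [hXA_comp]
  exact (eq_integralCurve_iff hAL).1 rfl

end LinearAtInfinity

section FlowAverage

open unitInterval

variable {E : Type*} [NormedAddCommGroup E] [NormedSpace ℝ E]

/-- The functional `γ ↦ ∫₀¹ exp (-c s) γ(s) ds`. -/
noncomputable def weightedIntegral (c : ℝ) : C(I, ℝ) →L[ℝ] ℝ :=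
  ContinuousMap.evalCLM ℝ (1 : I) ∘L primitive ∘L
    ContinuousLinearMap.mul ℝ C(I, ℝ) ⟨fun s => Real.exp (-c * s), by fun_prop⟩

lemma weightedIntegral_sub (c : ℝ) {γ δ : C(I, ℝ)} (hγ : ∀ t ∈ Set.Ioo (0 : ℝ) 1,
      HasDerivAt (γ.IccExtend zero_le_one) (δ.IccExtend zero_le_one t) t) :
    weightedIntegral c δ - c * weightedIntegral c γ = Real.exp (-c) * γ 1 - γ 0 := by
  set e : C(I, ℝ) := ⟨fun s => Real.exp (-c * s), by fun_prop⟩ with he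
  have he_coe {t : ℝ} (ht : t ∈ Set.Icc (0 : ℝ) 1) :
      e.IccExtend zero_le_one t = Real.exp (-c * t) := by
    rw [ContinuousMap.coe_IccExtend, Set.IccExtend_of_mem _ _ ht]
    rfl
  have he_deriv (t : ℝ) (ht : t ∈ Set.Ioo (0 : ℝ) 1) :
      HasDerivAt (e.IccExtend zero_le_one) (-c * e.IccExtend zero_le_one t) t := by
    rw [he_coe ⟨ht.1.le, ht.2.le⟩]
    have hexp : HasDerivAt (fun s => Real.exp (-c * s)) (-c * Real.exp (-c * t)) t :=
      ((hasDerivAt_id t).const_mul (-c)).exp.congr_deriv (by simp [mul_comm])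
    refine hexp.congr_of_eventuallyEq ?_
    filter_upwards [Ioo_mem_nhds ht.1 ht.2] with s hs using he_coe ⟨hs.1.le, hs.2.le⟩
  have hprim : e * γ = ContinuousMap.const I (e 0 * γ 0) + primitive (e * δ - c • (e * γ)) := by
    refine eq_const_add_primitive_iff.2 ⟨rfl, fun t ht => ?_⟩
    refine ((he_deriv t ht).mul (hγ t ht)).congr_deriv ?_
    simp only [ContinuousMap.coe_IccExtend, Set.IccExtend, Function.comp_apply,
      ContinuousMap.sub_apply, ContinuousMap.mul_apply, ContinuousMap.smul_apply, smul_eq_mul]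
    ring
  have hdiff : weightedIntegral c δ - c * weightedIntegral c γ =
      primitive (e * δ - c • (e * γ)) 1 := by
    rw [map_sub, map_smul]
    rfl
  have hone := DFunLike.congr_fun hprim 1
  simp only [ContinuousMap.add_apply, ContinuousMap.mul_apply, ContinuousMap.const_apply] at hone
  rw [hdiff, ← sub_eq_iff_eq_add'.2 hone]
  simp [he]

variable [CompleteSpace E] {X : C(E, E)}

/-- The average `∫₀¹ exp (-c s) G(Fₛ x) ds` of `G` along the flow `Fₛ` of `X`. It solves the
equation `X g - c g = exp (-c) G ∘ F₁ - G`. -/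
noncomputable def flowAverage (hX : LipschitzWith (1 / 2) X) (c : ℝ) (G : C(E, ℝ)) (x : E) : ℝ :=
  weightedIntegral c (G.comp (integralCurve hX x))

lemma contDiff_flowAverage (hX : LipschitzWith (1 / 2) X) (hXs : ContDiff ℝ ∞ X) (c : ℝ)
    {G : C(E, ℝ)} (hG : ContDiff ℝ ∞ G) : ContDiff ℝ ∞ (flowAverage hX c G) :=
  (weightedIntegral c).contDiff.comp ((contDiff_comp_curve hG).comp (contDiff_integralCurve hX hXs))

lemma fderiv_flowAverage_sub (hX : LipschitzWith (1 / 2) X) (hXs : ContDiff ℝ ∞ X) (c : ℝ)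
    {G : C(E, ℝ)} (hG : ContDiff ℝ ∞ G) (x : E) :
    fderiv ℝ (flowAverage hX c G) x (X x) - c * flowAverage hX c G x =
      Real.exp (-c) * G (integralCurve hX x 1) - G x := by
  set γ := integralCurve hX x with hγ
  have hcomp := (hasFDerivAt_comp_curve_fderivMap hG γ).comp x
    ((contDiff_integralCurve hX hXs).differentiable (by simp) x).hasFDerivAt
  have hfderiv : fderiv ℝ (flowAverage hX c G) x (X x) =
      weightedIntegral c (pointwiseApply ((fderivMap hG).comp γ) (X.comp γ)) := by
    have h := ((weightedIntegral c).hasFDerivAt.comp x hcomp).fderiv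
    rw [← fderiv_integralCurve_apply_self hX hXs]
    exact congrArg (· (X x)) h
  rw [hfderiv, flowAverage, weightedIntegral_sub c fun t ht => ?_]
  · simp [hγ]
  · exact ((hG.differentiable (by simp) _).hasFDerivAt).comp_hasDerivAt t
      (hasDerivAt_integralCurve hX x ht)

lemma fderiv_integralCurve_one (hX : LipschitzWith (1 / 2) X) (hXs : ContDiff ℝ ∞ X) (x : E) :
    fderiv ℝ (fun x => integralCurve hX x 1) x (X x) = X (integralCurve hX x 1) := by
  have h := ((ContinuousMap.evalCLM ℝ (1 : I) : C(I, E) →L[ℝ] E).hasFDerivAt.comp x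
    ((contDiff_integralCurve hX hXs).differentiable (by simp) x).hasFDerivAt).fderiv
  exact (congrArg (· (X x)) h).trans
    (DFunLike.congr_fun (fderiv_integralCurve_apply_self hX hXs x) 1)

end FlowAverage

section Lyapunov

open unitInterval

variable {E : Type*} [NormedAddCommGroup E] [NormedSpace ℝ E]

lemma exp_mul_lyapunov_integralCurve_le [CompleteSpace E] {X : C(E, E)}
    (hX : LipschitzWith (1 / 2) X) {W : E → ℝ} (hW : Differentiable ℝ W) {lam : ℝ}
    (hWX : ∀ x, fderiv ℝ W x (X x) ≤ -lam * W x) (x : E) (t : I) :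
    Real.exp (lam * t) * W (integralCurve hX x t) ≤ W x := by
  set γ : C(ℝ, E) := (integralCurve hX x).IccExtend zero_le_one with hγ
  have hderiv (s : ℝ) (hs : s ∈ Set.Ioo (0 : ℝ) 1) :
      HasDerivAt (fun s => Real.exp (lam * s) * W (γ s))
        (Real.exp (lam * s) * (lam * 1) * W (γ s) +
          Real.exp (lam * s) * fderiv ℝ W (γ s) (X (γ s))) s :=
    (((hasDerivAt_id s).const_mul lam).exp).mul
      ((hW (γ s)).hasFDerivAt.comp_hasDerivAt s (hasDerivAt_integralCurve hX x hs))
  have hcont : Continuous fun s => Real.exp (lam * s) * W (γ s) :=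
    (by fun_prop : Continuous fun s => Real.exp (lam * s)).mul (hW.continuous.comp γ.continuous)
  have hanti : AntitoneOn (fun s => Real.exp (lam * s) * W (γ s)) (Set.Icc 0 1) := by
    refine antitoneOn_of_deriv_nonpos (convex_Icc 0 1) hcont.continuousOn ?_ ?_ <;>
      rw [interior_Icc]
    · exact fun s hs => (hderiv s hs).differentiableAt.differentiableWithinAt
    · intro s hs
      rw [(hderiv s hs).deriv]
      have hdecay := mul_le_mul_of_nonneg_left (hWX (γ s)) (Real.exp_pos (lam * s)).le
      linarith
  simpa [hγ] using hanti (Set.left_mem_Icc.2 zero_le_one) t.2 t.2.1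

lemma max_lyapunov_integralCurve_le [CompleteSpace E] {X : C(E, E)}
    (hX : LipschitzWith (1 / 2) X) {W : E → ℝ} (hW : Differentiable ℝ W) {lam : ℝ}
    (hWX : ∀ x, fderiv ℝ W x (X x) ≤ -lam * W x) (x : E) (t : I) :
    max (W (integralCurve hX x t)) 0 ≤ Real.exp (-(lam * t)) * max (W x) 0 := by
  refine max_le ?_ (by positivity)
  rw [Real.exp_neg, inv_mul_eq_div, le_div_iff₀ (Real.exp_pos _), mul_comm]
  exact (exp_mul_lyapunov_integralCurve_le hX hW hWX x t).trans (le_max_left _ _)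

/-- Derivatives of all orders of `G` are dominated by all powers of the positive part of `W`. -/
def Dominated (W : E → ℝ) (G : E → ℝ) : Prop :=
  ∀ j M : ℕ, ∃ C, 0 ≤ C ∧ ∀ i ≤ j, ∀ y, ‖iteratedFDeriv ℝ i G y‖ ≤ C * (max (W y) 0) ^ M

lemma Dominated.const_smul {W G : E → ℝ} (hGW : Dominated W G) (hG : ContDiff ℝ ∞ G) (r : ℝ) :
    Dominated W (r • G) := by
  intro j M
  obtain ⟨C, hC0, hC⟩ := hGW j M
  refine ⟨|r| * C, by positivity, fun i hi y => ?_⟩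
  rw [iteratedFDeriv_const_smul_apply (hG.of_le (mod_cast le_top)).contDiffAt, norm_smul,
    Real.norm_eq_abs, mul_assoc]
  exact mul_le_mul_of_nonneg_left (hC i hi y) (abs_nonneg r)

lemma Dominated.flowAverage [ProperSpace E] {X : C(E, E)} (hX : LipschitzWith (1 / 2) X)
    (hXs : ContDiff ℝ ∞ X) (hXb : BoundedDerivs (integralCurve hX)) {W : E → ℝ}
    (hXW : ∀ x t, max (W (integralCurve hX x t)) 0 ≤ max (W x) 0) {G : C(E, ℝ)}
    (hG : ContDiff ℝ ∞ G) (hGW : Dominated W G) (c : ℝ) : Dominated W (flowAverage hX c G) := by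
  intro j M
  obtain ⟨C, hC0, hC⟩ := hGW j M
  obtain ⟨K, hK0, hK⟩ := hXb.exists_comp_bound (G := C(I, ℝ)) (contDiff_integralCurve hX hXs) j
  refine ⟨‖weightedIntegral c‖ * (K * C), by positivity, fun i hi y => ?_⟩
  have hcurve : ‖iteratedFDeriv ℝ i (G.comp ∘ integralCurve hX) y‖ ≤
      K * (C * (max (W y) 0) ^ M) := by
    refine hK _ (contDiff_comp_curve hG) y _ (fun k hk => ?_) i hi
    refine norm_iteratedFDeriv_comp_curve_le hG (by positivity) fun t => (hC k hk _).trans ?_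
    gcongr C * ?_ ^ M
    exact hXW y t
  calc ‖iteratedFDeriv ℝ i (weightedIntegral c ∘ G.comp ∘ integralCurve hX) y‖
      ≤ ‖weightedIntegral c‖ * ‖iteratedFDeriv ℝ i (G.comp ∘ integralCurve hX) y‖ :=
        (weightedIntegral c).norm_iteratedFDeriv_comp_left (N := ∞)
          ((contDiff_comp_curve hG).comp (contDiff_integralCurve hX hXs)).contDiffAt
          (mod_cast le_top)
    _ ≤ ‖weightedIntegral c‖ * (K * (C * (max (W y) 0) ^ M)) := by gcongr
    _ = ‖weightedIntegral c‖ * (K * C) * (max (W y) 0) ^ M := by ring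

lemma iterate_le_pow_mul {S : Type*} {W : S → ℝ} {F : S → S} {q : ℝ} (hq : 0 ≤ q)
    (hFW : ∀ x, W (F x) ≤ q * W x) (n : ℕ) (x : S) : W (F^[n] x) ≤ q ^ n * W x := by
  induction n with
  | zero => simp
  | succ n ih =>
    rw [Function.iterate_succ_apply', pow_succ', mul_assoc]
    exact (hFW _).trans (by gcongr)

/-- The derivatives of `g ∘ Fⁿ` grow at most exponentially in `n`; a high power of `W`, which
decays geometrically along the iterates, beats this growth. -/
lemma Dominated.exists_iterate_bound {W g : E → ℝ} (hgW : Dominated W g) (hg : ContDiff ℝ ∞ g)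
    (hW : Continuous W) {F : E → E} (hF : ContDiff ℝ ∞ F) (hFb : BoundedDerivs F) {q : ℝ}
    (hq0 : 0 ≤ q) (hq1 : q < 1) (hFW : ∀ x, max (W (F x)) 0 ≤ q * max (W x) 0) {a : ℝ}
    (ha : 0 ≤ a) (k : ℕ) :
    ∃ b : E → ℝ, Continuous b ∧ (∀ x, W x ≤ 0 → b x = 0) ∧ ∀ n x,
      ‖iteratedFDeriv ℝ k (a ^ n • (g ∘ F^[n])) x‖ ≤ (1 / 2) ^ n * b x := by
  obtain ⟨K, hK0, hK⟩ := hFb.exists_iterate_bound (G := ℝ) hF k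
  obtain ⟨M, hM, hM1⟩ : ∃ M : ℕ, a * K * q ^ M ≤ 1 / 2 ∧ 1 ≤ M := by
    have hlim : Tendsto (fun M : ℕ => a * K * q ^ M) atTop (𝓝 (a * K * 0)) :=
      (tendsto_pow_atTop_nhds_zero_of_lt_one hq0 hq1).const_mul _
    rw [mul_zero] at hlim
    exact ((hlim.eventually_le_const one_half_pos).and (eventually_ge_atTop 1)).exists
  obtain ⟨C, hC0, hC⟩ := hgW k M
  refine ⟨fun x => C * (max (W x) 0) ^ M, by fun_prop, fun x hx => ?_, fun n x => ?_⟩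
  · simp only [max_eq_right hx, zero_pow (Nat.one_le_iff_ne_zero.1 hM1), mul_zero]
  have hiterate : ‖iteratedFDeriv ℝ k (g ∘ F^[n]) x‖ ≤
      K ^ n * (C * (q ^ n * max (W x) 0) ^ M) := by
    refine hK n g hg x _ (fun j hj => (hC j hj _).trans ?_) k le_rfl
    gcongr C * ?_ ^ M
    exact iterate_le_pow_mul (W := fun y => max (W y) 0) hq0 hFW n x
  rw [iteratedFDeriv_const_smul_apply
    ((hg.comp (contDiff_iterate hF n)).of_le (mod_cast le_top)).contDiffAt, norm_smul,
    Real.norm_of_nonneg (by positivity)]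
  calc a ^ n * ‖iteratedFDeriv ℝ k (g ∘ F^[n]) x‖
      ≤ a ^ n * (K ^ n * (C * (q ^ n * max (W x) 0) ^ M)) := by gcongr
    _ = (a * K * q ^ M) ^ n * (C * (max (W x) 0) ^ M) := by
      rw [mul_pow, mul_pow, mul_pow, ← pow_mul, ← pow_mul, mul_comm n M]; ring
    _ ≤ (1 / 2) ^ n * (C * (max (W x) 0) ^ M) := by gcongr

lemma fderiv_iterate_apply_self {X F : E → E} (hF : Differentiable ℝ F)
    (hFX : ∀ x, fderiv ℝ F x (X x) = X (F x)) (n : ℕ) (x : E) :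
    fderiv ℝ F^[n] x (X x) = X (F^[n] x) := by
  induction n generalizing x with
  | zero => simp
  | succ n ih =>
    rw [Function.iterate_succ, fderiv_comp x (hF.iterate n _) (hF x),
      ContinuousLinearMap.comp_apply, hFX, ih]
    rfl

lemma fderiv_pow_smul_comp_iterate_sub {X F : E → E} (hF : Differentiable ℝ F)
    (hFX : ∀ x, fderiv ℝ F x (X x) = X (F x)) {g G : E → ℝ} (hg : Differentiable ℝ g) {a c : ℝ}
    (hgG : ∀ x, fderiv ℝ g x (X x) - c * g x = a * G (F x) - G x) (n : ℕ) (x : E) :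
    fderiv ℝ (a ^ n • (g ∘ F^[n])) x (X x) - c * (a ^ n • (g ∘ F^[n])) x =
      a ^ (n + 1) * G (F^[n + 1] x) - a ^ n * G (F^[n] x) := by
  have hfderiv : fderiv ℝ (a ^ n • (g ∘ F^[n])) x (X x) =
      a ^ n * fderiv ℝ g (F^[n] x) (X (F^[n] x)) := by
    rw [← fderiv_iterate_apply_self hF hFX, fderiv_const_smul ((hg _).comp x (hF.iterate n x)),
      fderiv_comp x (hg _) (hF.iterate n x)]
    rfl
  rw [hfderiv, Function.iterate_succ_apply', Pi.smul_apply, smul_eq_mul, Function.comp_apply]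
  linear_combination a ^ n * hgG (F^[n] x)

/-- The solution is `-∑ₙ aⁿ g ∘ Fⁿ`, because `X - c` turns the series into the telescoping series
with terms `aⁿ⁺¹ G ∘ Fⁿ⁺¹ - aⁿ G ∘ Fⁿ`. -/
lemma exists_solution_of_contracting {X F : E → E} (hF : ContDiff ℝ ∞ F) (hFb : BoundedDerivs F)
    (hFX : ∀ x, fderiv ℝ F x (X x) = X (F x)) {W : E → ℝ} (hW : Continuous W) {q : ℝ}
    (hq0 : 0 ≤ q) (hq1 : q < 1) (hFW : ∀ x, max (W (F x)) 0 ≤ q * max (W x) 0) {g G : E → ℝ}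
    (hg : ContDiff ℝ ∞ g) (hG : ContDiff ℝ ∞ G) (hgW : Dominated W g) (hGW : Dominated W G)
    {a c : ℝ} (ha : 0 ≤ a) (hgG : ∀ x, fderiv ℝ g x (X x) - c * g x = a * G (F x) - G x) :
    ∃ f : E → ℝ, ContDiff ℝ ∞ f ∧ (∀ x, W x ≤ 0 → ∀ j, iteratedFDeriv ℝ j f x = 0) ∧
      ∀ x, fderiv ℝ f x (X x) - c * f x = G x := by
  set H : ℕ → E → ℝ := fun n => a ^ n • (g ∘ F^[n])
  have hH (n : ℕ) : ContDiff ℝ ∞ (H n) := (hg.comp (contDiff_iterate hF n)).const_smul (a ^ n)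
  choose b hb hb0 hHb using fun k => hgW.exists_iterate_bound hg hW hF hFb hq0 hq1 hFW ha k
  have hgeom : Summable fun n : ℕ => (1 / 2 : ℝ) ^ n := summable_geometric_two
  have htaylor := hasFTaylorSeriesUpTo_tsum hH hgeom (fun n => by positivity)
    fun k => ⟨b k, hb k, hHb k⟩
  refine ⟨-fun x => ∑' n, H n x, htaylor.contDiff.neg, fun x hx j => ?_, fun x => ?_⟩
  · rw [iteratedFDeriv_neg_apply, ← htaylor.eq_iteratedFDeriv (mod_cast le_top)]
    have hterm (n : ℕ) : iteratedFDeriv ℝ j (H n) x = 0 :=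
      norm_le_zero_iff.1 ((hHb j n x).trans_eq (by rw [hb0 j x hx, mul_zero]))
    simp [hterm]
  have hH_le (n : ℕ) (y : E) : ‖fderiv ℝ (H n) y‖ ≤ (1 / 2) ^ n * b 1 y := by
    rw [← norm_iteratedFDeriv_one]
    exact hHb 1 n y
  have hsum : Summable fun n => H n x :=
    Summable.of_norm_bounded (hgeom.mul_right (b 0 x)) fun n => by
      simpa only [norm_iteratedFDeriv_zero] using hHb 0 n x
  have hsum' : HasSum (fun n => fderiv ℝ (H n) x (X x)) (fderiv ℝ (∑' n, H n ·) x (X x)) := by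
    rw [(hasFDerivAt_tsum_of_locally_bounded hgeom (fun n => by positivity) (hb 1)
      (fun n y => ((hH n).differentiable (by simp) y).hasFDerivAt) hH_le hsum).fderiv]
    exact (Summable.of_norm_bounded (hgeom.mul_right (b 1 x)) fun n =>
      hH_le n x).hasSum.mapL (ContinuousLinearMap.apply ℝ ℝ (X x))
  have htelescope := (hsum'.sub (hsum.hasSum.mul_left c)).tendsto_sum_nat
  simp only [H, fderiv_pow_smul_comp_iterate_sub (hF.differentiable (by simp)) hFX
    (hg.differentiable (by simp)) hgG, Finset.sum_range_sub fun n => a ^ n * G (F^[n] x)]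
    at htelescope
  have hlim : Tendsto (fun n => a ^ n * G (F^[n] x)) atTop (𝓝 0) := by
    obtain ⟨b', -, -, hb'⟩ := hGW.exists_iterate_bound hG hW hF hFb hq0 hq1 hFW ha 0
    refine squeeze_zero_norm (fun n => ?_) (a := fun n => (1 / 2) ^ n * b' x) ?_
    · simpa only [norm_iteratedFDeriv_zero, Pi.smul_apply, smul_eq_mul,
        Function.comp_apply] using hb' n x
    simpa using hgeom.tendsto_atTop_zero.mul_const (b' x)
  have hlimit := tendsto_nhds_unique htelescope (hlim.sub_const _)
  rw [fderiv_neg, neg_apply, Pi.neg_apply]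
  simp only [pow_zero, Function.iterate_zero, id_eq, one_mul] at hlimit
  linarith

lemma exists_smul_lipschitzWith {X : E → E} (hX : ContDiff ℝ ∞ X) {A : E →L[ℝ] E}
    (hXA : HasCompactSupport fun x => X x - A x) :
    ∃ τ : ℝ, 0 < τ ∧ ‖τ • A‖ ≤ 1 / 4 ∧ LipschitzWith (1 / 2) (τ • X) := by
  obtain ⟨C, hC⟩ := boundedDerivs_of_hasCompactSupport_sub hX A hXA 1 le_rfl
  have hC0 : 0 ≤ C := (norm_nonneg _).trans (hC 0)
  have hpos : 0 < 4 * (1 + C + ‖A‖) := by positivity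
  have hscale (r : ℝ) (hr : r ≤ 1 + C + ‖A‖) : (4 * (1 + C + ‖A‖))⁻¹ * r ≤ 1 / 4 := by
    rw [inv_mul_le_iff₀ hpos]
    linarith
  refine ⟨(4 * (1 + C + ‖A‖))⁻¹, by positivity, ?_, ?_⟩
  · rw [norm_smul, Real.norm_of_nonneg (by positivity)]
    exact hscale _ (by linarith)
  · have hXd : Differentiable ℝ X := hX.differentiable (by simp)
    refine lipschitzWith_of_nnnorm_fderiv_le (hXd.const_smul _) fun x => ?_
    rw [← NNReal.coe_le_coe, coe_nnnorm, fderiv_const_smul (hXd x), norm_smul,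
      Real.norm_of_nonneg (by positivity), ← norm_iteratedFDeriv_one]
    exact (hscale _ ((hC x).trans (by linarith [norm_nonneg A]))).trans (by push_cast; norm_num)

lemma exists_solution_of_lyapunov_of_lipschitzWith [ProperSpace E] {X : C(E, E)}
    (hX : LipschitzWith (1 / 2) X) (hXs : ContDiff ℝ ∞ X) {A : E →L[ℝ] E} (hA : ‖A‖ ≤ 1 / 4)
    (hXA : HasCompactSupport fun x => X x - A x) {W : E → ℝ} (hW : Differentiable ℝ W) {lam : ℝ}
    (hlam : 0 < lam) (hWX : ∀ x, fderiv ℝ W x (X x) ≤ -lam * W x) (c : ℝ) {G : C(E, ℝ)}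
    (hG : ContDiff ℝ ∞ G) (hGW : Dominated W G) :
    ∃ f : E → ℝ, ContDiff ℝ ∞ f ∧ (∀ x, W x ≤ 0 → ∀ j, iteratedFDeriv ℝ j f x = 0) ∧
      ∀ x, fderiv ℝ f x (X x) - c * f x = G x := by
  have hflow := contDiff_integralCurve hX hXs
  have hXb := boundedDerivs_integralCurve hX hXs hA hXA
  have hdecay := max_lyapunov_integralCurve_le hX hW hWX
  have hnonincr (x : E) (t : I) : max (W (integralCurve hX x t)) 0 ≤ max (W x) 0 :=
    (hdecay x t).trans (mul_le_of_le_one_left (le_max_right _ _)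
      (Real.exp_le_one_iff.2 (neg_nonpos.2 (mul_nonneg hlam.le t.2.1))))
  exact exists_solution_of_contracting (F := fun x => integralCurve hX x 1)
    ((ContinuousMap.evalCLM ℝ (1 : I) : C(I, E) →L[ℝ] E).contDiff.comp hflow)
    (hXb.clm_comp hflow (ContinuousMap.evalCLM ℝ (1 : I)))
    (fderiv_integralCurve_one hX hXs) hW.continuous (Real.exp_pos (-lam)).le
    (Real.exp_lt_one_iff.2 (neg_neg_of_pos hlam)) (fun x => by simpa using hdecay x 1)
    (contDiff_flowAverage hX hXs c hG) hG (hGW.flowAverage hX hXs hXb hnonincr hG c) hGW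
    (Real.exp_pos _).le (fderiv_flowAverage_sub hX hXs c hG)

theorem exists_solution_of_lyapunov [ProperSpace E] {X : E → E} (hX : ContDiff ℝ ∞ X)
    {A : E →L[ℝ] E} (hXA : HasCompactSupport fun x => X x - A x) {W : E → ℝ}
    (hW : Differentiable ℝ W) {lam : ℝ} (hlam : 0 < lam)
    (hWX : ∀ x, fderiv ℝ W x (X x) ≤ -lam * W x) (c : ℝ) {G : E → ℝ} (hG : ContDiff ℝ ∞ G)
    (hGW : Dominated W G) :
    ∃ f : E → ℝ, ContDiff ℝ ∞ f ∧ (∀ x, W x ≤ 0 → ∀ j, iteratedFDeriv ℝ j f x = 0) ∧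
      ∀ x, fderiv ℝ f x (X x) - c * f x = G x := by
  obtain ⟨τ, hτ, hτA, hτL⟩ := exists_smul_lipschitzWith hX hXA
  let Y : C(E, E) := ⟨τ • X, hX.continuous.const_smul τ⟩
  have hY : LipschitzWith (1 / 2) Y := hτL
  have hYs : ContDiff ℝ ∞ Y := hX.const_smul τ
  have hYA : HasCompactSupport fun x => Y x - (τ • A) x :=
    hXA.mono' fun x hx => subset_tsupport _ fun h0 => hx (by
      change τ • X x - τ • A x = 0
      rw [← smul_sub, h0, smul_zero])
  have hWY (x : E) : fderiv ℝ W x (Y x) ≤ -(τ * lam) * W x := by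
    have h := mul_le_mul_of_nonneg_left (hWX x) hτ.le
    rw [show Y x = τ • X x from rfl, map_smul, smul_eq_mul]
    linarith
  have hτG : ContDiff ℝ ∞ (⟨τ • G, hG.continuous.const_smul τ⟩ : C(E, ℝ)) := hG.const_smul τ
  obtain ⟨f, hf, hf_flat, hfY⟩ := exists_solution_of_lyapunov_of_lipschitzWith hY hYs hτA hYA hW
    (mul_pos hτ hlam) hWY (τ * c) hτG (hGW.const_smul hG τ)
  refine ⟨f, hf, hf_flat, fun x => mul_left_cancel₀ hτ.ne' ?_⟩
  have hx : fderiv ℝ f x (τ • X x) - τ * c * f x = τ * G x := hfY x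
  rw [map_smul, smul_eq_mul] at hx
  linarith

end Lyapunov

section Hadamard

open unitInterval

variable {Z : Type*} [NormedAddCommGroup Z] [NormedSpace ℝ Z]

variable (Z) in
/-- The projection `(ξ, η, ζ) ↦ (0, 0, ζ)` onto the axis `{ξ = η = 0}`. -/
def axisProj : (ℝ × ℝ × Z) →L[ℝ] (ℝ × ℝ × Z) :=
  (0 : (ℝ × ℝ × Z) →L[ℝ] ℝ).prod ((0 : (ℝ × ℝ × Z) →L[ℝ] ℝ).prod
    (.snd ℝ ℝ Z ∘L .snd ℝ ℝ (ℝ × Z)))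

@[simp] lemma axisProj_apply (x : ℝ × ℝ × Z) : axisProj Z x = (0, 0, x.2.2) := rfl

lemma axisProj_axisProj (x : ℝ × ℝ × Z) : axisProj Z (axisProj Z x) = axisProj Z x := rfl

lemma sub_axisProj (x : ℝ × ℝ × Z) :
    x - axisProj Z x = x.1 • ((1, 0, 0) : ℝ × ℝ × Z) + x.2.1 • ((0, 1, 0) : ℝ × ℝ × Z) := by
  ext <;> simp

lemma norm_sub_axisProj (x : ℝ × ℝ × Z) : ‖x - axisProj Z x‖ = max |x.1| |x.2.1| := by
  simp [Prod.norm_def]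

lemma hasDerivAt_comp_axisSegment {f : ℝ × ℝ × Z → ℝ} (hf : Differentiable ℝ f)
    (x : ℝ × ℝ × Z) (s : ℝ) :
    HasDerivAt (fun s : ℝ => f (axisProj Z x + s • (x - axisProj Z x)))
      (x.1 * fderiv ℝ f (axisProj Z x + s • (x - axisProj Z x)) (1, 0, 0) +
        x.2.1 * fderiv ℝ f (axisProj Z x + s • (x - axisProj Z x)) (0, 1, 0)) s := by
  have hsegment := ((hasDerivAt_id s).smul_const (x - axisProj Z x)).const_add (axisProj Z x)
  refine ((hf _).hasFDerivAt.comp_hasDerivAt s hsegment).congr_deriv ?_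
  rw [one_smul]
  exact (congrArg _ (sub_axisProj x)).trans (by simp only [map_add, map_smul, smul_eq_mul, id_eq])

variable [FiniteDimensional ℝ Z]

variable (Z) in
/-- The segment from `axisProj Z x` to `x`, as a linear function of `x`. -/
noncomputable def axisSegment : (ℝ × ℝ × Z) →L[ℝ] C(I, ℝ × ℝ × Z) :=
  LinearMap.toContinuousLinearMap
    { toFun := fun x => ⟨fun s => axisProj Z x + (s : ℝ) • (x - axisProj Z x), by fun_prop⟩
      map_add' := fun x y => by
        ext s : 1
        simp only [ContinuousMap.coe_mk, ContinuousMap.add_apply, map_add]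
        module
      map_smul' := fun c x => by
        ext s : 1
        simp only [ContinuousMap.coe_mk, ContinuousMap.smul_apply, map_smul, RingHom.id_apply]
        module }

lemma axisSegment_apply (x : ℝ × ℝ × Z) (s : I) :
    axisSegment Z x s = axisProj Z x + (s : ℝ) • (x - axisProj Z x) := rfl

theorem exists_eq_mul_add_mul {f : ℝ × ℝ × Z → ℝ} (hf : ContDiff ℝ ∞ f)
    (h0 : ∀ ζ : Z, f (0, 0, ζ) = 0) :
    ∃ g h : ℝ × ℝ × Z → ℝ, ContDiff ℝ ∞ g ∧ ContDiff ℝ ∞ h ∧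
      ∀ x, f x = g x * x.1 + h x * x.2.1 := by
  have hpartial (e : ℝ × ℝ × Z) : ContDiff ℝ ∞ fun x => fderiv ℝ f x e :=
    (hf.fderiv_right (by simp)).clm_apply contDiff_const
  let partialDeriv (e : ℝ × ℝ × Z) : C(ℝ × ℝ × Z, ℝ) :=
    ⟨fun x => fderiv ℝ f x e, (hpartial e).continuous⟩
  let average (e x : ℝ × ℝ × Z) : ℝ := weightedIntegral 0 ((partialDeriv e).comp (axisSegment Z x))
  have haverage (e) : ContDiff ℝ ∞ (average e) := (weightedIntegral 0).contDiff.comp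
    ((contDiff_comp_curve (hpartial e)).comp (axisSegment Z).contDiff)
  refine ⟨average (1, 0, 0), average (0, 1, 0), haverage _, haverage _, fun x => ?_⟩
  have hftc := weightedIntegral_sub 0
    (γ := (⟨f, hf.continuous⟩ : C(ℝ × ℝ × Z, ℝ)).comp (axisSegment Z x))
    (δ := x.1 • (partialDeriv (1, 0, 0)).comp (axisSegment Z x) +
      x.2.1 • (partialDeriv (0, 1, 0)).comp (axisSegment Z x)) fun s hs => by
    rw [ContinuousMap.coe_IccExtend, ContinuousMap.coe_IccExtend,
      Set.IccExtend_of_mem _ _ (Set.Ioo_subset_Icc_self hs)]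
    refine (hasDerivAt_comp_axisSegment (hf.differentiable (by simp)) x s).congr_of_eventuallyEq ?_
    filter_upwards [isOpen_Ioo.mem_nhds hs] with t ht
    exact Set.IccExtend_of_mem zero_le_one _ (Set.Ioo_subset_Icc_self ht)
  rw [map_add, map_smul, map_smul, zero_mul, sub_zero, neg_zero, Real.exp_zero, one_mul] at hftc
  have hone : axisSegment Z x 1 = x := by simp [axisSegment_apply]
  have hzero : axisSegment Z x 0 = (0, 0, x.2.2) := by simp [axisSegment_apply]
  calc f x = f (axisSegment Z x 1) - f (axisSegment Z x 0) := by rw [hone, hzero, h0, sub_zero]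
    _ = x.1 * average (1, 0, 0) x + x.2.1 * average (0, 1, 0) x := hftc.symm
    _ = _ := by ring

end Hadamard

section Jets

variable {E : Type*} [NormedAddCommGroup E] [NormedSpace ℝ E]

/-- The derivatives of `f` of order less than `n` vanish at `x`. -/
def JetAt (n : ℕ) (f : E → ℝ) (x : E) : Prop := ∀ j < n, iteratedFDeriv ℝ j f x = 0

lemma JetAt.mono {n m : ℕ} {f : E → ℝ} {x : E} (h : JetAt n f x) (hmn : m ≤ n) : JetAt m f x :=
  fun j hj => h j (hj.trans_le hmn)

lemma JetAt.congr {n : ℕ} {f g : E → ℝ} {x : E} (h : JetAt n f x) (hfg : f =ᶠ[𝓝 x] g) :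
    JetAt n g x := fun j hj => by
  rw [← (hfg.iteratedFDeriv ℝ j).self_of_nhds]
  exact h j hj

lemma JetAt.add {n : ℕ} {f g : E → ℝ} {x : E} (hf : ContDiff ℝ ∞ f) (hg : ContDiff ℝ ∞ g)
    (h : JetAt n f x) (h' : JetAt n g x) : JetAt n (f + g) x := fun j hj => by
  rw [congrFun (iteratedFDeriv_add (hf.of_le (mod_cast le_top)) (hg.of_le (mod_cast le_top))) x,
    Pi.add_apply, h j hj, h' j hj, add_zero]

lemma JetAt.mul {a b : ℕ} {f g : E → ℝ} {x : E} (hf : ContDiff ℝ ∞ f) (hg : ContDiff ℝ ∞ g)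
    (h : JetAt a f x) (h' : JetAt b g x) : JetAt (a + b) (f * g) x := by
  intro j hj
  rw [← norm_le_zero_iff]
  refine (norm_iteratedFDeriv_mul_le (N := ∞) hf hg x (mod_cast le_top)).trans ?_
  refine (Finset.sum_eq_zero fun i hi => ?_).le
  rcases lt_or_ge i a with hi' | hi'
  · rw [h i hi', norm_zero, mul_zero, zero_mul]
  · rw [h' (j - i) (by have := Finset.mem_range.1 hi; omega), norm_zero, mul_zero]

lemma jetAt_zero (f : E → ℝ) (x : E) : JetAt 0 f x := fun j hj => by omega

lemma jetAt_one {f : E → ℝ} {x : E} (h : f x = 0) : JetAt 1 f x := by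
  intro j hj
  obtain rfl : j = 0 := by omega
  rw [← norm_eq_zero, norm_iteratedFDeriv_zero, h, norm_zero]

lemma JetAt.fderiv_apply {n : ℕ} {f : E → ℝ} {x : E} (hf : ContDiff ℝ ∞ f) {V : E → E}
    (hV : ContDiff ℝ ∞ V) (h : JetAt (n + 1) f x) : JetAt n (fun y => fderiv ℝ f y (V y)) x := by
  intro j hj
  rw [← norm_le_zero_iff]
  refine (norm_iteratedFDeriv_clm_apply (N := ∞) (hf.fderiv_right (by simp)) hV x
    (mod_cast le_top)).trans ?_
  refine (Finset.sum_eq_zero fun i hi => ?_).le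
  rw [norm_iteratedFDeriv_fderiv, h (i + 1) (by have := Finset.mem_range.1 hi; omega), norm_zero,
    mul_zero, zero_mul]

lemma exists_norm_iteratedFDeriv_le_mul_pow {p : E →L[ℝ] E} (hp : ∀ x, p (p x) = p x)
    {f : E → ℝ} (hf : ContDiff ℝ ∞ f) (hc : HasCompactSupport f) (k : ℕ) :
    ∀ j, (∀ x, JetAt (j + k) f (p x)) →
      ∃ C, 0 ≤ C ∧ ∀ x, ‖iteratedFDeriv ℝ j f x‖ ≤ C * ‖x - p x‖ ^ k := by
  induction k with
  | zero =>
    intro j _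
    obtain ⟨C, hC0, hC⟩ := exists_bound_iteratedFDeriv_le hf hc j
    exact ⟨C, hC0, fun x => by simpa using hC j le_rfl x⟩
  | succ k ih =>
    intro j hj
    obtain ⟨C, hC0, hC⟩ := ih (j + 1) fun x => by simpa [add_assoc, add_comm 1 k] using hj x
    refine ⟨C, hC0, fun x => ?_⟩
    have hdiff : Differentiable ℝ (iteratedFDeriv ℝ j f) :=
      hf.differentiable_iteratedFDeriv (mod_cast ENat.natCast_lt_top j)
    have hsegment : ∀ y ∈ segment ℝ (p x) x,
        ‖fderiv ℝ (iteratedFDeriv ℝ j f) y‖ ≤ C * ‖x - p x‖ ^ k := by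
      intro y hy
      rw [segment_eq_image'] at hy
      obtain ⟨s, hs, rfl⟩ := hy
      have hdist : p x + s • (x - p x) - p (p x + s • (x - p x)) = s • (x - p x) := by
        simp [hp]
      rw [norm_fderiv_iteratedFDeriv]
      refine (hC _).trans ?_
      gcongr
      rw [hdist, norm_smul, Real.norm_of_nonneg hs.1]
      exact mul_le_of_le_one_left (norm_nonneg (x - p x)) hs.2
    have hmean := (convex_segment (p x) x).norm_image_sub_le_of_norm_fderiv_le (𝕜 := ℝ)
      (fun y _ => hdiff y) hsegment (left_mem_segment ℝ _ _) (right_mem_segment ℝ _ _)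
    rwa [hj x j (by omega), sub_zero, mul_assoc, ← pow_succ] at hmean

end Jets

section Borel

variable {E : Type*} [NormedAddCommGroup E] [NormedSpace ℝ E]

/-- With `T = 1 / r`, this is the estimate for a function vanishing to order `n` times a cutoff at
scale `r`: each derivative of the cutoff loses one power of `r`, and at least one is left. -/
lemma norm_iteratedFDeriv_mul_le_div {f χ : E → ℝ} (hf : ContDiff ℝ ∞ f) (hχ : ContDiff ℝ ∞ χ)
    {n : ℕ} {S C T : ℝ} (hS : 0 ≤ S) (hC : 0 ≤ C) (hT : 1 ≤ T) {x : E}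
    (hfx : ∀ i ≤ n, ‖iteratedFDeriv ℝ i f x‖ ≤ S * (1 / T) ^ (n - i))
    (hχx : ∀ i ≤ n, ‖iteratedFDeriv ℝ i χ x‖ ≤ C * T ^ i) {j : ℕ} (hj : j < n) :
    ‖iteratedFDeriv ℝ j (f * χ) x‖ ≤ 2 ^ n * (S * C) / T := by
  have hT0 : 0 < T := one_pos.trans_le hT
  have hpow {i : ℕ} (hi : i ≤ j) : (1 / T) ^ (n - i) * T ^ (j - i) ≤ 1 / T :=
    calc (1 / T) ^ (n - i) * T ^ (j - i)
        = (1 / T * T) ^ (j - i) * (1 / T) ^ (n - j - 1) * (1 / T) := by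
          rw [show n - i = (j - i) + (n - j - 1) + 1 by omega, mul_pow]
          ring
      _ ≤ 1 * (1 / T) := by
          rw [one_div_mul_cancel hT0.ne', one_pow, one_mul]
          gcongr
          exact pow_le_one₀ (by positivity) ((div_le_one hT0).2 hT)
      _ = 1 / T := one_mul _
  have hterm : ∀ i ∈ Finset.range (j + 1),
      (j.choose i : ℝ) * ‖iteratedFDeriv ℝ i f x‖ * ‖iteratedFDeriv ℝ (j - i) χ x‖ ≤
        (j.choose i : ℝ) * (S * C / T) := by
    intro i hi
    have hij : i ≤ j := by have := Finset.mem_range.1 hi; omega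
    rw [mul_assoc]
    gcongr
    calc _ ≤ (S * (1 / T) ^ (n - i)) * (C * T ^ (j - i)) :=
          mul_le_mul (hfx i (by omega)) (hχx (j - i) (by omega)) (norm_nonneg _) (by positivity)
      _ = S * C * ((1 / T) ^ (n - i) * T ^ (j - i)) := by ring
      _ ≤ S * C * (1 / T) := by gcongr; exact hpow hij
      _ = S * C / T := mul_one_div _ _
  have hchoose : ∑ i ∈ Finset.range (j + 1), (j.choose i : ℝ) = 2 ^ j :=
    mod_cast Nat.sum_range_choose j
  calc _ ≤ _ := norm_iteratedFDeriv_mul_le (N := ∞) hf hχ x (mod_cast le_top)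
    _ ≤ _ := Finset.sum_le_sum hterm
    _ = 2 ^ j * (S * C / T) := by rw [← Finset.sum_mul, hchoose]
    _ ≤ 2 ^ n * (S * C / T) := by gcongr; norm_num
    _ = _ := (mul_div_assoc _ _ _).symm

lemma jetAt_tsum {g : ℕ → E → ℝ} (hg : ∀ k, ContDiff ℝ ∞ (g k)) {b : ℕ → ℝ} (hb : Summable b)
    {n : ℕ} (hgb : ∀ k, ∀ j < n, ∀ x, ‖iteratedFDeriv ℝ j (g k) x‖ ≤ b k) {x : E}
    (hJ : ∀ k, JetAt n (g k) x) : JetAt n (fun y => ∑' k, g k y) x := by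
  intro j hj
  rw [congrFun (iteratedFDeriv_tsum (𝕜 := ℝ) (N := (j : ℕ∞)) (v := fun _ => b)
    (fun k => (hg k).of_le (mod_cast le_top)) (fun _ _ => hb)
    (fun i k y hi => hgb k i ((Nat.cast_le.1 hi).trans_lt hj) y) le_rfl) x]
  simp only [hJ _ j hj, tsum_zero]

variable [FiniteDimensional ℝ E]

lemma exists_cutoff {s : Set E} (hs : s ∈ 𝓝 (0 : E)) :
    ∃ ψ : E → ℝ, ContDiff ℝ ∞ ψ ∧ HasCompactSupport ψ ∧ tsupport ψ ⊆ s ∧ (∀ᶠ x in 𝓝 0, ψ x = 1) ∧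
      ∀ x, ψ x ∈ Set.Icc (0 : ℝ) 1 := by
  obtain ⟨r, hr, hrs⟩ := Metric.nhds_basis_closedBall.mem_iff.1 hs
  let b : ContDiffBump (0 : E) := ⟨r / 2, r, by positivity, by linarith⟩
  exact ⟨b, b.contDiff, b.hasCompactSupport, by rw [b.tsupport_eq]; exact hrs,
    b.eventuallyEq_one, fun x => ⟨b.nonneg, b.le_one⟩⟩

lemma exists_scaled_cutoff (q : E →L[ℝ] E) (n : ℕ) :
    ∃ C, 0 ≤ C ∧ ∀ T, 1 ≤ T → ∃ χ : E → ℝ, ContDiff ℝ ∞ χ ∧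
      (∀ x, q x = 0 → ∀ᶠ y in 𝓝 x, χ y = 1) ∧ (∀ x, 1 < T * ‖q x‖ → χ x = 0) ∧
      ∀ i ≤ n, ∀ x, ‖iteratedFDeriv ℝ i χ x‖ ≤ C * T ^ i := by
  obtain ⟨χ, hχ, hχc, hχs, hχ1, -⟩ := exists_cutoff (Metric.closedBall_mem_nhds (0 : E) one_pos)
  obtain ⟨C, hC0, hC⟩ := exists_bound_iteratedFDeriv_le hχ hχc n
  refine ⟨C * (1 + ‖q‖) ^ n, by positivity, fun T hT => ?_⟩
  have hT0 : 0 ≤ T := zero_le_one.trans hT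
  refine ⟨χ ∘ ⇑(T • q), hχ.comp (T • q).contDiff, fun x hx => ?_, fun x hx => ?_, fun i hi x => ?_⟩
  · have h := (T • q).continuous.tendsto x
    rw [smul_apply, hx, smul_zero] at h
    exact h.eventually hχ1
  · by_contra hne
    have h := mem_closedBall_zero_iff.1 (hχs (subset_tsupport χ hne))
    rw [smul_apply, norm_smul, Real.norm_of_nonneg hT0] at h
    exact absurd h hx.not_ge
  · rw [(T • q).iteratedFDeriv_comp_right hχ x (n := ∞) (mod_cast le_top)]
    refine (ContinuousMultilinearMap.norm_compContinuousLinearMap_le _ _).trans ?_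
    rw [Finset.prod_const, Finset.card_univ, Fintype.card_fin, norm_smul, mul_pow,
      Real.norm_of_nonneg hT0, mul_assoc, mul_comm ((1 + ‖q‖) ^ n)]
    gcongr
    · exact hC i hi _
    · calc ‖q‖ ^ i ≤ (1 + ‖q‖) ^ i := by gcongr; linarith
        _ ≤ (1 + ‖q‖) ^ n := pow_le_pow_right₀ (by linarith [norm_nonneg q]) hi

lemma exists_localization {p : E →L[ℝ] E} (hp : ∀ x, p (p x) = p x) {f : E → ℝ}
    (hf : ContDiff ℝ ∞ f) (hc : HasCompactSupport f) {n : ℕ} (hJ : ∀ x, JetAt n f (p x))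
    {ε : ℝ} (hε : 0 < ε) :
    ∃ g : E → ℝ, ContDiff ℝ ∞ g ∧ (∀ x, g =ᶠ[𝓝 (p x)] f) ∧
      ∀ j < n, ∀ x, ‖iteratedFDeriv ℝ j g x‖ ≤ ε := by
  set q : E →L[ℝ] E := ContinuousLinearMap.id ℝ E - p with hq
  obtain ⟨C, hC0, hC⟩ := exists_scaled_cutoff q n
  obtain ⟨S, hS0, hS⟩ : ∃ S, 0 ≤ S ∧
      ∀ i ≤ n, ∀ x, ‖iteratedFDeriv ℝ i f x‖ ≤ S * ‖q x‖ ^ (n - i) := by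
    choose! S hS0 hS using fun i (hi : i ≤ n) => exists_norm_iteratedFDeriv_le_mul_pow hp hf hc
      (n - i) i fun x => by rw [Nat.add_sub_cancel' hi]; exact hJ x
    obtain ⟨M, hM⟩ := ((Finset.range (n + 1)).image S).exists_le
    have hSM : ∀ i ≤ n, S i ≤ M := fun i hi => hM _ (Finset.mem_image_of_mem _
      (Finset.mem_range.2 (by omega)))
    exact ⟨M, (hS0 0 n.zero_le).trans (hSM 0 n.zero_le), fun i hi x => (hS i hi x).trans
      (mul_le_mul_of_nonneg_right (hSM i hi) (by positivity))⟩
  obtain ⟨T, hT1, hT⟩ : ∃ T : ℝ, 1 ≤ T ∧ 2 ^ n * (S * C) / T ≤ ε := by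
    refine ⟨max 1 (2 ^ n * (S * C) / ε), le_max_left _ _, ?_⟩
    rw [div_le_comm₀ (by positivity) hε]
    exact le_max_right _ _
  obtain ⟨χ, hχ, hχ1, hχ0, hχC⟩ := hC T hT1
  refine ⟨f * χ, hf.mul hχ, fun x => ?_, fun j hj x => ?_⟩
  · filter_upwards [hχ1 (p x) (by simp [hq, hp])] with y hy
    rw [Pi.mul_apply, hy, mul_one]
  · rcases le_or_gt (T * ‖q x‖) 1 with hx | hx
    · refine (norm_iteratedFDeriv_mul_le_div hf hχ hS0 hC0 hT1 (fun i hi => ?_)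
        (fun i hi => hχC i hi x) hj).trans hT
      refine (hS i hi x).trans ?_
      gcongr
      rw [le_div_iff₀ (one_pos.trans_le hT1), mul_comm]
      exact hx
    · have hzero : f * χ =ᶠ[𝓝 x] fun _ => 0 := by
        have hcont : Continuous fun y => T * ‖q y‖ := by fun_prop
        filter_upwards [hcont.continuousAt.eventually (lt_mem_nhds hx)] with y hy
        rw [Pi.mul_apply, hχ0 y hy, mul_zero]
      rw [(hzero.iteratedFDeriv ℝ j).self_of_nhds, iteratedFDeriv_fun_zero, Pi.zero_apply,
        norm_zero]
      exact hε.le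

theorem exists_borel_sum {p : E →L[ℝ] E} (hp : ∀ x, p (p x) = p x) (Q : ℕ → E → ℝ)
    (hQ : ∀ k, ContDiff ℝ ∞ (Q k)) (hc : ∀ k, HasCompactSupport (Q k))
    (hJ : ∀ k x, JetAt k (Q k) (p x)) :
    ∃ f : E → ℝ, ContDiff ℝ ∞ f ∧
      ∀ n x, JetAt n (fun y => f y - ∑ k ∈ Finset.range n, Q k y) (p x) := by
  choose g hg hgQ hgb using fun k => exists_localization hp (hQ k) (hc k) (hJ k)
    (ε := (1 / 2) ^ k) (by positivity)
  have hgeom : Summable fun k : ℕ => (1 / 2 : ℝ) ^ k := summable_geometric_two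
  have htail (n : ℕ) : Summable fun k : ℕ => (1 / 2 : ℝ) ^ (k + n) :=
    (summable_nat_add_iff n).2 hgeom
  have hsmooth : ContDiff ℝ ∞ fun x => ∑' k, g k x := by
    refine contDiff_tsum_of_eventually (N := ⊤) (v := fun _ k => (1 / 2 : ℝ) ^ k) hg
      (fun _ _ => hgeom) fun j _ => ?_
    rw [Nat.cofinite_eq_atTop]
    filter_upwards [eventually_gt_atTop j] with k hk x
    exact hgb k j hk x
  have hsum (y) : Summable fun k => g k y := by
    rw [← summable_nat_add_iff 1]
    refine Summable.of_norm_bounded (htail 1) fun k => ?_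
    simpa only [norm_iteratedFDeriv_zero] using hgb (k + 1) 0 k.succ_pos y
  refine ⟨_, hsmooth, fun n x => ?_⟩
  refine (jetAt_tsum (fun k => hg (k + n)) (htail n)
    (fun k j hj => hgb (k + n) j (by omega)) fun k =>
      ((hJ (k + n) x).congr (hgQ (k + n) x).symm).mono (by omega)).congr ?_
  filter_upwards [(Finset.eventually_all (Finset.range n)).2 fun k _ => hgQ k x] with y hy
  rw [← Finset.sum_congr rfl hy, ← (hsum y).sum_add_tsum_nat_add n, add_sub_cancel_left]

end Borel

section Formal

variable {k R : Type*} [CommRing k] [CommRing R] [Algebra k R]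

lemma span_pair_pow_le (x y : R) (n : ℕ) :
    Ideal.span {x, y} ^ n ≤ Ideal.span {m | ∃ p q, p + q = n ∧ m = x ^ p * y ^ q} := by
  induction n with
  | zero =>
    rw [pow_zero, Ideal.one_eq_top, top_le_iff, Ideal.eq_top_iff_one]
    exact Ideal.subset_span ⟨0, 0, rfl, by simp⟩
  | succ n ih =>
    rw [pow_succ]
    refine (Ideal.mul_mono_left ih).trans ?_
    rw [Ideal.span_mul_span', Ideal.span_le]
    rintro _ ⟨_, ⟨p, q, rfl, rfl⟩, z, hz, rfl⟩
    rcases hz with rfl | rfl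
    · exact Ideal.subset_span ⟨p + 1, q, by ring, by simp only; ring⟩
    · exact Ideal.subset_span ⟨p, q + 1, by ring, by simp only; ring⟩

lemma derivation_mul_sub_mem (D : Derivation k R R) {I : Ideal R} {m m' κ κ' : R} {a b : ℕ}
    (hm : m ∈ I ^ a) (hm' : m' ∈ I ^ b) (hD : D m - κ * m ∈ I ^ (a + 1))
    (hD' : D m' - κ' * m' ∈ I ^ (b + 1)) :
    D (m * m') - (κ + κ') * (m * m') ∈ I ^ (a + b + 1) := by
  have hexpand : D (m * m') - (κ + κ') * (m * m') =
      m * (D m' - κ' * m') + m' * (D m - κ * m) := by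
    rw [Derivation.leibniz, smul_eq_mul, smul_eq_mul]; ring
  rw [hexpand]
  refine add_mem ?_ ?_
  · rw [add_assoc, pow_add]; exact Ideal.mul_mem_mul hm hD'
  · rw [show a + b + 1 = b + (a + 1) by ring, pow_add]; exact Ideal.mul_mem_mul hm' hD

lemma derivation_pow_sub_mem (D : Derivation k R R) {I : Ideal R} {x κ : R} (hx : x ∈ I)
    (hD : D x - κ * x ∈ I ^ 2) (n : ℕ) : D (x ^ n) - n * κ * x ^ n ∈ I ^ (n + 1) := by
  induction n with
  | zero => simp
  | succ n ih =>
    convert derivation_mul_sub_mem D (a := n) (b := 1) (Ideal.pow_mem_pow hx n)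
      (by simpa using hx) ih hD using 1
    rw [pow_succ]
    push_cast; ring

lemma exists_sub_mul_pow_mul_pow_mem (D : Derivation k R R) {I : Ideal R} {x y κ₁ κ₂ c : R}
    (hx : x ∈ I) (hy : y ∈ I) (hI : ∀ r, D r ∈ I) (hDx : D x - κ₁ * x ∈ I ^ 2)
    (hDy : D y - κ₂ * y ∈ I ^ 2) {p q : ℕ} (hu : IsUnit (p * κ₁ + q * κ₂ - c)) :
    ∃ P ∈ I ^ (p + q), D P - c * P - x ^ p * y ^ q ∈ I ^ (p + q + 1) := by
  have hmem : x ^ p * y ^ q ∈ I ^ (p + q) := by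
    rw [pow_add]; exact Ideal.mul_mem_mul (Ideal.pow_mem_pow hx p) (Ideal.pow_mem_pow hy q)
  obtain ⟨e, he⟩ := hu.exists_left_inv
  refine ⟨e * (x ^ p * y ^ q), Ideal.mul_mem_left _ _ hmem, ?_⟩
  have hmonomial := derivation_mul_sub_mem D (Ideal.pow_mem_pow hx p) (Ideal.pow_mem_pow hy q)
    (derivation_pow_sub_mem D hx hDx p) (derivation_pow_sub_mem D hy hDy q)
  have hexpand : D (e * (x ^ p * y ^ q)) - c * (e * (x ^ p * y ^ q)) - x ^ p * y ^ q =
      e * (D (x ^ p * y ^ q) - (p * κ₁ + q * κ₂) * (x ^ p * y ^ q)) + x ^ p * y ^ q * D e := by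
    rw [Derivation.leibniz D e, smul_eq_mul, smul_eq_mul]
    linear_combination (x ^ p * y ^ q) * he
  rw [hexpand]
  refine add_mem (Ideal.mul_mem_left _ _ hmonomial) ?_
  rw [pow_succ]
  exact Ideal.mul_mem_mul hmem (hI e)

lemma exists_sub_mem_pow_succ (D : Derivation k R R) {x y κ₁ κ₂ c : R}
    (hI : ∀ r, D r ∈ Ideal.span {x, y}) (hx : D x - κ₁ * x ∈ Ideal.span {x, y} ^ 2)
    (hy : D y - κ₂ * y ∈ Ideal.span {x, y} ^ 2) {n : ℕ}
    (hu : ∀ p q : ℕ, p + q = n → IsUnit (p * κ₁ + q * κ₂ - c)) {r : R}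
    (hr : r ∈ Ideal.span {x, y} ^ n) :
    ∃ P ∈ Ideal.span {x, y} ^ n, D P - c * P - r ∈ Ideal.span {x, y} ^ (n + 1) := by
  have hspan := span_pair_pow_le x y n hr
  clear hr
  induction hspan using Submodule.span_induction with
  | mem r h =>
    obtain ⟨p, q, rfl, rfl⟩ := h
    exact exists_sub_mul_pow_mul_pow_mem D (Ideal.subset_span (by simp))
      (Ideal.subset_span (by simp)) hI hx hy (hu p q rfl)
  | zero => exact ⟨0, zero_mem _, by simp⟩
  | add r s _ _ hr hs =>
    obtain ⟨P, hP, hPr⟩ := hr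
    obtain ⟨Q, hQ, hQs⟩ := hs
    refine ⟨P + Q, add_mem hP hQ, ?_⟩
    convert add_mem hPr hQs using 1
    rw [map_add]; ring
  | smul h r _ hr =>
    obtain ⟨P, hP, hPr⟩ := hr
    refine ⟨h * P, Ideal.mul_mem_left _ _ hP, ?_⟩
    have hmem : P * D h ∈ Ideal.span {x, y} ^ (n + 1) := by
      rw [pow_succ]; exact Ideal.mul_mem_mul hP (hI h)
    convert add_mem (Ideal.mul_mem_left _ h hPr) hmem using 1
    simp only [Derivation.leibniz, smul_eq_mul]; ring

theorem exists_formal_solution (D : Derivation k R R) {x y κ₁ κ₂ c : R}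
    (hI : ∀ r, D r ∈ Ideal.span {x, y}) (hx : D x - κ₁ * x ∈ Ideal.span {x, y} ^ 2)
    (hy : D y - κ₂ * y ∈ Ideal.span {x, y} ^ 2) {n₀ : ℕ}
    (hu : ∀ p q : ℕ, n₀ ≤ p + q → IsUnit (p * κ₁ + q * κ₂ - c)) {g : R}
    (hg : g ∈ Ideal.span {x, y} ^ n₀) :
    ∃ s : ℕ → R, s 0 = 0 ∧ ∀ n, s (n + 1) - s n ∈ Ideal.span {x, y} ^ (n₀ + n) ∧
      D (s n) - c * s n - g ∈ Ideal.span {x, y} ^ (n₀ + n) := by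
  choose! P hP hPr using fun n r => exists_sub_mem_pow_succ D hI hx hy (n := n₀ + n) (r := r)
    (fun p q h => hu p q (by omega))
  let s : ℕ → R := fun n => n.rec 0 fun n s => s - P n (D s - c * s - g)
  have hs (n : ℕ) : s (n + 1) = s n - P n (D (s n) - c * s n - g) := rfl
  have hres (n : ℕ) : D (s n) - c * s n - g ∈ Ideal.span {x, y} ^ (n₀ + n) := by
    induction n with
    | zero => simpa [s] using hg
    | succ n ih =>
      rw [hs, map_sub, ← add_assoc]
      convert neg_mem (hPr n _ ih) using 1
      ring
  refine ⟨s, rfl, fun n => ⟨?_, hres n⟩⟩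
  rw [hs, sub_sub_cancel_left]
  exact neg_mem (hP n _ (hres n))

end Formal

section SmoothRing

variable {E : Type*} [NormedAddCommGroup E] [NormedSpace ℝ E]

variable (E) in
/-- The ring of smooth real functions on `E`. -/
def smoothRing : Subalgebra ℝ (E → ℝ) where
  carrier := {f | ContDiff ℝ ∞ f}
  mul_mem' {f g} (hf : ContDiff ℝ ∞ f) (hg : ContDiff ℝ ∞ g) := hf.mul hg
  add_mem' {f g} (hf : ContDiff ℝ ∞ f) (hg : ContDiff ℝ ∞ g) := hf.add hg
  algebraMap_mem' r := (contDiff_const : ContDiff ℝ ∞ fun _ : E => r)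

lemma smoothRing_contDiff (f : smoothRing E) : ContDiff ℝ ∞ (f : E → ℝ) := f.2

lemma smoothRing_differentiable (f : smoothRing E) : Differentiable ℝ (f : E → ℝ) :=
  (smoothRing_contDiff f).differentiable (by simp)

/-- The Lie derivative along a smooth vector field, as a derivation of the smooth functions. -/
noncomputable def lieDerivation (V : E → E) (hV : ContDiff ℝ ∞ V) :
    Derivation ℝ (smoothRing E) (smoothRing E) :=
  Derivation.mk'
    { toFun := fun f => ⟨fun x => fderiv ℝ (f : E → ℝ) x (V x),
        ((smoothRing_contDiff f).fderiv_right (m := ∞) (by simp)).clm_apply hV⟩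
      map_add' := fun f g => by
        ext x
        simp [fderiv_add (smoothRing_differentiable f x) (smoothRing_differentiable g x)]
      map_smul' := fun r f => by
        ext x
        simp [fderiv_const_smul (smoothRing_differentiable f x) r] }
    fun f g => by
      ext x
      simp [fderiv_mul (smoothRing_differentiable f x) (smoothRing_differentiable g x)]

lemma lieDerivation_apply (V : E → E) (hV : ContDiff ℝ ∞ V) (f : smoothRing E) (x : E) :
    (lieDerivation V hV f : E → ℝ) x = fderiv ℝ (f : E → ℝ) x (V x) := rfl

lemma isUnit_smoothRing {f : smoothRing E} (hf : ∀ x, (f : E → ℝ) x ≠ 0) : IsUnit f :=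
  .of_mul_eq_one (⟨fun x => ((f : E → ℝ) x)⁻¹, (smoothRing_contDiff f).inv hf⟩ : smoothRing E)
    (by ext x; exact mul_inv_cancel₀ (hf x))

lemma jetAt_of_mem_pow {I : Ideal (smoothRing E)} {x : E}
    (hI : ∀ f ∈ I, (f : E → ℝ) x = 0) {n : ℕ} {f : smoothRing E} (hf : f ∈ I ^ n) :
    JetAt n (f : E → ℝ) x := by
  induction n generalizing f with
  | zero => exact jetAt_zero _ _
  | succ n ih =>
    rw [pow_succ] at hf
    refine Submodule.mul_induction_on (C := fun f : smoothRing E => JetAt (n + 1) (f : E → ℝ) x) hf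
      (fun a ha b hb => ?_) fun a b ha hb => ?_
    · exact .mul (smoothRing_contDiff a) (smoothRing_contDiff b) (ih ha) (jetAt_one (hI b hb))
    · exact .add (smoothRing_contDiff a) (smoothRing_contDiff b) ha hb

end SmoothRing

section FormalSolution

variable {Z : Type*} [NormedAddCommGroup Z] [NormedSpace ℝ Z]

/-- The vector field `ξ F₁ + η F₂`, vanishing along the axis `{ξ = η = 0}`. -/
def axisField (F₁ F₂ : ℝ × ℝ × Z → ℝ × ℝ × Z) (x : ℝ × ℝ × Z) : ℝ × ℝ × Z :=
  x.1 • F₁ x + x.2.1 • F₂ x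

/-- Smoothness of the coefficients of `axisField F₁ F₂`, and diagonality of its transversal linear
part along the axis. The eigenvalues at `(0, 0, ζ)` are then `(F₁ (0, 0, ζ)).1` and
`(F₂ (0, 0, ζ)).2.1`. -/
structure AxisDiagonal (F₁ F₂ : ℝ × ℝ × Z → ℝ × ℝ × Z) : Prop where
  contDiff₁ : ContDiff ℝ ∞ F₁
  contDiff₂ : ContDiff ℝ ∞ F₂
  snd_eq_zero : ∀ ζ, (F₁ (0, 0, ζ)).2.1 = 0
  fst_eq_zero : ∀ ζ, (F₂ (0, 0, ζ)).1 = 0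

lemma contDiff_axisField {F₁ F₂ : ℝ × ℝ × Z → ℝ × ℝ × Z} (hF₁ : ContDiff ℝ ∞ F₁)
    (hF₂ : ContDiff ℝ ∞ F₂) : ContDiff ℝ ∞ (axisField F₁ F₂) := by
  unfold axisField; fun_prop

lemma AxisDiagonal.contDiff {F₁ F₂ : ℝ × ℝ × Z → ℝ × ℝ × Z} (hF : AxisDiagonal F₁ F₂) :
    ContDiff ℝ ∞ (axisField F₁ F₂) :=
  contDiff_axisField hF.contDiff₁ hF.contDiff₂

variable (Z) in
/-- The coordinate `ξ`, as a smooth function. -/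
def axisCoord₁ : smoothRing (ℝ × ℝ × Z) := ⟨fun x => x.1, (contDiff_fst : ContDiff ℝ ∞ _)⟩

variable (Z) in
/-- The coordinate `η`, as a smooth function. -/
def axisCoord₂ : smoothRing (ℝ × ℝ × Z) :=
  ⟨fun x => x.2.1, (contDiff_fst.comp contDiff_snd : ContDiff ℝ ∞ _)⟩

variable (Z) in
/-- The ideal of the axis `{ξ = η = 0}` in the ring of smooth functions. -/
noncomputable def axisIdeal : Ideal (smoothRing (ℝ × ℝ × Z)) :=
  Ideal.span {axisCoord₁ Z, axisCoord₂ Z}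

lemma axisCoord₁_mem : axisCoord₁ Z ∈ axisIdeal Z := Ideal.subset_span (by simp)

lemma axisCoord₂_mem : axisCoord₂ Z ∈ axisIdeal Z := Ideal.subset_span (by simp)

lemma mk_mul_coord_add_mem {I : Ideal (smoothRing (ℝ × ℝ × Z))} {f g h : smoothRing (ℝ × ℝ × Z)}
    (hg : g ∈ I) (hh : h ∈ I)
    (hf : ∀ x, (f : ℝ × ℝ × Z → ℝ) x = (g : ℝ × ℝ × Z → ℝ) x * x.1 +
      (h : ℝ × ℝ × Z → ℝ) x * x.2.1) : f ∈ I * axisIdeal Z := by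
  obtain rfl : f = g * axisCoord₁ Z + h * axisCoord₂ Z := by ext x; exact hf x
  exact add_mem (Ideal.mul_mem_mul hg axisCoord₁_mem) (Ideal.mul_mem_mul hh axisCoord₂_mem)

lemma apply_axisProj_eq_zero {f : smoothRing (ℝ × ℝ × Z)} (hf : f ∈ axisIdeal Z)
    (x : ℝ × ℝ × Z) : (f : ℝ × ℝ × Z → ℝ) (axisProj Z x) = 0 := by
  obtain ⟨a, b, rfl⟩ := Ideal.mem_span_pair.1 hf
  simp [axisCoord₁, axisCoord₂]

variable [FiniteDimensional ℝ Z]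

lemma mem_axisIdeal {f : smoothRing (ℝ × ℝ × Z)}
    (hf : ∀ ζ, (f : ℝ × ℝ × Z → ℝ) (0, 0, ζ) = 0) : f ∈ axisIdeal Z := by
  obtain ⟨g, h, hg, hh, hgh⟩ := exists_eq_mul_add_mul (smoothRing_contDiff f) hf
  rw [← one_mul (axisIdeal Z), Ideal.one_eq_top]
  exact mk_mul_coord_add_mem (g := ⟨g, hg⟩) (h := ⟨h, hh⟩) trivial trivial hgh

lemma mem_axisIdeal_sq {f g h : smoothRing (ℝ × ℝ × Z)}
    (hg : ∀ ζ, (g : ℝ × ℝ × Z → ℝ) (0, 0, ζ) = 0) (hh : ∀ ζ, (h : ℝ × ℝ × Z → ℝ) (0, 0, ζ) = 0)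
    (hf : ∀ x, (f : ℝ × ℝ × Z → ℝ) x = (g : ℝ × ℝ × Z → ℝ) x * x.1 +
      (h : ℝ × ℝ × Z → ℝ) x * x.2.1) : f ∈ axisIdeal Z ^ 2 := by
  rw [pow_two]
  exact mk_mul_coord_add_mem (mem_axisIdeal hg) (mem_axisIdeal hh) hf

lemma lieDerivation_mem_axisIdeal {F₁ F₂ : ℝ × ℝ × Z → ℝ × ℝ × Z}
    (hV : ContDiff ℝ ∞ (axisField F₁ F₂)) (f : smoothRing (ℝ × ℝ × Z)) :
    lieDerivation _ hV f ∈ axisIdeal Z :=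
  mem_axisIdeal fun ζ => by simp [lieDerivation_apply, axisField]

lemma AxisDiagonal.lieDerivation_axisCoord₁_sub_mem {F₁ F₂ : ℝ × ℝ × Z → ℝ × ℝ × Z}
    (hF : AxisDiagonal F₁ F₂) {κ : smoothRing (ℝ × ℝ × Z)}
    (hκ : ∀ x, (κ : ℝ × ℝ × Z → ℝ) x = (F₁ (0, 0, x.2.2)).1) :
    lieDerivation _ hF.contDiff (axisCoord₁ Z) - κ * axisCoord₁ Z ∈ axisIdeal Z ^ 2 := by
  have hF₁ := hF.contDiff₁
  have hF₂ := hF.contDiff₂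
  let a : smoothRing (ℝ × ℝ × Z) := ⟨fun x => (F₁ x).1, (by fun_prop : ContDiff ℝ ∞ _)⟩
  let b : smoothRing (ℝ × ℝ × Z) := ⟨fun x => (F₂ x).1, (by fun_prop : ContDiff ℝ ∞ _)⟩
  refine mem_axisIdeal_sq (g := a - κ) (h := b) (fun ζ => ?_) hF.fst_eq_zero fun x => ?_
  · simp [a, hκ]
  · have hD : (lieDerivation _ hF.contDiff (axisCoord₁ Z) : ℝ × ℝ × Z → ℝ) x =
        (axisField F₁ F₂ x).1 :=
      congr($((ContinuousLinearMap.fst ℝ ℝ (ℝ × Z)).fderiv) (axisField F₁ F₂ x))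
    simp only [AddSubgroupClass.coe_sub, MulMemClass.coe_mul, Pi.sub_apply, Pi.mul_apply, hD]
    simp only [axisField, axisCoord₁, a, b, Prod.fst_add, Prod.smul_fst, smul_eq_mul]
    ring

lemma AxisDiagonal.lieDerivation_axisCoord₂_sub_mem {F₁ F₂ : ℝ × ℝ × Z → ℝ × ℝ × Z}
    (hF : AxisDiagonal F₁ F₂) {κ : smoothRing (ℝ × ℝ × Z)}
    (hκ : ∀ x, (κ : ℝ × ℝ × Z → ℝ) x = (F₂ (0, 0, x.2.2)).2.1) :
    lieDerivation _ hF.contDiff (axisCoord₂ Z) - κ * axisCoord₂ Z ∈ axisIdeal Z ^ 2 := by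
  have hF₁ := hF.contDiff₁
  have hF₂ := hF.contDiff₂
  let a : smoothRing (ℝ × ℝ × Z) := ⟨fun x => (F₁ x).2.1, (by fun_prop : ContDiff ℝ ∞ _)⟩
  let b : smoothRing (ℝ × ℝ × Z) := ⟨fun x => (F₂ x).2.1, (by fun_prop : ContDiff ℝ ∞ _)⟩
  refine mem_axisIdeal_sq (g := a) (h := b - κ) hF.snd_eq_zero (fun ζ => ?_) fun x => ?_
  · simp [b, hκ]
  · have hD : (lieDerivation _ hF.contDiff (axisCoord₂ Z) : ℝ × ℝ × Z → ℝ) x =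
        (axisField F₁ F₂ x).2.1 :=
      congr($((ContinuousLinearMap.fst ℝ ℝ Z ∘L .snd ℝ ℝ (ℝ × Z)).fderiv) (axisField F₁ F₂ x))
    simp only [AddSubgroupClass.coe_sub, MulMemClass.coe_mul, Pi.sub_apply, Pi.mul_apply, hD]
    simp only [axisField, axisCoord₂, a, b, Prod.fst_add, Prod.snd_add, Prod.smul_fst,
      Prod.smul_snd, smul_eq_mul]
    ring

lemma exists_formal_sum {s : ℕ → smoothRing (ℝ × ℝ × Z)} (h0 : s 0 = 0) {n₀ : ℕ}
    (hs : ∀ n, s (n + 1) - s n ∈ axisIdeal Z ^ (n₀ + n)) :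
    ∃ f : ℝ × ℝ × Z → ℝ, ContDiff ℝ ∞ f ∧ (∀ x, JetAt n₀ f (axisProj Z x)) ∧
      ∀ᶠ x in 𝓝 0, ∀ n, JetAt n (fun y => f y - (s n : ℝ × ℝ × Z → ℝ) y) (axisProj Z x) := by
  obtain ⟨ψ, hψ, hψc, -, hψ1, -⟩ := exists_cutoff (univ_mem : Set.univ ∈ 𝓝 (0 : ℝ × ℝ × Z))
  let Q (k : ℕ) : ℝ × ℝ × Z → ℝ := ψ * ((s (k + 1) - s k : smoothRing (ℝ × ℝ × Z)) : _ → ℝ)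
  have hQ (k : ℕ) : ContDiff ℝ ∞ (Q k) := hψ.mul (smoothRing_contDiff _)
  have hQJ (k : ℕ) (x : ℝ × ℝ × Z) : JetAt (n₀ + k) (Q k) (axisProj Z x) := by
    rw [← zero_add (n₀ + k)]
    exact .mul hψ (smoothRing_contDiff _) (jetAt_zero _ _)
      (jetAt_of_mem_pow (fun f hf => apply_axisProj_eq_zero hf x) (hs k))
  have hsum (n : ℕ) (y : ℝ × ℝ × Z) :
      ∑ k ∈ Finset.range n, Q k y = ψ y * (s n : ℝ × ℝ × Z → ℝ) y := by
    simp only [Q, Pi.mul_apply, ← Finset.mul_sum, AddSubgroupClass.coe_sub, Pi.sub_apply,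
      Finset.sum_range_sub fun k => (s k : ℝ × ℝ × Z → ℝ) y, h0, ZeroMemClass.coe_zero,
      Pi.zero_apply, sub_zero]
  obtain ⟨f, hf, hfJ⟩ := exists_borel_sum axisProj_axisProj Q hQ (fun k => hψc.mul_right)
    fun k x => (hQJ k x).mono (by omega)
  refine ⟨f, hf, fun x => ?_, ?_⟩
  · have hmem : s n₀ ∈ axisIdeal Z ^ n₀ := by
      rw [← sub_zero (s n₀), ← h0, ← Finset.sum_range_sub]
      exact sum_mem fun k _ => Ideal.pow_le_pow_right (by omega) (hs k)
    have hpartial : JetAt (0 + n₀) (ψ * (s n₀ : ℝ × ℝ × Z → ℝ)) (axisProj Z x) :=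
      .mul hψ (smoothRing_contDiff _) (jetAt_zero _ _)
        (jetAt_of_mem_pow (fun f hf => apply_axisProj_eq_zero hf x) hmem)
    rw [zero_add] at hpartial
    refine (JetAt.add (hf.sub (.sum fun k _ => hQ k)) (hψ.mul (smoothRing_contDiff _)) (hfJ n₀ x)
      hpartial).congr (.of_forall fun y => ?_)
    change f y - ∑ k ∈ Finset.range n₀, Q k y + ψ y * (s n₀ : ℝ × ℝ × Z → ℝ) y = f y
    rw [hsum, sub_add_cancel]
  · have haxis : Tendsto (axisProj Z) (𝓝 0) (𝓝 0) :=
      (axisProj Z).continuous.tendsto' _ _ (map_zero _)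
    filter_upwards [haxis.eventually (eventually_eventually_nhds.2 hψ1)] with x hx n
    refine (hfJ n x).congr ?_
    filter_upwards [hx] with y hy
    rw [hsum, hy, one_mul]

lemma jetAt_fderiv_sub_of_jetAt_sub {E : Type*} [NormedAddCommGroup E] [NormedSpace ℝ E]
    {V : E → E} (hV : ContDiff ℝ ∞ V) {c : ℝ} {f S G : E → ℝ} (hf : ContDiff ℝ ∞ f)
    (hS : ContDiff ℝ ∞ S) (hG : ContDiff ℝ ∞ G) {n : ℕ} {x : E}
    (hfS : JetAt (n + 1) (fun y => f y - S y) x)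
    (hSG : JetAt n (fun y => fderiv ℝ S y (V y) - c * S y - G y) x) :
    JetAt n (fun y => fderiv ℝ f y (V y) - c * f y - G y) x := by
  have hD {g : E → ℝ} (hg : ContDiff ℝ ∞ g) : ContDiff ℝ ∞ fun y => fderiv ℝ g y (V y) :=
    (hg.fderiv_right (m := ∞) (by simp)).clm_apply hV
  have hd := hf.sub hS
  have hcd : JetAt (0 + n) ((fun _ => -c) * fun y => f y - S y) x :=
    .mul contDiff_const hd (jetAt_zero _ _) (hfS.mono n.le_succ)
  rw [zero_add] at hcd
  have hdiff := hfS.fderiv_apply hd hV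
  refine JetAt.congr (.add ((hD hd).add (contDiff_const.mul hd))
    (((hD hS).sub (by fun_prop)).sub hG) (.add (hD hd) (contDiff_const.mul hd) hdiff hcd) hSG)
    (.of_forall fun y => ?_)
  simp only [Pi.add_apply, fderiv_fun_sub (hf.differentiable (by simp) y)
    (hS.differentiable (by simp) y), sub_apply]
  ring

theorem AxisDiagonal.exists_solution_mod_flat {F₁ F₂ : ℝ × ℝ × Z → ℝ × ℝ × Z}
    (hF : AxisDiagonal F₁ F₂) {c : ℝ} {n₀ : ℕ}
    (hres : ∀ ζ, ∀ p q : ℕ, n₀ ≤ p + q → p * (F₁ (0, 0, ζ)).1 + q * (F₂ (0, 0, ζ)).2.1 ≠ c)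
    {G : smoothRing (ℝ × ℝ × Z)} (hG : G ∈ axisIdeal Z ^ n₀) :
    ∃ f : ℝ × ℝ × Z → ℝ, ContDiff ℝ ∞ f ∧ (∀ x, JetAt n₀ f (axisProj Z x)) ∧
      ∀ᶠ x in 𝓝 0, ∀ n, JetAt n (fun y => fderiv ℝ f y (axisField F₁ F₂ y) - c * f y
        - (G : ℝ × ℝ × Z → ℝ) y) (axisProj Z x) := by
  have hF₁ := hF.contDiff₁
  have hF₂ := hF.contDiff₂
  let κ₁ : smoothRing (ℝ × ℝ × Z) := ⟨fun x => (F₁ (0, 0, x.2.2)).1, by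
    change ContDiff ℝ ∞ _; fun_prop⟩
  let κ₂ : smoothRing (ℝ × ℝ × Z) := ⟨fun x => (F₂ (0, 0, x.2.2)).2.1, by
    change ContDiff ℝ ∞ _; fun_prop⟩
  obtain ⟨s, hs0, hs⟩ := exists_formal_solution (lieDerivation _ hF.contDiff) (κ₁ := κ₁)
    (κ₂ := κ₂) (c := algebraMap ℝ _ c) (lieDerivation_mem_axisIdeal hF.contDiff)
    (hF.lieDerivation_axisCoord₁_sub_mem fun _ => rfl)
    (hF.lieDerivation_axisCoord₂_sub_mem fun _ => rfl)
    (fun p q hpq => isUnit_smoothRing fun x => sub_ne_zero.2 (hres x.2.2 p q hpq)) hG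
  obtain ⟨f, hf, hfJ, hfs⟩ := exists_formal_sum hs0 fun n => (hs n).1
  refine ⟨f, hf, hfJ, hfs.mono fun x hx n => ?_⟩
  refine jetAt_fderiv_sub_of_jetAt_sub hF.contDiff hf (smoothRing_contDiff (s (n + 1)))
    (smoothRing_contDiff G) (hx (n + 1)) ?_
  exact (jetAt_of_mem_pow (fun f hf => apply_axisProj_eq_zero hf x) (hs (n + 1)).2).mono (by omega)

end FormalSolution

section Cones

variable {E : Type*} [NormedAddCommGroup E] [NormedSpace ℝ E]

lemma jetAt_succ_of_fderiv_apply {n : ℕ} {f : E → ℝ} {x : E} (hf : ContDiff ℝ (n + 1 : ℕ) f)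
    (h0 : f x = 0) (h : ∀ v, JetAt n (fun y => fderiv ℝ f y v) x) : JetAt (n + 1) f x := by
  intro j hj
  rcases j with _ | j
  · exact jetAt_one h0 0 one_pos
  · ext m
    have hd : ContDiff ℝ n (fderiv ℝ f) := hf.fderiv_right (by norm_cast)
    rw [iteratedFDeriv_succ_apply_right, ← iteratedFDeriv_clm_apply_const_apply hd
      (by exact_mod_cast (by omega : j ≤ n)), h (m (Fin.last j)) j (by omega)]
    rfl

/-- A compactly supported smooth function that is flat along the range of `π`. -/
structure FlatAlong (π : E →L[ℝ] E) (F : E → ℝ) : Prop where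
  contDiff : ContDiff ℝ ∞ F
  hasCompactSupport : HasCompactSupport F
  jetAt : ∀ n x, JetAt n F (π x)

namespace FlatAlong

variable {π : E →L[ℝ] E} {F : E → ℝ}

lemma mul_left (hF : FlatAlong π F) {g : E → ℝ} (hg : ContDiff ℝ ∞ g) :
    FlatAlong π (fun x => g x * F x) where
  contDiff := hg.mul hF.contDiff
  hasCompactSupport := hF.hasCompactSupport.mul_left
  jetAt n x := by
    have := JetAt.mul hg hF.contDiff (jetAt_zero g (π x)) (hF.jetAt n x)
    rwa [zero_add] at this

lemma fderiv_apply (hF : FlatAlong π F) (v : E) : FlatAlong π (fun x => fderiv ℝ F x v) where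
  contDiff := (hF.contDiff.fderiv_right (m := ∞) (by simp)).clm_apply contDiff_const
  hasCompactSupport := hF.hasCompactSupport.fderiv_apply (𝕜 := ℝ) v
  jetAt n x := (hF.jetAt (n + 1) x).fderiv_apply hF.contDiff contDiff_const

lemma apply_eq_zero (hF : FlatAlong π F) (x : E) : F (π x) = 0 := by
  simpa [iteratedFDeriv_zero_eq_comp] using
    congrArg (fun m => m 0) (hF.jetAt 1 x 0 one_pos)

end FlatAlong

/-- The function `F` cut off to a cone by `σ (p² / (p² + q²))`, divided by a power of `p² + q²`.
These quotients form a family closed under differentiation. -/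
noncomputable def conicTerm (p q : E →L[ℝ] ℝ) (σ : ℝ → ℝ) (N : ℕ) (F : E → ℝ) (x : E) : ℝ :=
  σ (p x ^ 2 / (p x ^ 2 + q x ^ 2)) * F x / (p x ^ 2 + q x ^ 2) ^ N

variable {π : E →L[ℝ] E} {p q : E →L[ℝ] ℝ} {C₀ : ℝ}

lemma exists_abs_conicTerm_le (hπ : ∀ x, π (π x) = π x)
    (hC₀ : ∀ x, ‖x - π x‖ ^ 2 ≤ C₀ * (p x ^ 2 + q x ^ 2))
    {σ : ℝ → ℝ} (hσ : ContDiff ℝ ∞ σ) (N : ℕ) {F : E → ℝ}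
    (hF : FlatAlong π F) : ∃ C, 0 ≤ C ∧ ∀ x, |conicTerm p q σ N F x| ≤ C * ‖x - π x‖ ^ 2 := by
  obtain ⟨B, hB⟩ := (isCompact_Icc (a := (0 : ℝ)) (b := 1)).exists_bound_of_continuousOn
    hσ.continuous.continuousOn
  have hB0 : 0 ≤ B := (norm_nonneg _).trans (hB 0 (by simp))
  obtain ⟨C, hC0, hC⟩ := exists_norm_iteratedFDeriv_le_mul_pow hπ hF.contDiff hF.hasCompactSupport
    (2 * N + 2) 0 (fun x => hF.jetAt _ x)
  refine ⟨B * (C * |C₀| ^ N), by positivity, fun x => ?_⟩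
  have hr0 : 0 ≤ p x ^ 2 + q x ^ 2 := by positivity
  have ht : |σ (p x ^ 2 / (p x ^ 2 + q x ^ 2))| ≤ B := by
    refine hB _ ⟨by positivity, div_le_one_of_le₀ ?_ hr0⟩
    nlinarith [sq_nonneg (q x)]
  have hFx := hC x
  rw [norm_iteratedFDeriv_zero, Real.norm_eq_abs] at hFx
  have h1 : |F x| ≤ C * |C₀| ^ N * ‖x - π x‖ ^ 2 * (p x ^ 2 + q x ^ 2) ^ N := by
    refine hFx.trans ?_
    rw [pow_add, pow_mul]
    have : (‖x - π x‖ ^ 2) ^ N ≤ (|C₀| * (p x ^ 2 + q x ^ 2)) ^ N := by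
      refine pow_le_pow_left₀ (by positivity) ((hC₀ x).trans ?_) N
      exact mul_le_mul_of_nonneg_right (le_abs_self _) hr0
    rw [mul_pow] at this
    calc _ ≤ C * ((|C₀| ^ N * (p x ^ 2 + q x ^ 2) ^ N) * ‖x - π x‖ ^ 2) := by gcongr
      _ = _ := by ring
  rw [conicTerm, abs_div, abs_mul, abs_of_nonneg (pow_nonneg hr0 N)]
  refine div_le_of_le_mul₀ (by positivity) (by positivity) ?_
  calc _ ≤ B * (C * |C₀| ^ N * ‖x - π x‖ ^ 2 * (p x ^ 2 + q x ^ 2) ^ N) := by gcongr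
    _ = _ := by ring

lemma eq_proj_of_sq_add_sq_eq_zero (hC₀ : ∀ x, ‖x - π x‖ ^ 2 ≤ C₀ * (p x ^ 2 + q x ^ 2))
    {x : E} (h : p x ^ 2 + q x ^ 2 = 0) : x = π x := by
  have := hC₀ x
  rw [h, mul_zero] at this
  have h2 : ‖x - π x‖ = 0 := by nlinarith [norm_nonneg (x - π x)]
  exact sub_eq_zero.1 (norm_eq_zero.1 h2)

lemma hasFDerivAt_conicTerm_proj (hπ : ∀ x, π (π x) = π x)
    (hC₀ : ∀ x, ‖x - π x‖ ^ 2 ≤ C₀ * (p x ^ 2 + q x ^ 2))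
    {σ : ℝ → ℝ} (hσ : ContDiff ℝ ∞ σ) (N : ℕ) {F : E → ℝ}
    (hF : FlatAlong π F) (x : E) : HasFDerivAt (conicTerm p q σ N F) (0 : E →L[ℝ] ℝ) (π x) := by
  obtain ⟨C, hC0, hC⟩ := exists_abs_conicTerm_le hπ hC₀ hσ N hF
  refine HasFDerivAt.of_isLittleO ?_
  have h0 : conicTerm p q σ N F (π x) = 0 := by simp [conicTerm, hF.apply_eq_zero]
  have hz : ∀ y, conicTerm p q σ N F y - conicTerm p q σ N F (π x)
      - (0 : E →L[ℝ] ℝ) (y - π x) = conicTerm p q σ N F y := fun y => by simp [h0]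
  simp only [hz]
  have hO : (fun y => conicTerm p q σ N F y) =O[𝓝 (π x)] fun y => ‖y - π x‖ ^ 2 := by
    refine Asymptotics.IsBigO.of_bound (C * (1 + ‖π‖) ^ 2) (Eventually.of_forall fun y => ?_)
    have h1 : ‖y - π y‖ ≤ (1 + ‖π‖) * ‖y - π x‖ := by
      have : y - π y = (y - π x) - π (y - π x) := by rw [map_sub, hπ]; abel
      rw [this, add_mul, one_mul]
      exact (norm_sub_le _ _).trans (add_le_add le_rfl (π.le_opNorm _))
    calc ‖conicTerm p q σ N F y‖ ≤ C * ‖y - π y‖ ^ 2 := hC y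
      _ ≤ C * ((1 + ‖π‖) * ‖y - π x‖) ^ 2 := by gcongr
      _ = C * (1 + ‖π‖) ^ 2 * ‖‖y - π x‖ ^ 2‖ := by
        rw [Real.norm_of_nonneg (by positivity)]; ring
  refine hO.trans_isLittleO ?_
  have := Asymptotics.isLittleO_pow_sub_sub (E' := E) (π x) (one_lt_two)
  simpa using this

lemma hasLineDerivAt_conicTerm {σ : ℝ → ℝ} (hσ : ContDiff ℝ ∞ σ) (N : ℕ) {F : E → ℝ}
    (hF : ContDiff ℝ ∞ F) {x : E} (hx : p x ^ 2 + q x ^ 2 ≠ 0) (v : E) :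
    HasLineDerivAt ℝ (conicTerm p q σ N F)
      (conicTerm p q (deriv σ) (N + 2) (fun y => 2 * p y * q y * (q y * p v - p y * q v) * F y) x +
        conicTerm p q σ N (fun y => fderiv ℝ F y v) x +
        conicTerm p q σ (N + 1) (fun y => -2 * N * (p y * p v + q y * q v) * F y) x) x v := by
  have hlin : ∀ f : E →L[ℝ] ℝ, HasDerivAt (fun s : ℝ => f (x + s • v)) (f v) 0 := fun f =>
    f.hasFDerivAt.hasLineDerivAt v
  have hP := (hlin p).pow 2
  have hr := hP.add ((hlin q).pow 2)
  have hFl : HasDerivAt (fun s : ℝ => F (x + s • v)) (fderiv ℝ F x v) 0 :=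
    (hF.differentiable (by simp) x).hasFDerivAt.hasLineDerivAt v
  have hx' : p (x + (0 : ℝ) • v) ^ 2 + q (x + (0 : ℝ) • v) ^ 2 ≠ 0 := by simpa using hx
  have hσl := (hσ.differentiable (by simp) _).hasDerivAt.comp 0 (hP.div hr hx')
  have h := (hσl.mul hFl).div (hr.pow N) (pow_ne_zero N hx')
  refine HasDerivAt.congr_deriv (f := fun s : ℝ => conicTerm p q σ N F (x + s • v)) h ?_
  simp only [conicTerm, Pi.div_apply, Pi.pow_apply, Pi.add_apply, Pi.mul_apply, Function.comp,
    zero_smul, add_zero]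
  rcases N with _ | N
  · field_simp
    simp
    ring
  · simp only [Nat.add_sub_cancel]
    field_simp
    push_cast
    ring

lemma differentiable_conicTerm (hπ : ∀ x, π (π x) = π x)
    (hC₀ : ∀ x, ‖x - π x‖ ^ 2 ≤ C₀ * (p x ^ 2 + q x ^ 2))
    {σ : ℝ → ℝ} (hσ : ContDiff ℝ ∞ σ) (N : ℕ) {F : E → ℝ}
    (hF : FlatAlong π F) : Differentiable ℝ (conicTerm p q σ N F) := by
  intro x
  by_cases hx : p x ^ 2 + q x ^ 2 = 0
  · rw [eq_proj_of_sq_add_sq_eq_zero hC₀ hx]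
    exact (hasFDerivAt_conicTerm_proj hπ hC₀ hσ N hF x).differentiableAt
  · have h1 := hσ.differentiable (by simp)
    have h2 := hF.contDiff.differentiable (by simp)
    unfold conicTerm
    have hN := pow_ne_zero N hx
    fun_prop (disch := assumption)

lemma fderiv_conicTerm_apply (hπ : ∀ x, π (π x) = π x)
    (hC₀ : ∀ x, ‖x - π x‖ ^ 2 ≤ C₀ * (p x ^ 2 + q x ^ 2))
    {σ : ℝ → ℝ} (hσ : ContDiff ℝ ∞ σ) (N : ℕ) {F : E → ℝ}
    (hF : FlatAlong π F) (v x : E) : fderiv ℝ (conicTerm p q σ N F) x v =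
      conicTerm p q (deriv σ) (N + 2) (fun y => 2 * p y * q y * (q y * p v - p y * q v) * F y) x +
        conicTerm p q σ N (fun y => fderiv ℝ F y v) x +
        conicTerm p q σ (N + 1) (fun y => -2 * N * (p y * p v + q y * q v) * F y) x := by
  by_cases hx : p x ^ 2 + q x ^ 2 = 0
  · have h0 := hF.apply_eq_zero x
    have h1 := (hF.fderiv_apply v).apply_eq_zero x
    rw [eq_proj_of_sq_add_sq_eq_zero hC₀ hx, (hasFDerivAt_conicTerm_proj hπ hC₀ hσ N hF x).fderiv]
    simp only [conicTerm, h0, h1]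
    simp
  · exact (differentiable_conicTerm hπ hC₀ hσ N hF x).hasFDerivAt.hasLineDerivAt v |>.unique
      (hasLineDerivAt_conicTerm hσ N hF.contDiff hx v)

lemma dominated_of_flatAlong (hπ : ∀ x, π (π x) = π x) {F W : E → ℝ} (hF : FlatAlong π F) {C₁ : ℝ}
    (hC₁ : 0 ≤ C₁) (h : ∀ x, ‖x - π x‖ ^ 2 ≤ C₁ * W x ∨ F =ᶠ[𝓝 x] 0) : Dominated W F := by
  intro j M
  choose C hC0 hC using fun i => exists_norm_iteratedFDeriv_le_mul_pow hπ hF.contDiff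
    hF.hasCompactSupport (2 * M) i fun x => hF.jetAt _ x
  refine ⟨(∑ i ∈ Finset.range (j + 1), C i) * C₁ ^ M,
    mul_nonneg (Finset.sum_nonneg fun i _ => hC0 i) (by positivity), fun i hi x => ?_⟩
  have hCi : C i ≤ ∑ i ∈ Finset.range (j + 1), C i :=
    Finset.single_le_sum (fun i _ => hC0 i) (Finset.mem_range.2 (by omega))
  rcases h x with hWx | hFx
  · have hpow : (‖x - π x‖ ^ 2) ^ M ≤ (C₁ * max (W x) 0) ^ M := by
      gcongr
      exact hWx.trans (mul_le_mul_of_nonneg_left (le_max_left _ _) hC₁)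
    calc ‖iteratedFDeriv ℝ i F x‖ ≤ C i * (‖x - π x‖ ^ 2) ^ M := by rw [← pow_mul]; exact hC i x
      _ ≤ (∑ i ∈ Finset.range (j + 1), C i) * (C₁ * max (W x) 0) ^ M := by
        gcongr
        exact (hC0 i).trans hCi
      _ = _ := by rw [mul_pow, mul_assoc]
  · have hzero : iteratedFDeriv ℝ i F x = 0 := by
      rw [(hFx.iteratedFDeriv ℝ i).self_of_nhds, show (0 : E → ℝ) = fun _ => 0 from rfl,
        iteratedFDeriv_fun_zero, Pi.zero_apply]
    rw [hzero, norm_zero]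
    have := (hC0 i).trans hCi
    positivity

variable [FiniteDimensional ℝ E]

lemma contDiff_nat_conicTerm (hπ : ∀ x, π (π x) = π x)
    (hC₀ : ∀ x, ‖x - π x‖ ^ 2 ≤ C₀ * (p x ^ 2 + q x ^ 2))
    (n : ℕ) : ∀ {σ : ℝ → ℝ} (_ : ContDiff ℝ ∞ σ) (N : ℕ) {F : E → ℝ}
    (_ : FlatAlong π F), ContDiff ℝ n (conicTerm p q σ N F) := by
  induction n with
  | zero =>
    intro σ hσ N F hF
    exact contDiff_zero.2 (differentiable_conicTerm hπ hC₀ hσ N hF).continuous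
  | succ n ih =>
    intro σ hσ N F hF
    have hσ' : ContDiff ℝ ∞ (deriv σ) := hσ.deriv'
    push_cast
    refine contDiff_succ_iff_fderiv_apply.2 ⟨differentiable_conicTerm hπ hC₀ hσ N hF,
      fun h => absurd h (by simp), fun v => ?_⟩
    simp only [fderiv_conicTerm_apply hπ hC₀ hσ N hF v]
    exact ((ih hσ' _ (hF.mul_left (by fun_prop))).add (ih hσ _ (hF.fderiv_apply v))).add
      (ih hσ _ (hF.mul_left (by fun_prop)))

lemma contDiff_conicTerm (hπ : ∀ x, π (π x) = π x)
    (hC₀ : ∀ x, ‖x - π x‖ ^ 2 ≤ C₀ * (p x ^ 2 + q x ^ 2))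
    {σ : ℝ → ℝ} (hσ : ContDiff ℝ ∞ σ) (N : ℕ) {F : E → ℝ}
    (hF : FlatAlong π F) : ContDiff ℝ ∞ (conicTerm p q σ N F) :=
  contDiff_infty.2 fun n => contDiff_nat_conicTerm hπ hC₀ n hσ N hF

lemma jetAt_conicTerm (hπ : ∀ x, π (π x) = π x)
    (hC₀ : ∀ x, ‖x - π x‖ ^ 2 ≤ C₀ * (p x ^ 2 + q x ^ 2))
    (n : ℕ) : ∀ {σ : ℝ → ℝ} (_ : ContDiff ℝ ∞ σ) (N : ℕ) {F : E → ℝ}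
    (_ : FlatAlong π F) (x : E), JetAt n (conicTerm p q σ N F) (π x) := by
  induction n with
  | zero => exact fun _ _ _ _ _ => jetAt_zero _ _
  | succ n ih =>
    intro σ hσ N F hF x
    have hσ' : ContDiff ℝ ∞ (deriv σ) := hσ.deriv'
    refine jetAt_succ_of_fderiv_apply (contDiff_nat_conicTerm hπ hC₀ _ hσ N hF)
      (by simp [conicTerm, hF.apply_eq_zero]) fun v => ?_
    simp only [fderiv_conicTerm_apply hπ hC₀ hσ N hF v]
    have h1 := hF.mul_left (g := fun y => 2 * p y * q y * (q y * p v - p y * q v)) (by fun_prop)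
    have h2 := hF.fderiv_apply v
    have h3 := hF.mul_left (g := fun y => -2 * N * (p y * p v + q y * q v)) (by fun_prop)
    have c1 := contDiff_conicTerm hπ hC₀ hσ' (N + 2) h1
    have c2 := contDiff_conicTerm hπ hC₀ hσ N h2
    exact JetAt.add (c1.add c2) (contDiff_conicTerm hπ hC₀ hσ (N + 1) h3)
      (JetAt.add c1 c2 (ih hσ' _ h1 x) (ih hσ _ h2 x)) (ih hσ _ h3 x)

lemma flatAlong_conicTerm (hπ : ∀ x, π (π x) = π x)
    (hC₀ : ∀ x, ‖x - π x‖ ^ 2 ≤ C₀ * (p x ^ 2 + q x ^ 2))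
    {σ : ℝ → ℝ} (hσ : ContDiff ℝ ∞ σ) {F : E → ℝ} (hF : FlatAlong π F) :
    FlatAlong π (conicTerm p q σ 0 F) where
  contDiff := contDiff_conicTerm hπ hC₀ hσ 0 hF
  hasCompactSupport := by
    refine hF.hasCompactSupport.mono fun x hx => ?_
    rw [Function.mem_support] at hx ⊢
    contrapose! hx
    simp [conicTerm, hx]
  jetAt n x := jetAt_conicTerm hπ hC₀ n hσ 0 hF x

end Cones

section FlatSolution

variable {E : Type*} [NormedAddCommGroup E] [NormedSpace ℝ E] {π : E →L[ℝ] E}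
  {p q : E →L[ℝ] ℝ} {X : E → E} {a b m : ℝ}

/-- Every homological equation `X f - c f = F` whose right-hand side is flat along the range of `π`
has a smooth solution that is flat there. -/
def FlatSolvable (π : E →L[ℝ] E) (X : E → E) : Prop :=
  ∀ (c : ℝ) (F : E → ℝ), FlatAlong π F → ∃ f : E → ℝ, ContDiff ℝ ∞ f ∧
    (∀ n x, JetAt n f (π x)) ∧ ∀ x, fderiv ℝ f x (X x) - c * f x = F x

lemma FlatSolvable.of_neg (h : FlatSolvable π (-X)) : FlatSolvable π X := by
  intro c F hF
  obtain ⟨f, hf, hfJ, hfX⟩ := h (-c) (fun x => -1 * F x) (hF.mul_left contDiff_const)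
  refine ⟨f, hf, hfJ, fun x => ?_⟩
  have := hfX x
  rw [Pi.neg_apply, map_neg] at this
  linarith

/-- The components of `X` along `p` and `q` are `a p` and `b q`, up to a small relative error. -/
structure NearlyDiagonal (p q : E →L[ℝ] ℝ) (X : E → E) (a b ε : ℝ) : Prop where
  left : ∀ x, |p (X x) - a * p x| ≤ ε * (|p x| + |q x|)
  right : ∀ x, |q (X x) - b * q x| ≤ ε * (|p x| + |q x|)

namespace NearlyDiagonal

variable {ε : ℝ}

lemma swap (h : NearlyDiagonal p q X a b ε) : NearlyDiagonal q p X b a ε where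
  left x := (h.right x).trans_eq (by rw [add_comm])
  right x := (h.left x).trans_eq (by rw [add_comm])

lemma neg (h : NearlyDiagonal p q X a b ε) : NearlyDiagonal p q (-X) (-a) (-b) ε where
  left x := by
    rw [Pi.neg_apply, map_neg, ← abs_neg]
    convert h.left x using 2
    ring
  right x := by
    rw [Pi.neg_apply, map_neg, ← abs_neg]
    convert h.right x using 2
    ring

lemma abs_mul_sub_sq_le (h : NearlyDiagonal p q X a b ε) (hε : 0 ≤ ε) (x : E) :
    |p x * p (X x) - a * p x ^ 2| ≤ ε / 2 * (3 * p x ^ 2 + q x ^ 2) :=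
  calc |p x * p (X x) - a * p x ^ 2| = |p x| * |p (X x) - a * p x| := by
        rw [← abs_mul]
        ring_nf
    _ ≤ |p x| * (ε * (|p x| + |q x|)) := by
        gcongr
        exact h.left x
    _ ≤ ε / 2 * (3 * |p x| ^ 2 + |q x| ^ 2) := by
        nlinarith [mul_nonneg hε (sq_nonneg (|p x| - |q x|))]
    _ = ε / 2 * (3 * p x ^ 2 + q x ^ 2) := by rw [sq_abs, sq_abs]

end NearlyDiagonal

lemma fderiv_mul_sq_add_mul_sq (p q : E →L[ℝ] ℝ) (s t : ℝ) (x v : E) :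
    fderiv ℝ (fun x => s * p x ^ 2 + t * q x ^ 2) x v =
      2 * s * (p x * p v) + 2 * t * (q x * q v) := by
  have h : HasFDerivAt (fun x => s * p x ^ 2 + t * q x ^ 2) _ x :=
    (((p.hasFDerivAt (x := x)).pow 2).const_mul s).add
      (((q.hasFDerivAt (x := x)).pow 2).const_mul t)
  rw [h.fderiv]
  simp
  ring

lemma hasCompactSupport_neg_sub_neg {A : E →L[ℝ] E} (h : HasCompactSupport fun x => X x - A x) :
    HasCompactSupport fun x => (-X) x - (-A) x := by
  convert h.neg using 2
  exact neg_sub_neg _ _ |>.trans (neg_sub _ _).symm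

/-- The linear forms `p` and `q` vanish on the range of the projection `π` and control the distance
to it. -/
structure TransverseForms (π : E →L[ℝ] E) (p q : E →L[ℝ] ℝ) (C₀ : ℝ) : Prop where
  proj_proj : ∀ x, π (π x) = π x
  left_proj : ∀ x, p (π x) = 0
  right_proj : ∀ x, q (π x) = 0
  nonneg : 0 ≤ C₀
  norm_sub_sq_le : ∀ x, ‖x - π x‖ ^ 2 ≤ C₀ * (p x ^ 2 + q x ^ 2)

variable {C₀ : ℝ}

lemma TransverseForms.swap (h : TransverseForms π p q C₀) : TransverseForms π q p C₀ where
  proj_proj := h.proj_proj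
  left_proj := h.right_proj
  right_proj := h.left_proj
  nonneg := h.nonneg
  norm_sub_sq_le x := (h.norm_sub_sq_le x).trans_eq (by rw [add_comm])

variable [FiniteDimensional ℝ E]

lemma exists_flat_solution_of_quadratic (hpq : TransverseForms π p q C₀) (hX : ContDiff ℝ ∞ X)
    {A : E →L[ℝ] E}
    (hXA : HasCompactSupport fun x => X x - A x) {s t : ℝ} (hm : 0 < m)
    (hW : ∀ x, 2 * s * (p x * p (X x)) + 2 * t * (q x * q (X x)) ≤
      -m * (s * p x ^ 2 + t * q x ^ 2))
    (c : ℝ) {F : E → ℝ} (hF : FlatAlong π F) {C₁ : ℝ} (hC₁ : 0 ≤ C₁)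
    (h : ∀ x, ‖x - π x‖ ^ 2 ≤ C₁ * (s * p x ^ 2 + t * q x ^ 2) ∨ F =ᶠ[𝓝 x] 0) :
    ∃ f : E → ℝ, ContDiff ℝ ∞ f ∧ (∀ n x, JetAt n f (π x)) ∧
      ∀ x, fderiv ℝ f x (X x) - c * f x = F x := by
  obtain ⟨f, hf, hf0, hfX⟩ := exists_solution_of_lyapunov hX hXA
    (W := fun x => s * p x ^ 2 + t * q x ^ 2) (by fun_prop) hm
    (fun x => by rw [fderiv_mul_sq_add_mul_sq]; exact hW x) c hF.contDiff
    (dominated_of_flatAlong hpq.proj_proj hF hC₁ h)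
  exact ⟨f, hf, fun n x j _ => hf0 _ (by simp [hpq.left_proj, hpq.right_proj]) j, hfX⟩

lemma flatSolvable_of_node (hpq : TransverseForms π p q C₀) (hX : ContDiff ℝ ∞ X)
    {A : E →L[ℝ] E} (hXA : HasCompactSupport fun x => X x - A x)
    (hm : 0 < m) (ha : a ≤ -m) (hb : b ≤ -m) (hd : NearlyDiagonal p q X a b (m / 13)) :
    FlatSolvable π X := by
  intro c F hF
  refine exists_flat_solution_of_quadratic hpq hX hXA (s := 1) (t := 1) hm (fun x => ?_) c
    hF hpq.nonneg fun x => Or.inl (by simpa using hpq.norm_sub_sq_le x)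
  have hp := (abs_le.1 (hd.abs_mul_sub_sq_le (by positivity) x)).2
  have hq := (abs_le.1 (hd.swap.abs_mul_sub_sq_le (by positivity) x)).2
  nlinarith [mul_le_mul_of_nonneg_right ha (sq_nonneg (p x)),
    mul_le_mul_of_nonneg_right hb (sq_nonneg (q x)), mul_nonneg hm.le (sq_nonneg (p x)),
    mul_nonneg hm.le (sq_nonneg (q x))]

/-- On the cone `q² ≤ 2 p²` the indefinite form `4 p² - q²` is a Lyapunov function of a saddle. -/
lemma exists_flat_solution_of_saddle_of_eq_zero (hpq : TransverseForms π p q C₀)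
    (hX : ContDiff ℝ ∞ X) {A : E →L[ℝ] E} (hXA : HasCompactSupport fun x => X x - A x)
    (hm : 0 < m) (ha : a ≤ -m) (hb : m ≤ b) (hd : NearlyDiagonal p q X a b (m / 13)) (c : ℝ)
    {F : E → ℝ} (hF : FlatAlong π F) (hF0 : ∀ x, 2 * p x ^ 2 < q x ^ 2 → F x = 0) :
    ∃ f : E → ℝ, ContDiff ℝ ∞ f ∧ (∀ n x, JetAt n f (π x)) ∧
      ∀ x, fderiv ℝ f x (X x) - c * f x = F x := by
  refine exists_flat_solution_of_quadratic hpq hX hXA (s := 4) (t := -1) hm (fun x => ?_) c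
    hF (C₁ := C₀ * 4) (mul_nonneg hpq.nonneg (by norm_num)) fun x => ?_
  · have hp := (abs_le.1 (hd.abs_mul_sub_sq_le (by positivity) x)).2
    have hq := (abs_le.1 (hd.swap.abs_mul_sub_sq_le (by positivity) x)).1
    nlinarith [mul_le_mul_of_nonneg_right ha (sq_nonneg (p x)),
      mul_le_mul_of_nonneg_right hb (sq_nonneg (q x)), mul_nonneg hm.le (sq_nonneg (p x)),
      mul_nonneg hm.le (sq_nonneg (q x))]
  · rcases le_or_gt (q x ^ 2) (2 * p x ^ 2) with hx | hx
    · left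
      calc ‖x - π x‖ ^ 2 ≤ C₀ * (p x ^ 2 + q x ^ 2) := hpq.norm_sub_sq_le x
        _ ≤ C₀ * (4 * (4 * p x ^ 2 + -1 * q x ^ 2)) := by
          gcongr
          · exact hpq.nonneg
          · nlinarith [sq_nonneg (p x)]
        _ = _ := by ring
    · right
      filter_upwards [(isOpen_lt (by fun_prop) (by fun_prop) :
        IsOpen {y | 2 * p y ^ 2 < q y ^ 2}).mem_nhds hx] with y hy using hF0 y hy

lemma smoothTransition_eq_zero_of_lt {s t : ℝ} (h : 2 * s ^ 2 < t ^ 2) :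
    Real.smoothTransition (3 * (s ^ 2 / (s ^ 2 + t ^ 2)) - 1) = 0 := by
  refine Real.smoothTransition.zero_of_nonpos ?_
  have : s ^ 2 / (s ^ 2 + t ^ 2) ≤ 1 / 3 := by
    rw [div_le_iff₀ (by nlinarith [sq_nonneg s])]
    linarith
  linarith

lemma smoothTransition_eq_one_of_lt {s t : ℝ} (h : 2 * t ^ 2 < s ^ 2) :
    Real.smoothTransition (3 * (s ^ 2 / (s ^ 2 + t ^ 2)) - 1) = 1 := by
  refine Real.smoothTransition.one_of_one_le ?_
  have : 2 / 3 ≤ s ^ 2 / (s ^ 2 + t ^ 2) := by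
    rw [le_div_iff₀ (by nlinarith [sq_nonneg t])]
    linarith
  linarith

lemma flatSolvable_of_saddle (hpq : TransverseForms π p q C₀) (hX : ContDiff ℝ ∞ X)
    {A : E →L[ℝ] E} (hXA : HasCompactSupport fun x => X x - A x)
    (hm : 0 < m) (ha : a ≤ -m) (hb : m ≤ b) (hd : NearlyDiagonal p q X a b (m / 13)) :
    FlatSolvable π X := by
  intro c F hF
  have hσ : ContDiff ℝ ∞ fun t : ℝ => Real.smoothTransition (3 * t - 1) :=
    Real.smoothTransition.contDiff.comp (by fun_prop)
  have hF₁ := flatAlong_conicTerm hpq.proj_proj hpq.norm_sub_sq_le hσ hF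
  have hF₂ := flatAlong_conicTerm hpq.proj_proj hpq.norm_sub_sq_le
    (contDiff_const (c := (1 : ℝ)).sub hσ) hF
  obtain ⟨f, hf, hfJ, hfX⟩ := exists_flat_solution_of_saddle_of_eq_zero hpq hX hXA hm ha hb hd c hF₁
    fun x hx => by simp [conicTerm, smoothTransition_eq_zero_of_lt hx]
  obtain ⟨g, hg, hgJ, hgX⟩ := exists_flat_solution_of_saddle_of_eq_zero hpq.swap
    hX.neg (hasCompactSupport_neg_sub_neg hXA) hm (neg_le_neg hb)
    (le_neg_of_le_neg ha) hd.neg.swap (-c) (hF₂.mul_left (contDiff_const (c := (-1 : ℝ))))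
    fun x hx => by simp [conicTerm, smoothTransition_eq_one_of_lt hx]
  refine ⟨f + g, hf.add hg, fun n x => (hfJ n x).add hf hg (hgJ n x), fun x => ?_⟩
  have hfx := hfX x
  have hgx := hgX x
  rw [map_neg] at hgx
  rw [fderiv_add (hf.differentiable (by simp) x) (hg.differentiable (by simp) x)]
  simp only [add_apply, Pi.add_apply, conicTerm, pow_zero, div_one] at hfx hgx ⊢
  linear_combination hfx - hgx

theorem flatSolvable_of_nearlyDiagonal (hpq : TransverseForms π p q C₀) (hX : ContDiff ℝ ∞ X)
    {A : E →L[ℝ] E} (hXA : HasCompactSupport fun x => X x - A x)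
    (hm : 0 < m) (ha : m ≤ |a|) (hb : m ≤ |b|) (hd : NearlyDiagonal p q X a b (m / 13)) :
    FlatSolvable π X := by
  rcases le_abs'.1 ha with ha | ha <;> rcases le_abs'.1 hb with hb | hb
  · exact flatSolvable_of_node hpq hX hXA hm ha hb hd
  · exact flatSolvable_of_saddle hpq hX hXA hm ha hb hd
  · exact flatSolvable_of_saddle hpq.swap hX hXA hm hb ha hd.swap
  · exact (flatSolvable_of_node hpq hX.neg (hasCompactSupport_neg_sub_neg hXA) hm (neg_le_neg ha)
      (neg_le_neg hb) hd.neg).of_neg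

end FlatSolution

section LocalSolution

section

variable {E : Type*} [NormedAddCommGroup E] [NormedSpace ℝ E] [FiniteDimensional ℝ E]

lemma exists_cutoff_smul_mem {s : Set E} (hs : s ∈ 𝓝 (0 : E)) :
    ∃ χ : E → ℝ, ContDiff ℝ ∞ χ ∧ HasCompactSupport χ ∧ (∀ᶠ x in 𝓝 0, χ x = 1) ∧
      ∀ x, χ x • x ∈ s := by
  obtain ⟨r, hr, hrs⟩ := Metric.nhds_basis_ball.mem_iff.1 hs
  obtain ⟨χ, hχ, hχc, hχs, hχ1, hχI⟩ := exists_cutoff (Metric.ball_mem_nhds (0 : E) hr)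
  refine ⟨χ, hχ, hχc, hχ1, fun x => hrs ?_⟩
  by_cases hx : x ∈ tsupport χ
  · rw [mem_ball_zero_iff, norm_smul, Real.norm_of_nonneg (hχI x).1]
    exact (mul_le_of_le_one_left (norm_nonneg x) (hχI x).2).trans_lt (mem_ball_zero_iff.1 (hχs hx))
  · simpa [image_eq_zero_of_notMem_tsupport hx] using hr

lemma exists_flatAlong_eventuallyEq {π : E →L[ℝ] E} (hπ : ∀ x, π (π x) = π x) {r : E → ℝ}
    (hr : ContDiff ℝ ∞ r) (hrJ : ∀ᶠ x in 𝓝 0, ∀ n, JetAt n r (π x)) :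
    ∃ F, FlatAlong π F ∧ F =ᶠ[𝓝 0] r := by
  obtain ⟨ψ, hψ, hψc, hψs, hψ1, -⟩ := exists_cutoff hrJ
  refine ⟨ψ * r, ⟨hψ.mul hr, hψc.mul_right, fun n x => ?_⟩, hψ1.mono fun x hx => by simp [hx]⟩
  by_cases hx : π x ∈ tsupport ψ
  · have hflat := hψs hx n
    rw [hπ] at hflat
    rw [← zero_add n]
    exact .mul hψ hr (jetAt_zero _ _) hflat
  · refine JetAt.congr (f := fun _ => 0) (fun j _ => by simp) ?_
    filter_upwards [(isClosed_tsupport ψ).isOpen_compl.mem_nhds hx] with y hy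
    rw [Pi.mul_apply, image_eq_zero_of_notMem_tsupport hy, zero_mul]

end

variable {Z : Type*} [NormedAddCommGroup Z] [NormedSpace ℝ Z] {F₁ F₂ : ℝ × ℝ × Z → ℝ × ℝ × Z}

lemma transverseForms_axisProj : TransverseForms (axisProj Z) (.fst ℝ ℝ (ℝ × Z))
    (.fst ℝ ℝ Z ∘L .snd ℝ ℝ (ℝ × Z)) 1 where
  proj_proj := axisProj_axisProj
  left_proj _ := rfl
  right_proj _ := rfl
  nonneg := zero_le_one
  norm_sub_sq_le x := by
    rw [norm_sub_axisProj, one_mul]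
    change _ ≤ x.1 ^ 2 + x.2.1 ^ 2
    rcases max_cases |x.1| |x.2.1| with ⟨h, -⟩ | ⟨h, -⟩ <;> rw [h, sq_abs]
    · exact le_add_of_nonneg_right (sq_nonneg _)
    · exact le_add_of_nonneg_left (sq_nonneg _)

lemma nearlyDiagonal_axisField (h₁ : (F₁ 0).2.1 = 0) (h₂ : (F₂ 0).1 = 0) {ε : ℝ}
    (hF₁ : ∀ x, ‖F₁ x - F₁ 0‖ ≤ ε) (hF₂ : ∀ x, ‖F₂ x - F₂ 0‖ ≤ ε) :
    NearlyDiagonal (.fst ℝ ℝ (ℝ × Z)) (.fst ℝ ℝ Z ∘L .snd ℝ ℝ (ℝ × Z)) (axisField F₁ F₂)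
      (F₁ 0).1 (F₂ 0).2.1 ε := by
  have hsum {L : ℝ × ℝ × Z → ℝ} (hL : ∀ y, |L y| ≤ ‖y‖) (x : ℝ × ℝ × Z) :
      |x.1 * L (F₁ x - F₁ 0) + x.2.1 * L (F₂ x - F₂ 0)| ≤ ε * (|x.1| + |x.2.1|) :=
    calc _ ≤ |x.1| * |L (F₁ x - F₁ 0)| + |x.2.1| * |L (F₂ x - F₂ 0)| := by
          rw [← abs_mul, ← abs_mul]
          exact abs_add_le _ _
      _ ≤ |x.1| * ε + |x.2.1| * ε := by
          gcongr
          · exact (hL _).trans (hF₁ x)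
          · exact (hL _).trans (hF₂ x)
      _ = ε * (|x.1| + |x.2.1|) := by ring
  refine ⟨fun x => ?_, fun x => ?_⟩
  · refine Eq.trans_le (congrArg abs ?_) (hsum (L := fun y => y.1) norm_fst_le x)
    simp [axisField, h₂]
    ring
  · refine Eq.trans_le (congrArg abs ?_)
      (hsum (L := fun y => y.2.1) (fun y => (norm_fst_le y.2).trans (norm_snd_le y)) x)
    simp [axisField, h₁]
    ring

variable [FiniteDimensional ℝ Z]

lemma AxisDiagonal.exists_flatSolvable_eventuallyEq (hF : AxisDiagonal F₁ F₂)
    (h₁ : (F₁ 0).1 ≠ 0) (h₂ : (F₂ 0).2.1 ≠ 0) :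
    ∃ X, FlatSolvable (axisProj Z) X ∧ X =ᶠ[𝓝 0] axisField F₁ F₂ := by
  have hm : 0 < min |(F₁ 0).1| |(F₂ 0).2.1| := lt_min (abs_pos.2 h₁) (abs_pos.2 h₂)
  have hsmall {F : ℝ × ℝ × Z → ℝ × ℝ × Z} (hF : ContDiff ℝ ∞ F) :
      ∀ᶠ x in 𝓝 0, ‖F x - F 0‖ ≤ min |(F₁ 0).1| |(F₂ 0).2.1| / 13 :=
    (hF.continuous.sub continuous_const).norm.tendsto' 0 0 (by simp) |>.eventually_le_const
      (by positivity)
  obtain ⟨χ, hχ, hχc, hχ1, hχs⟩ :=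
    exists_cutoff_smul_mem ((hsmall hF.contDiff₁).and (hsmall hF.contDiff₂))
  let G₁ (x : ℝ × ℝ × Z) := F₁ (χ x • x)
  let G₂ (x : ℝ × ℝ × Z) := F₂ (χ x • x)
  have hG₁0 : G₁ 0 = F₁ 0 := congrArg F₁ (smul_zero _)
  have hG₂0 : G₂ 0 = F₂ 0 := congrArg F₂ (smul_zero _)
  have hG : ContDiff ℝ ∞ (axisField G₁ G₂) := contDiff_axisField
    (hF.contDiff₁.comp (hχ.smul contDiff_id)) (hF.contDiff₂.comp (hχ.smul contDiff_id))
  have hd : NearlyDiagonal _ _ (axisField G₁ G₂) _ _ _ :=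
    nearlyDiagonal_axisField (by rw [hG₁0]; exact hF.snd_eq_zero 0)
      (by rw [hG₂0]; exact hF.fst_eq_zero 0) (fun x => by rw [hG₁0]; exact (hχs x).1)
      fun x => by rw [hG₂0]; exact (hχs x).2
  rw [hG₁0, hG₂0] at hd
  let A : (ℝ × ℝ × Z) →L[ℝ] ℝ × ℝ × Z := (ContinuousLinearMap.fst ℝ ℝ (ℝ × Z)).smulRight (F₁ 0) +
    (ContinuousLinearMap.fst ℝ ℝ Z ∘L .snd ℝ ℝ (ℝ × Z)).smulRight (F₂ 0)
  have hA : HasCompactSupport fun x => axisField G₁ G₂ x - A x := by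
    refine hχc.mono fun x hx => ?_
    contrapose! hx
    simp [axisField, A, G₁, G₂, Function.notMem_support.1 hx]
  refine ⟨axisField G₁ G₂, flatSolvable_of_nearlyDiagonal transverseForms_axisProj hG hA hm
    (min_le_left _ _) (min_le_right _ _) hd, hχ1.mono fun x hx => ?_⟩
  simp [axisField, G₁, G₂, hx]

theorem AxisDiagonal.exists_solution (hF : AxisDiagonal F₁ F₂) (h₁ : (F₁ 0).1 ≠ 0)
    (h₂ : (F₂ 0).2.1 ≠ 0) {c : ℝ} {n₀ : ℕ}
    (hres : ∀ ζ, ∀ p q : ℕ, n₀ ≤ p + q → p * (F₁ (0, 0, ζ)).1 + q * (F₂ (0, 0, ζ)).2.1 ≠ c)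
    {G : smoothRing (ℝ × ℝ × Z)} (hG : G ∈ axisIdeal Z ^ n₀) :
    ∃ f : ℝ × ℝ × Z → ℝ, ContDiff ℝ ∞ f ∧ (∀ x, JetAt n₀ f (axisProj Z x)) ∧
      ∀ᶠ x in 𝓝 0,
        fderiv ℝ f x (axisField F₁ F₂ x) - c * f x = (G : ℝ × ℝ × Z → ℝ) x := by
  obtain ⟨f, hf, hfJ, hfr⟩ := hF.exists_solution_mod_flat hres hG
  have hr := (((hf.fderiv_right (m := ∞) (by simp)).clm_apply hF.contDiff).sub
    (contDiff_const (c := c).mul hf)).sub (smoothRing_contDiff G)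
  obtain ⟨R, hR, hRr⟩ := exists_flatAlong_eventuallyEq axisProj_axisProj hr hfr
  obtain ⟨X, hX, hXF⟩ := hF.exists_flatSolvable_eventuallyEq h₁ h₂
  obtain ⟨g, hg, hgJ, hgX⟩ := hX c _ (hR.mul_left (contDiff_const (c := (-1 : ℝ))))
  refine ⟨f + g, hf.add hg, fun x => (hfJ x).add hf hg (hgJ n₀ x), ?_⟩
  filter_upwards [hRr, hXF] with x hx hXx
  have hgx := hgX x
  rw [hx, hXx] at hgx
  rw [fderiv_add (hf.differentiable (by simp) x) (hg.differentiable (by simp) x)]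
  simp only [add_apply, Pi.add_apply]
  linear_combination hgx

end LocalSolution

section NonResonant

/-- Absence of resonances of the first and of the second type, of any order, between two
eigenvalues. -/
def NonResonant {K : Type*} [Semiring K] (a b : K) : Prop :=
  (∀ p q : ℕ, 1 ≤ p + q → p * a + q * b ≠ 0) ∧
    ∀ p q : ℕ, 2 ≤ p + q → p * a + q * b ≠ a ∧ p * a + q * b ≠ b

section

variable {K : Type*} [Semiring K] {a b : K}

lemma NonResonant.symm (h : NonResonant a b) : NonResonant b a := by
  refine ⟨fun p q hpq => ?_, fun p q hpq => ?_⟩ <;> rw [add_comm (p * b)]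
  · exact h.1 q p (by omega)
  · exact (h.2 q p (by omega)).symm

lemma NonResonant.left_ne_zero (h : NonResonant a b) : a ≠ 0 := by
  simpa using h.1 1 0 le_rfl

lemma NonResonant.right_ne_zero (h : NonResonant a b) : b ≠ 0 := h.symm.left_ne_zero

end

lemma NonResonant.of_add_eq_of_mul_eq {K : Type*} [CommRing K] [NoZeroDivisors K] {a b r s : K}
    (h : NonResonant a b) (hadd : a + b = r + s) (hmul : a * b = r * s) : NonResonant r s := by
  have hroot : (a - r) * (a - s) = 0 := by linear_combination a * hadd - hmul
  rcases mul_eq_zero.1 hroot with har | has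
  · obtain rfl : a = r := sub_eq_zero.1 har
    rwa [← add_left_cancel hadd]
  · obtain rfl : a = s := sub_eq_zero.1 has
    rw [add_comm, add_right_cancel_iff] at hadd
    rw [← hadd]
    exact h.symm

lemma nonResonant_ofReal {a b : ℝ} : NonResonant (a : ℂ) b ↔ NonResonant a b := by
  simp only [NonResonant]
  norm_cast

end NonResonant

section Linearization

section

variable {E : Type*} [NormedAddCommGroup E] [NormedSpace ℝ E] {n : ℕ} {f : E → ℝ} {x : E}

lemma JetAt.eq_zero (h : JetAt n f x) (hn : 0 < n) : f x = 0 := by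
  simpa [h 0 hn] using (norm_iteratedFDeriv_zero (𝕜 := ℝ) (f := f) (x := x)).symm

lemma JetAt.fderiv_eq_zero (h : JetAt n f x) (hn : 1 < n) : fderiv ℝ f x = 0 := by
  simpa [h 1 hn] using (norm_iteratedFDeriv_one (𝕜 := ℝ) f (x := x)).symm

end

variable {Z : Type*} [NormedAddCommGroup Z] [NormedSpace ℝ Z] {F₁ F₂ : ℝ × ℝ × Z → ℝ × ℝ × Z}

lemma AxisDiagonal.smul (hF : AxisDiagonal F₁ F₂) {k : ℝ × ℝ × Z → ℝ} (hk : ContDiff ℝ ∞ k) :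
    AxisDiagonal (fun x => k x • F₁ x) fun x => k x • F₂ x where
  contDiff₁ := hk.smul hF.contDiff₁
  contDiff₂ := hk.smul hF.contDiff₂
  snd_eq_zero ζ := by simp [hF.snd_eq_zero ζ]
  fst_eq_zero ζ := by simp [hF.fst_eq_zero ζ]

lemma axisField_smul (k : ℝ × ℝ × Z → ℝ) (x : ℝ × ℝ × Z) :
    axisField (fun x => k x • F₁ x) (fun x => k x • F₂ x) x = k x • axisField F₁ F₂ x := by
  simp only [axisField, smul_add, smul_comm (k x)]

lemma map_axisField (L : (ℝ × ℝ × Z) →L[ℝ] ℝ) (x : ℝ × ℝ × Z) :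
    L (axisField F₁ F₂ x) = L (F₁ x) * x.1 + L (F₂ x) * x.2.1 := by
  simp [axisField, mul_comm]

lemma injective_prodMk_of_section {D : (ℝ × ℝ × Z) →L[ℝ] Z} (hD : ∀ ζ, D (0, 0, ζ) = ζ) :
    Function.Injective fun x : ℝ × ℝ × Z => (x.1, x.2.1, D x) := by
  rintro ⟨a, b, ζ⟩ ⟨a', b', ζ'⟩ h
  obtain ⟨rfl, rfl, hDx⟩ : a = a' ∧ b = b' ∧ D (a, b, ζ) = D (a', b', ζ') := by simpa using h
  have hsub : D (0, 0, ζ - ζ') = 0 := by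
    rw [← sub_eq_zero, ← map_sub] at hDx
    simpa using hDx
  rw [sub_eq_zero.1 ((hD _).symm.trans hsub)]

variable [FiniteDimensional ℝ Z]

lemma AxisDiagonal.exists_firstIntegral (hF : AxisDiagonal F₁ F₂)
    (hres : ∀ ζ, ∀ p q : ℕ, 1 ≤ p + q → p * (F₁ (0, 0, ζ)).1 + q * (F₂ (0, 0, ζ)).2.1 ≠ 0) :
    ∃ Θ : ℝ × ℝ × Z → Z, ContDiff ℝ ∞ Θ ∧ (∀ ζ, Θ (0, 0, ζ) = ζ) ∧
      ∀ᶠ x in 𝓝 0, fderiv ℝ Θ x (axisField F₁ F₂ x) = 0 := by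
  let b := Module.finBasis ℝ Z
  let coord (i) : (ℝ × ℝ × Z) →L[ℝ] ℝ :=
    (b.coord i).toContinuousLinearMap ∘L .snd ℝ ℝ Z ∘L .snd ℝ ℝ (ℝ × Z)
  have hcorrection (i) : ∃ f : ℝ × ℝ × Z → ℝ, ContDiff ℝ ∞ f ∧ (∀ ζ, f (0, 0, ζ) = 0) ∧
      ∀ᶠ x in 𝓝 0, fderiv ℝ f x (axisField F₁ F₂ x) = -coord i (axisField F₁ F₂ x) := by
    let G : smoothRing (ℝ × ℝ × Z) := ⟨fun x => -coord i (axisField F₁ F₂ x),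
      ((coord i).contDiff.comp hF.contDiff).neg⟩
    have hG : G ∈ axisIdeal Z ^ 1 := by
      rw [pow_one]
      exact mem_axisIdeal fun ζ => by simp [G, axisField]
    have h₁ : (F₁ 0).1 ≠ 0 := by simpa [← Prod.zero_eq_mk] using hres 0 1 0 le_rfl
    have h₂ : (F₂ 0).2.1 ≠ 0 := by simpa [← Prod.zero_eq_mk] using hres 0 0 1 le_rfl
    obtain ⟨f, hf, hfJ, hfG⟩ := hF.exists_solution h₁ h₂ hres hG
    exact ⟨f, hf, fun ζ => (hfJ (0, 0, ζ)).eq_zero one_pos, hfG.mono fun x hx => by simpa using hx⟩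
  choose f hf hf0 hfV using hcorrection
  refine ⟨fun x => x.2.2 + ∑ i, f i x • b i, by fun_prop, fun ζ => by simp [hf0], ?_⟩
  filter_upwards [eventually_all.2 hfV] with x hx
  have hderiv : HasFDerivAt (fun x => x.2.2 + ∑ i, f i x • b i)
      (.snd ℝ ℝ Z ∘L .snd ℝ ℝ (ℝ × Z) + ∑ i, (fderiv ℝ (f i) x).smulRight (b i)) x :=
    hasFDerivAt_snd.snd.add (.fun_sum fun i _ =>
      ((hf i).differentiable (by simp) x).hasFDerivAt.smul_const (b i))
  rw [hderiv.fderiv]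
  simp only [add_apply, sum_apply, ContinuousLinearMap.smulRight_apply, hx,
    neg_smul, Finset.sum_neg_distrib]
  exact add_neg_eq_zero.2 (b.sum_repr _).symm

/-- After the time change `k = (lam ∘ Θ)⁻¹` the eigenvalue is the constant `1`, so that `L` solves
the eigenfunction equation modulo the square of the axis ideal. -/
lemma AxisDiagonal.exists_eigenfunction (hF : AxisDiagonal F₁ F₂) (h₁ : (F₁ 0).1 ≠ 0)
    (h₂ : (F₂ 0).2.1 ≠ 0) {lam : Z → ℝ} (hlam : ContDiff ℝ ∞ lam) (hlam0 : ∀ ζ, lam ζ ≠ 0)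
    (hres : ∀ ζ, ∀ p q : ℕ, 2 ≤ p + q →
      p * (F₁ (0, 0, ζ)).1 + q * (F₂ (0, 0, ζ)).2.1 ≠ lam ζ)
    {Θ : ℝ × ℝ × Z → Z} (hΘ : ContDiff ℝ ∞ Θ) (hΘZ : ∀ ζ, Θ (0, 0, ζ) = ζ)
    {L : (ℝ × ℝ × Z) →L[ℝ] ℝ} (hL : ∀ x, L x = L (1, 0, 0) * x.1 + L (0, 1, 0) * x.2.1)
    (hL₁ : ∀ ζ, L (F₁ (0, 0, ζ)) = lam ζ * L (1, 0, 0))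
    (hL₂ : ∀ ζ, L (F₂ (0, 0, ζ)) = lam ζ * L (0, 1, 0)) :
    ∃ X : ℝ × ℝ × Z → ℝ, ContDiff ℝ ∞ X ∧ X 0 = 0 ∧ fderiv ℝ X 0 = L ∧
      ∀ᶠ x in 𝓝 0, fderiv ℝ X x (axisField F₁ F₂ x) = lam (Θ x) * X x := by
  let k (x : ℝ × ℝ × Z) := (lam (Θ x))⁻¹
  have hk : ContDiff ℝ ∞ k := (hlam.comp hΘ).inv fun x => hlam0 _
  have hkZ (ζ) : k (0, 0, ζ) * lam ζ = 1 := by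
    simp only [k, hΘZ]
    exact inv_mul_cancel₀ (hlam0 ζ)
  have hk0 : k 0 ≠ 0 := inv_ne_zero (hlam0 _)
  let defect (c : ℝ) {F} (hF : ContDiff ℝ ∞ F) : smoothRing (ℝ × ℝ × Z) :=
    ⟨fun x => c - k x * L (F x), contDiff_const.sub (hk.mul (L.contDiff.comp hF))⟩
  let G : smoothRing (ℝ × ℝ × Z) := ⟨fun x => L x - k x * L (axisField F₁ F₂ x),
    L.contDiff.sub (hk.mul (L.contDiff.comp hF.contDiff))⟩
  have hG : G ∈ axisIdeal Z ^ 2 :=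
    mem_axisIdeal_sq (g := defect (L (1, 0, 0)) hF.contDiff₁)
      (h := defect (L (0, 1, 0)) hF.contDiff₂)
      (fun ζ => by
        simp only [defect, hL₁]
        linear_combination -L (1, 0, 0) * hkZ ζ)
      (fun ζ => by
        simp only [defect, hL₂]
        linear_combination -L (0, 1, 0) * hkZ ζ)
      fun x => by
        simp only [G, defect, map_axisField]
        linear_combination hL x
  obtain ⟨f, hf, hfJ, hfG⟩ := (hF.smul hk).exists_solution (mul_ne_zero hk0 h₁)
    (mul_ne_zero hk0 h₂) (c := 1) (fun ζ p q hpq h => hres ζ p q hpq (by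
      simp only [Prod.smul_fst, Prod.smul_snd, smul_eq_mul] at h
      linear_combination
        lam ζ * h - (p * (F₁ (0, 0, ζ)).1 + q * (F₂ (0, 0, ζ)).2.1) * hkZ ζ)) hG
  have hf0 : JetAt 2 f 0 := hfJ 0
  refine ⟨fun x => L x + f x, L.contDiff.add hf, by simp [hf0.eq_zero two_pos], ?_, ?_⟩
  · rw [fderiv_fun_add L.differentiableAt (hf.differentiable (by simp) 0), L.fderiv,
      hf0.fderiv_eq_zero one_lt_two, add_zero]
  · filter_upwards [hfG] with x hx
    rw [axisField_smul, map_smul, smul_eq_mul] at hx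
    rw [fderiv_fun_add L.differentiableAt (hf.differentiable (by simp) x), L.fderiv, add_apply]
    have hkx : lam (Θ x) * k x = 1 := mul_inv_cancel₀ (hlam0 _)
    simp only [G] at hx
    linear_combination lam (Θ x) * hx - (L (axisField F₁ F₂ x) +
      fderiv ℝ f x (axisField F₁ F₂ x)) * hkx

theorem AxisDiagonal.exists_linearization (hF : AxisDiagonal F₁ F₂)
    (hres : ∀ ζ, NonResonant (F₁ (0, 0, ζ)).1 (F₂ (0, 0, ζ)).2.1) :
    ∃ Φ : ℝ × ℝ × Z → ℝ × ℝ × Z, ContDiff ℝ ∞ Φ ∧ Φ 0 = 0 ∧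
      Function.Injective (fderiv ℝ Φ 0) ∧
      ∀ᶠ x in 𝓝 0, fderiv ℝ Φ x (axisField F₁ F₂ x) =
        ((F₁ (0, 0, (Φ x).2.2)).1 * (Φ x).1, (F₂ (0, 0, (Φ x).2.2)).2.1 * (Φ x).2.1, 0) := by
  have h₁ (ζ) : (F₁ (0, 0, ζ)).1 ≠ 0 := (hres ζ).left_ne_zero
  have h₂ (ζ) : (F₂ (0, 0, ζ)).2.1 ≠ 0 := (hres ζ).right_ne_zero
  have hF₁ := hF.contDiff₁
  have hF₂ := hF.contDiff₂
  obtain ⟨Θ, hΘ, hΘZ, hΘV⟩ := hF.exists_firstIntegral fun ζ => (hres ζ).1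
  obtain ⟨X, hX, hX0, hX', hXV⟩ := hF.exists_eigenfunction (h₁ 0) (h₂ 0) (by fun_prop) h₁
    (fun ζ p q hpq => ((hres ζ).2 p q hpq).1) hΘ hΘZ (L := .fst ℝ ℝ (ℝ × Z)) (fun x => by simp)
    (fun ζ => by simp) (fun ζ => by simp [hF.fst_eq_zero])
  obtain ⟨Y, hY, hY0, hY', hYV⟩ := hF.exists_eigenfunction (h₁ 0) (h₂ 0) (by fun_prop) h₂
    (fun ζ p q hpq => ((hres ζ).2 p q hpq).2) hΘ hΘZ (L := .fst ℝ ℝ Z ∘L .snd ℝ ℝ (ℝ × Z))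
    (fun x => by simp) (fun ζ => by simp [hF.snd_eq_zero]) (fun ζ => by simp)
  have hderiv (x) : fderiv ℝ (fun x => (X x, Y x, Θ x)) x =
      (fderiv ℝ X x).prod ((fderiv ℝ Y x).prod (fderiv ℝ Θ x)) := by
    rw [(hX.differentiable (by simp) x).fderiv_prodMk
      ((hY.prodMk hΘ).differentiable (by simp) x), (hY.differentiable (by simp) x).fderiv_prodMk
      (hΘ.differentiable (by simp) x)]
  have hΘ' (ζ : Z) : fderiv ℝ Θ 0 (0, 0, ζ) = ζ := by
    let ι : Z →L[ℝ] ℝ × ℝ × Z := .inr ℝ ℝ (ℝ × Z) ∘L .inr ℝ ℝ Z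
    have hcomp : HasFDerivAt (fun ζ => Θ (ι ζ)) (fderiv ℝ Θ 0 ∘L ι) 0 :=
      (hΘ.differentiable (by simp) (ι 0)).hasFDerivAt.comp 0 ι.hasFDerivAt
    exact congr($(hcomp.unique ((hasFDerivAt_id 0).congr_of_eventuallyEq (.of_forall hΘZ))) ζ)
  refine ⟨fun x => (X x, Y x, Θ x), hX.prodMk (hY.prodMk hΘ), ?_, ?_, ?_⟩
  · exact Prod.ext hX0 (Prod.ext hY0 (hΘZ 0))
  · rw [hderiv, hX', hY']
    exact injective_prodMk_of_section hΘ'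
  · filter_upwards [hXV, hYV, hΘV] with x h₁ h₂ h₃
    simp [hderiv, h₁, h₂, h₃]

end Linearization

section EigenForms

/-- The linear form `(ξ, η) ↦ u.1 ξ + u.2 η` is an eigenform, with eigenvalue `lam`, of the
endomorphism of the plane that maps the standard basis to `c₁`, `c₂`. -/
def IsEigenForm (c₁ c₂ : ℝ × ℝ) (lam : ℝ) (u : ℝ × ℝ) : Prop :=
  u.1 * c₁.1 + u.2 * c₁.2 = lam * u.1 ∧ u.1 * c₂.1 + u.2 * c₂.2 = lam * u.2

lemma IsEigenForm.det_ne_zero {c₁ c₂ u₁ u₂ : ℝ × ℝ} {lam₁ lam₂ : ℝ}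
    (h₁ : IsEigenForm c₁ c₂ lam₁ u₁) (h₂ : IsEigenForm c₁ c₂ lam₂ u₂) (hne : lam₁ ≠ lam₂)
    (hu₁ : u₁ ≠ 0) (hu₂ : u₂ ≠ 0) : u₁.1 * u₂.2 - u₁.2 * u₂.1 ≠ 0 := by
  intro hdet
  have hsub : lam₁ - lam₂ ≠ 0 := sub_ne_zero.2 hne
  have h11 : u₁.1 * u₂.1 = 0 := (mul_eq_zero.1
    (by linear_combination u₁.1 * h₂.1 - u₂.1 * h₁.1 - c₁.2 * hdet)).resolve_left hsub
  have h12 : u₁.1 * u₂.2 = 0 := (mul_eq_zero.1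
    (by linear_combination u₁.2 * h₂.1 - u₂.2 * h₁.1 + (c₁.1 - lam₂) * hdet)).resolve_left hsub
  have h22 : u₁.2 * u₂.2 = 0 := (mul_eq_zero.1
    (by linear_combination u₁.2 * h₂.2 - u₂.2 * h₁.2 + c₂.1 * hdet)).resolve_left hsub
  have h21 : u₁.2 * u₂.1 = 0 := by linear_combination h12 - hdet
  rw [Ne, Prod.ext_iff] at hu₁ hu₂
  simp only [mul_eq_zero, Prod.fst_zero, Prod.snd_zero] at *
  tauto

variable {Z : Type*} [NormedAddCommGroup Z] [NormedSpace ℝ Z]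

/-- The rows of `A - lam₂` are eigenforms of `A` for `lam₁`, by the Cayley–Hamilton theorem. -/
lemma exists_contDiff_isEigenForm {c₁ c₂ : Z → ℝ × ℝ} (hc₁ : ContDiff ℝ ∞ c₁)
    (hc₂ : ContDiff ℝ ∞ c₂) {lam₁ lam₂ : Z → ℝ} (hlam₂ : ContDiff ℝ ∞ lam₂)
    (hne : lam₁ 0 ≠ lam₂ 0) (hadd : ∀ᶠ ζ in 𝓝 0, lam₁ ζ + lam₂ ζ = (c₁ ζ).1 + (c₂ ζ).2)
    (hmul : ∀ᶠ ζ in 𝓝 0, lam₁ ζ * lam₂ ζ = (c₁ ζ).1 * (c₂ ζ).2 - (c₂ ζ).1 * (c₁ ζ).2) :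
    ∃ u : Z → ℝ × ℝ, ContDiff ℝ ∞ u ∧ u 0 ≠ 0 ∧
      ∀ᶠ ζ in 𝓝 0, IsEigenForm (c₁ ζ) (c₂ ζ) (lam₁ ζ) (u ζ) := by
  by_cases hrow : ((c₁ 0).1 - lam₂ 0, (c₂ 0).1) = 0
  · refine ⟨fun ζ => ((c₁ ζ).2, (c₂ ζ).2 - lam₂ ζ), by fun_prop, fun hrow' => hne ?_, ?_⟩
    · have hdiag : (c₁ 0).1 - lam₂ 0 = 0 := (Prod.ext_iff.1 hrow).1
      have hdiag' : (c₂ 0).2 - lam₂ 0 = 0 := (Prod.ext_iff.1 hrow').2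
      linear_combination hadd.self_of_nhds + hdiag + hdiag'
    · filter_upwards [hadd, hmul] with ζ hadd hmul
      exact ⟨by linear_combination -(c₁ ζ).2 * hadd,
        by linear_combination hmul - (c₂ ζ).2 * hadd⟩
  · refine ⟨fun ζ => ((c₁ ζ).1 - lam₂ ζ, (c₂ ζ).1), by fun_prop, hrow, ?_⟩
    filter_upwards [hadd, hmul] with ζ hadd hmul
    exact ⟨by linear_combination hmul - (c₁ ζ).1 * hadd, by linear_combination -(c₂ ζ).1 * hadd⟩

variable [FiniteDimensional ℝ Z]

lemma exists_contDiff_sq_eq {f : Z → ℝ} (hf : ContDiff ℝ ∞ f) {r : ℝ} (hr : r ≠ 0)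
    (hf0 : r ^ 2 = f 0) : ∃ s : Z → ℝ, ContDiff ℝ ∞ s ∧ s 0 = r ∧ ∀ᶠ ζ in 𝓝 0, s ζ ^ 2 = f ζ := by
  have hpos : ∀ᶠ ζ in 𝓝 0, 0 < f ζ :=
    hf.continuous.continuousAt.eventually_const_lt (by rw [← hf0]; positivity)
  obtain ⟨χ, hχ, -, hχ1, hχs⟩ := exists_cutoff_smul_mem hpos
  refine ⟨fun ζ => r * √(f (χ ζ • ζ) / r ^ 2),
    contDiff_const.mul (((hf.comp (hχ.smul contDiff_id)).div_const _).sqrt fun ζ =>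
      (div_pos (hχs ζ) (by positivity)).ne'), ?_, ?_⟩
  · simp only [smul_zero, ← hf0, div_self (pow_ne_zero 2 hr), Real.sqrt_one, mul_one]
  · filter_upwards [hχ1, hpos] with ζ hζ hfζ
    rw [hζ, one_smul, mul_pow, Real.sq_sqrt (by positivity), mul_div_cancel₀ _ (pow_ne_zero 2 hr)]

lemma exists_contDiff_add_eq_mul_eq {t d : Z → ℝ} (ht : ContDiff ℝ ∞ t) (hd : ContDiff ℝ ∞ d)
    {r₁ r₂ : ℝ} (hr : r₁ ≠ r₂) (hadd : r₁ + r₂ = t 0) (hmul : r₁ * r₂ = d 0) :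
    ∃ lam₁ lam₂ : Z → ℝ, ContDiff ℝ ∞ lam₁ ∧ ContDiff ℝ ∞ lam₂ ∧ lam₁ 0 = r₁ ∧ lam₂ 0 = r₂ ∧
      (∀ᶠ ζ in 𝓝 0, lam₁ ζ + lam₂ ζ = t ζ) ∧ ∀ᶠ ζ in 𝓝 0, lam₁ ζ * lam₂ ζ = d ζ := by
  obtain ⟨s, hs, hs0, hsq⟩ := exists_contDiff_sq_eq (f := fun ζ => t ζ ^ 2 - 4 * d ζ)
    (by fun_prop) (sub_ne_zero.2 hr) (by linear_combination (r₁ + r₂ + t 0) * hadd - 4 * hmul)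
  refine ⟨fun ζ => (t ζ + s ζ) / 2, fun ζ => (t ζ - s ζ) / 2, by fun_prop, by fun_prop,
    by linear_combination (hs0 - hadd) / 2, by linear_combination -(hs0 + hadd) / 2,
    .of_forall fun ζ => by ring, ?_⟩
  filter_upwards [hsq] with ζ hζ
  linear_combination -hζ / 4

end EigenForms

section LocalInverse

variable {E : Type*} [NormedAddCommGroup E] [NormedSpace ℝ E] [FiniteDimensional ℝ E]

lemma exists_openPartialHomeomorph_contDiffOn_symm {Φ : E → E} (hΦ : ContDiff ℝ ∞ Φ) {x₀ : E}
    (hinj : Function.Injective (fderiv ℝ Φ x₀)) {s : Set E} (hs : s ∈ 𝓝 x₀) :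
    ∃ e : OpenPartialHomeomorph E E, e = Φ ∧ x₀ ∈ e.source ∧ e.source ⊆ s ∧
      ContDiffOn ℝ ∞ e.symm e.target := by
  have : CompleteSpace E := FiniteDimensional.complete ℝ E
  let L : E ≃L[ℝ] E :=
    (LinearEquiv.ofInjectiveEndo (fderiv ℝ Φ x₀ : E →ₗ[ℝ] E) hinj).toContinuousLinearEquiv
  have hderiv (x) : HasFDerivAt Φ (fderiv ℝ Φ x) x :=
    (hΦ.differentiable (by simp) x).hasFDerivAt
  have hL : HasFDerivAt Φ (L : E →L[ℝ] E) x₀ := hderiv x₀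
  have hequiv : ∀ᶠ x in 𝓝 x₀, fderiv ℝ Φ x ∈ Set.range ((↑) : (E ≃L[ℝ] E) → E →L[ℝ] E) :=
    (hΦ.continuous_fderiv (by simp)).continuousAt.eventually_mem L.nhds
  obtain ⟨W, hW, hWo, hx₀W⟩ := eventually_nhds_iff.1 (hequiv.and hs)
  let e := hΦ.contDiffAt.toOpenPartialHomeomorph Φ hL (by simp)
  have he : (e : E → E) = Φ := hΦ.contDiffAt.toOpenPartialHomeomorph_coe hL (by simp)
  have hx₀ : x₀ ∈ e.source := hΦ.contDiffAt.mem_toOpenPartialHomeomorph_source hL (by simp)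
  refine ⟨e.restrOpen W hWo, he, ⟨hx₀, hx₀W⟩, fun x hx => (hW x hx.2).2, fun y hy => ?_⟩
  obtain ⟨M, hM⟩ := (hW _ ((e.restrOpen W hWo).map_target hy).2).1
  refine ((e.restrOpen W hWo).contDiffAt_symm (f₀' := M) hy ?_ ?_).contDiffWithinAt
  · rw [hM]
    exact he ▸ hderiv _
  · exact he ▸ hΦ.contDiffAt

lemma orbEquiv_of_eventually {V N Φ : E → E} {h : E → ℝ} {x₀ y₀ : E} (hΦ : ContDiff ℝ ∞ Φ)
    (hx₀ : Φ x₀ = y₀) (hinj : Function.Injective (fderiv ℝ Φ x₀)) (hh : ContDiff ℝ ∞ h)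
    (hh0 : h x₀ ≠ 0) (hconj : ∀ᶠ x in 𝓝 x₀, fderiv ℝ Φ x (V x) = h x • N (Φ x)) :
    OrbEquiv Set.univ V N x₀ y₀ := by
  obtain ⟨e, rfl, he, hes, hsymm⟩ := exists_openPartialHomeomorph_contDiffOn_symm hΦ hinj
    (hconj.and (hh.continuous.continuousAt.eventually_ne hh0))
  exact ⟨e.source, e.target, e, e.symm, h, e.open_source, e.open_target, he,
    hx₀ ▸ e.map_source he, Set.subset_univ _, hΦ.contDiffOn, hsymm, hx₀, e.mapsTo,
    e.mapsTo_symm, fun x => e.left_inv, fun y => e.right_inv, hh.contDiffOn,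
    fun x hx => (hes hx).2, fun x hx => (hes hx).1⟩

end LocalInverse

section AxisField

variable {Z : Type*} [NormedAddCommGroup Z] [NormedSpace ℝ Z] {F₁ F₂ : ℝ × ℝ × Z → ℝ × ℝ × Z}

/-- The trace of the derivative of `axisField F₁ F₂` at `(0, 0, ζ)`; the derivative has the
columns `F₁ (0, 0, ζ)`, `F₂ (0, 0, ζ)` and zero. -/
def axisTrace (F₁ F₂ : ℝ × ℝ × Z → ℝ × ℝ × Z) (ζ : Z) : ℝ :=
  (F₁ (0, 0, ζ)).1 + (F₂ (0, 0, ζ)).2.1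

/-- The determinant of the block of the derivative of `axisField F₁ F₂` at `(0, 0, ζ)` in the
first two coordinates. -/
def axisDet (F₁ F₂ : ℝ × ℝ × Z → ℝ × ℝ × Z) (ζ : Z) : ℝ :=
  (F₁ (0, 0, ζ)).1 * (F₂ (0, 0, ζ)).2.1 - (F₂ (0, 0, ζ)).1 * (F₁ (0, 0, ζ)).2.1

lemma hasFDerivAt_axisField (hF₁ : ContDiff ℝ ∞ F₁) (hF₂ : ContDiff ℝ ∞ F₂) (ζ : Z) :
    HasFDerivAt (axisField F₁ F₂)
      ((ContinuousLinearMap.fst ℝ ℝ (ℝ × Z)).smulRight (F₁ (0, 0, ζ)) +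
        (.fst ℝ ℝ Z ∘L .snd ℝ ℝ (ℝ × Z) : ℝ × ℝ × Z →L[ℝ] ℝ).smulRight (F₂ (0, 0, ζ)))
      (0, 0, ζ) := by
  have hfst := (ContinuousLinearMap.fst ℝ ℝ (ℝ × Z)).hasFDerivAt (x := (0, 0, ζ))
  have hsnd := (.fst ℝ ℝ Z ∘L .snd ℝ ℝ (ℝ × Z) : ℝ × ℝ × Z →L[ℝ] ℝ).hasFDerivAt (x := (0, 0, ζ))
  refine ((hfst.smul (hF₁.differentiable (by simp) _).hasFDerivAt).add
    (hsnd.smul (hF₂.differentiable (by simp) _).hasFDerivAt)).congr_fderiv ?_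
  ext <;> simp

lemma eventually_fderiv_eq_of_eventuallyEq (hF₁ : ContDiff ℝ ∞ F₁) (hF₂ : ContDiff ℝ ∞ F₂)
    {f : ℝ × ℝ × Z → ℝ} {L : ℝ × ℝ × Z →L[ℝ] ℝ}
    (hf : f =ᶠ[𝓝 0] fun x => L (axisField F₁ F₂ x)) :
    ∀ᶠ ζ : Z in 𝓝 0, fderiv ℝ f (0, 0, ζ) (1, 0, 0) = L (F₁ (0, 0, ζ)) ∧
      fderiv ℝ f (0, 0, ζ) (0, 1, 0) = L (F₂ (0, 0, ζ)) := by
  have haxis : Tendsto (fun ζ : Z => ((0, 0, ζ) : ℝ × ℝ × Z)) (𝓝 0) (𝓝 0) :=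
    Continuous.tendsto (by fun_prop) 0
  filter_upwards [haxis.eventually hf.eventuallyEq_nhds] with ζ hζ
  have hderiv := (L.hasFDerivAt.comp _ (hasFDerivAt_axisField hF₁ hF₂ ζ)).congr_of_eventuallyEq hζ
  simp [hderiv.fderiv]

variable [FiniteDimensional ℝ Z]

lemma exists_eq_axisField {V : ℝ × ℝ × Z → ℝ × ℝ × Z} (hV : ContDiff ℝ ∞ V)
    (h0 : ∀ ζ, V (0, 0, ζ) = 0) :
    ∃ F₁ F₂ : ℝ × ℝ × Z → ℝ × ℝ × Z, ContDiff ℝ ∞ F₁ ∧ ContDiff ℝ ∞ F₂ ∧ V = axisField F₁ F₂ := by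
  let b := Module.finBasis ℝ (ℝ × ℝ × Z)
  have hcoord (i) : ContDiff ℝ ∞ fun x => b.coord i (V x) :=
    (b.coord i).toContinuousLinearMap.contDiff.comp hV
  choose g h hg hh hgh using fun i => exists_eq_mul_add_mul (hcoord i) fun ζ => by simp [h0]
  refine ⟨fun x => ∑ i, g i x • b i, fun x => ∑ i, h i x • b i,
    ContDiff.sum fun i _ => (hg i).smul contDiff_const,
    ContDiff.sum fun i _ => (hh i).smul contDiff_const, funext fun x => ?_⟩
  calc V x = ∑ i, b.coord i (V x) • b i := (b.sum_repr (V x)).symm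
    _ = ∑ i, (x.1 • g i x • b i + x.2.1 • h i x • b i) :=
      Finset.sum_congr rfl fun i _ => by rw [hgh]; module
    _ = _ := by rw [Finset.sum_add_distrib, ← Finset.smul_sum, ← Finset.smul_sum, axisField]

theorem exists_eventuallyEq_axisField {V : ℝ × ℝ × Z → ℝ × ℝ × Z} {U : Set (ℝ × ℝ × Z)}
    (hU : IsOpen U) (h0 : 0 ∈ U) (hV : ContDiffOn ℝ ∞ V U)
    (hV0 : ∀ ζ, (0, 0, ζ) ∈ U → V (0, 0, ζ) = 0) :
    ∃ F₁ F₂, ContDiff ℝ ∞ F₁ ∧ ContDiff ℝ ∞ F₂ ∧ V =ᶠ[𝓝 0] axisField F₁ F₂ := by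
  obtain ⟨χ, hχ, -, hχ1, hχU⟩ := exists_cutoff_smul_mem (hU.mem_nhds h0)
  have hsmooth : ContDiff ℝ ∞ fun x => V (χ x • x) :=
    contDiff_iff_contDiffAt.2 fun x => (hV.contDiffAt (hU.mem_nhds (hχU x))).comp
      (f := fun x => χ x • x) x (hχ.smul contDiff_id).contDiffAt
  obtain ⟨F₁, F₂, hF₁, hF₂, hF⟩ := exists_eq_axisField hsmooth fun ζ => by
    have hmem := hχU (0, 0, ζ)
    simp only [Prod.smul_mk, smul_zero] at hmem ⊢
    exact hV0 _ hmem
  refine ⟨F₁, F₂, hF₁, hF₂, ?_⟩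
  filter_upwards [hχ1] with x hx
  simp only [← hF, hx, one_smul]

end AxisField

section Straightening

variable {Z : Type*} [NormedAddCommGroup Z] [NormedSpace ℝ Z] {F₁ F₂ : ℝ × ℝ × Z → ℝ × ℝ × Z}

/-- The change of coordinates `(ξ, η, ζ) ↦ (u₁(ζ)(ξ, η), u₂(ζ)(ξ, η), ζ)` defined by two families
of linear forms on the plane. -/
def straightening (u₁ u₂ : Z → ℝ × ℝ) (x : ℝ × ℝ × Z) : ℝ × ℝ × Z :=
  ((u₁ x.2.2).1 * x.1 + (u₁ x.2.2).2 * x.2.1, (u₂ x.2.2).1 * x.1 + (u₂ x.2.2).2 * x.2.1, x.2.2)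

variable {u₁ u₂ : Z → ℝ × ℝ}

lemma contDiff_straightening (hu₁ : ContDiff ℝ ∞ u₁) (hu₂ : ContDiff ℝ ∞ u₂) :
    ContDiff ℝ ∞ (straightening u₁ u₂) := by
  unfold straightening
  fun_prop

lemma fderiv_straightening (hu₁ : ContDiff ℝ ∞ u₁) (hu₂ : ContDiff ℝ ∞ u₂) (ζ : Z)
    (h : ℝ × ℝ × Z) : fderiv ℝ (straightening u₁ u₂) (0, 0, ζ) h =
      ((u₁ ζ).1 * h.1 + (u₁ ζ).2 * h.2.1, (u₂ ζ).1 * h.1 + (u₂ ζ).2 * h.2.1, h.2.2) := by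
  have hform {u : Z → ℝ × ℝ} (hu : ContDiff ℝ ∞ u) :
      HasFDerivAt (fun x : ℝ × ℝ × Z => (u x.2.2).1 * x.1 + (u x.2.2).2 * x.2.1)
        ((u ζ).1 • .fst ℝ ℝ (ℝ × Z) + (u ζ).2 • (.fst ℝ ℝ Z ∘L .snd ℝ ℝ (ℝ × Z))) (0, 0, ζ) := by
    have hfst := (ContinuousLinearMap.fst ℝ ℝ (ℝ × Z)).hasFDerivAt (x := (0, 0, ζ))
    have hsnd := (.fst ℝ ℝ Z ∘L .snd ℝ ℝ (ℝ × Z) : ℝ × ℝ × Z →L[ℝ] ℝ).hasFDerivAt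
      (x := (0, 0, ζ))
    have h₁ : Differentiable ℝ fun x : ℝ × ℝ × Z => (u x.2.2).1 :=
      ContDiff.differentiable (n := ∞) (by fun_prop) (by simp)
    have h₂ : Differentiable ℝ fun x : ℝ × ℝ × Z => (u x.2.2).2 :=
      ContDiff.differentiable (n := ∞) (by fun_prop) (by simp)
    refine (((h₁ _).hasFDerivAt.mul hfst).add ((h₂ _).hasFDerivAt.mul hsnd)).congr_fderiv ?_
    ext <;> simp
  have hbase := (.snd ℝ ℝ Z ∘L .snd ℝ ℝ (ℝ × Z) : ℝ × ℝ × Z →L[ℝ] Z).hasFDerivAt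
    (x := (0, 0, ζ))
  have hprod : HasFDerivAt (straightening u₁ u₂) _ (0, 0, ζ) :=
    (hform hu₁).prodMk ((hform hu₂).prodMk hbase)
  rw [hprod.fderiv]
  simp

lemma injective_fderiv_straightening (hu₁ : ContDiff ℝ ∞ u₁) (hu₂ : ContDiff ℝ ∞ u₂) {ζ : Z}
    (hdet : (u₁ ζ).1 * (u₂ ζ).2 - (u₁ ζ).2 * (u₂ ζ).1 ≠ 0) :
    Function.Injective (fderiv ℝ (straightening u₁ u₂) (0, 0, ζ)) := by
  refine (injective_iff_map_eq_zero _).2 fun h hh => ?_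
  simp only [fderiv_straightening hu₁ hu₂, Prod.mk_eq_zero] at hh
  obtain ⟨h₁, h₂, h₃⟩ := hh
  refine Prod.ext ?_ (Prod.ext ?_ h₃) <;> refine (mul_eq_zero.1 ?_).resolve_left hdet
  · linear_combination (u₂ ζ).2 * h₁ - (u₁ ζ).2 * h₂
  · linear_combination (u₁ ζ).1 * h₂ - (u₂ ζ).1 * h₁

lemma exists_straightening_inverse (hu₁ : ContDiff ℝ ∞ u₁) (hu₂ : ContDiff ℝ ∞ u₂)
    (hdet : ∀ ζ, (u₁ ζ).1 * (u₂ ζ).2 - (u₁ ζ).2 * (u₂ ζ).1 ≠ 0) :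
    ∃ w₁ w₂ : Z → ℝ × ℝ, ContDiff ℝ ∞ w₁ ∧ ContDiff ℝ ∞ w₂ ∧
      Function.LeftInverse (straightening w₁ w₂) (straightening u₁ u₂) ∧
      Function.RightInverse (straightening w₁ w₂) (straightening u₁ u₂) := by
  let d (ζ : Z) : ℝ := (u₁ ζ).1 * (u₂ ζ).2 - (u₁ ζ).2 * (u₂ ζ).1
  have hd : ContDiff ℝ ∞ d := by fun_prop
  have hdinv (ζ) : d ζ * (d ζ)⁻¹ = 1 := mul_inv_cancel₀ (hdet ζ)
  refine ⟨fun ζ => (d ζ)⁻¹ • ((u₂ ζ).2, -(u₁ ζ).2), fun ζ => (d ζ)⁻¹ • (-(u₂ ζ).1, (u₁ ζ).1),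
    (hd.inv hdet).smul (by fun_prop), (hd.inv hdet).smul (by fun_prop), fun x => ?_, fun y => ?_⟩
  · refine Prod.ext ?_ (Prod.ext ?_ rfl) <;>
      simp only [straightening, Prod.smul_mk, smul_eq_mul]
    · linear_combination x.1 * hdinv x.2.2
    · linear_combination x.2.1 * hdinv x.2.2
  · refine Prod.ext ?_ (Prod.ext ?_ rfl) <;>
      simp only [straightening, Prod.smul_mk, smul_eq_mul]
    · linear_combination y.1 * hdinv y.2.2
    · linear_combination y.2.1 * hdinv y.2.2

lemma exists_axisDiagonal_straightening (hF₁ : ContDiff ℝ ∞ F₁) (hF₂ : ContDiff ℝ ∞ F₂)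
    (hu₁ : ContDiff ℝ ∞ u₁) (hu₂ : ContDiff ℝ ∞ u₂) {lam₁ lam₂ : Z → ℝ}
    (hdet : ∀ ζ, (u₁ ζ).1 * (u₂ ζ).2 - (u₁ ζ).2 * (u₂ ζ).1 ≠ 0)
    (h₁ : ∀ ζ, IsEigenForm ((F₁ (0, 0, ζ)).1, (F₁ (0, 0, ζ)).2.1)
      ((F₂ (0, 0, ζ)).1, (F₂ (0, 0, ζ)).2.1) (lam₁ ζ) (u₁ ζ))
    (h₂ : ∀ ζ, IsEigenForm ((F₁ (0, 0, ζ)).1, (F₁ (0, 0, ζ)).2.1)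
      ((F₂ (0, 0, ζ)).1, (F₂ (0, 0, ζ)).2.1) (lam₂ ζ) (u₂ ζ)) :
    ∃ G₁ G₂ : ℝ × ℝ × Z → ℝ × ℝ × Z, AxisDiagonal G₁ G₂ ∧ (∀ ζ, (G₁ (0, 0, ζ)).1 = lam₁ ζ) ∧
      (∀ ζ, (G₂ (0, 0, ζ)).2.1 = lam₂ ζ) ∧
      ∀ x, fderiv ℝ (straightening u₁ u₂) x (axisField F₁ F₂ x) =
        axisField G₁ G₂ (straightening u₁ u₂ x) := by
  obtain ⟨w₁, w₂, hw₁, hw₂, hleft, hright⟩ := exists_straightening_inverse hu₁ hu₂ hdet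
  have hL := contDiff_straightening hu₁ hu₂
  have hM := contDiff_straightening hw₁ hw₂
  let push (p q : Z → ℝ) (y : ℝ × ℝ × Z) : ℝ × ℝ × Z :=
    fderiv ℝ (straightening u₁ u₂) (straightening w₁ w₂ y)
      (p y.2.2 • F₁ (straightening w₁ w₂ y) + q y.2.2 • F₂ (straightening w₁ w₂ y))
  have hpush {p q : Z → ℝ} (hp : ContDiff ℝ ∞ p) (hq : ContDiff ℝ ∞ q) :
      ContDiff ℝ ∞ (push p q) :=
    ((hL.fderiv_right (m := ∞) (by simp)).comp hM).clm_apply (by fun_prop)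
  have hMaxis (ζ) : straightening w₁ w₂ (0, 0, ζ) = (0, 0, ζ) := by simp [straightening]
  have hpush_axis (p q : Z → ℝ) (ζ) :
      (push p q (0, 0, ζ)).1 = lam₁ ζ * ((u₁ ζ).1 * p ζ + (u₁ ζ).2 * q ζ) ∧
        (push p q (0, 0, ζ)).2.1 = lam₂ ζ * ((u₂ ζ).1 * p ζ + (u₂ ζ).2 * q ζ) := by
    simp only [push, hMaxis, fderiv_straightening hu₁ hu₂, Prod.fst_add, Prod.snd_add,
      Prod.smul_fst, Prod.smul_snd, smul_eq_mul]
    exact ⟨by linear_combination p ζ * (h₁ ζ).1 + q ζ * (h₁ ζ).2,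
      by linear_combination p ζ * (h₂ ζ).1 + q ζ * (h₂ ζ).2⟩
  have hdual₁ (ζ) := hright (1, 0, ζ)
  have hdual₂ (ζ) := hright (0, 1, ζ)
  simp only [straightening, mul_one, mul_zero, add_zero, zero_add, Prod.mk.injEq, and_true]
    at hdual₁ hdual₂
  have hG₁ := hpush_axis (fun ζ => (w₁ ζ).1) fun ζ => (w₂ ζ).1
  have hG₂ := hpush_axis (fun ζ => (w₁ ζ).2) fun ζ => (w₂ ζ).2
  simp only [hdual₁, hdual₂, mul_one, mul_zero] at hG₁ hG₂
  refine ⟨_, _, ⟨hpush hw₁.fst hw₂.fst, hpush hw₁.snd hw₂.snd, fun ζ => (hG₁ ζ).2,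
    fun ζ => (hG₂ ζ).1⟩, fun ζ => (hG₁ ζ).1, fun ζ => (hG₂ ζ).2, fun x => ?_⟩
  obtain ⟨y, rfl⟩ : ∃ y, straightening w₁ w₂ y = x := ⟨_, hleft x⟩
  rw [hright y]
  simp only [axisField, push, ← map_smul, ← map_add]
  congr 1
  generalize F₁ (straightening w₁ w₂ y) = a, F₂ (straightening w₁ w₂ y) = b
  simp only [straightening]
  module

end Straightening

section OrbitalEquivalence

variable {Z : Type*} [NormedAddCommGroup Z] [NormedSpace ℝ Z] [FiniteDimensional ℝ Z]
  {F₁ F₂ : ℝ × ℝ × Z → ℝ × ℝ × Z} {V : ℝ × ℝ × Z → ℝ × ℝ × Z}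

lemma AxisDiagonal.exists_orbEquiv (hF : AxisDiagonal F₁ F₂)
    (hres : ∀ ζ, NonResonant (F₁ (0, 0, ζ)).1 (F₂ (0, 0, ζ)).2.1) {L : ℝ × ℝ × Z → ℝ × ℝ × Z}
    (hL : ContDiff ℝ ∞ L) (hL0 : L 0 = 0) (hL' : Function.Injective (fderiv ℝ L 0))
    (hV : ∀ᶠ x in 𝓝 0, fderiv ℝ L x (V x) = axisField F₁ F₂ (L x)) :
    OrbEquiv Set.univ V (fun y => ((F₁ (0, 0, y.2.2)).1 / (F₂ (0, 0, y.2.2)).2.1 * y.1, y.2.1, 0))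
      0 0 := by
  obtain ⟨Φ, hΦ, hΦ0, hΦ', hΦV⟩ := hF.exists_linearization hres
  have hF₂ := hF.contDiff₂
  have hcomp (x) : fderiv ℝ (Φ ∘ L) x = fderiv ℝ Φ (L x) ∘L fderiv ℝ L x :=
    fderiv_comp x (hΦ.differentiable (by simp) _) (hL.differentiable (by simp) x)
  have hL_tendsto : Tendsto L (𝓝 0) (𝓝 0) := by simpa [hL0] using hL.continuous.tendsto 0
  refine orbEquiv_of_eventually (hΦ.comp hL) (by simp [hL0, hΦ0])
    (h := fun x => (F₂ (0, 0, (Φ (L x)).2.2)).2.1) ?_ (by fun_prop) (hres _).right_ne_zero ?_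
  · rw [hcomp, hL0]
    exact hΦ'.comp hL'
  · filter_upwards [hV, hL_tendsto.eventually hΦV] with x hVx hΦx
    rw [hcomp, ContinuousLinearMap.comp_apply, hVx, hΦx, Function.comp_apply, Prod.smul_mk,
      Prod.smul_mk, smul_zero, smul_eq_mul, smul_eq_mul, ← mul_assoc,
      mul_div_cancel₀ _ (hres _).right_ne_zero]

theorem exists_orbEquiv_of_eigenforms (hF₁ : ContDiff ℝ ∞ F₁) (hF₂ : ContDiff ℝ ∞ F₂)
    (hV : V =ᶠ[𝓝 0] axisField F₁ F₂) {u₁ u₂ : Z → ℝ × ℝ} (hu₁ : ContDiff ℝ ∞ u₁)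
    (hu₂ : ContDiff ℝ ∞ u₂) {lam₁ lam₂ : Z → ℝ}
    (hdet : ∀ᶠ ζ in 𝓝 0, (u₁ ζ).1 * (u₂ ζ).2 - (u₁ ζ).2 * (u₂ ζ).1 ≠ 0)
    (h₁ : ∀ᶠ ζ in 𝓝 0, IsEigenForm ((F₁ (0, 0, ζ)).1, (F₁ (0, 0, ζ)).2.1)
      ((F₂ (0, 0, ζ)).1, (F₂ (0, 0, ζ)).2.1) (lam₁ ζ) (u₁ ζ))
    (h₂ : ∀ᶠ ζ in 𝓝 0, IsEigenForm ((F₁ (0, 0, ζ)).1, (F₁ (0, 0, ζ)).2.1)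
      ((F₂ (0, 0, ζ)).1, (F₂ (0, 0, ζ)).2.1) (lam₂ ζ) (u₂ ζ))
    (hres : ∀ᶠ ζ in 𝓝 0, NonResonant (lam₁ ζ) (lam₂ ζ)) :
    ∃ μ : Z → ℝ, ContDiff ℝ ∞ μ ∧ μ 0 = lam₁ 0 / lam₂ 0 ∧
      OrbEquiv Set.univ V (fun y => (μ y.2.2 * y.1, y.2.1, 0)) 0 0 := by
  have hbase : Tendsto (fun x : ℝ × ℝ × Z => x.2.2) (𝓝 0) (𝓝 0) :=
    Continuous.tendsto (by fun_prop) 0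
  obtain ⟨χ, hχ, -, hχ1, hχs⟩ := exists_cutoff_smul_mem
    (hbase.eventually (hdet.and (h₁.and (h₂.and hres))))
  let ρ (x : ℝ × ℝ × Z) : ℝ × ℝ × Z := χ x • x
  let σ (ζ : Z) : Z := χ (0, 0, ζ) • ζ
  have hρ : ContDiff ℝ ∞ ρ := hχ.smul contDiff_id
  have hσ : ContDiff ℝ ∞ σ := by fun_prop
  have hρσ (ζ) : ρ (0, 0, ζ) = (0, 0, σ ζ) := by simp [ρ, σ]
  have hgood (ζ) := hχs (0, 0, ζ)
  have hLs := contDiff_straightening (hu₁.comp hσ) (hu₂.comp hσ)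
  obtain ⟨G₁, G₂, hG, hG₁, hG₂, hGL⟩ := exists_axisDiagonal_straightening (hF₁.comp hρ)
    (hF₂.comp hρ) (hu₁.comp hσ) (hu₂.comp hσ) (lam₁ := lam₁ ∘ σ) (lam₂ := lam₂ ∘ σ)
    (fun ζ => (hgood ζ).1) (fun ζ => by simpa [hρσ] using (hgood ζ).2.1)
    (fun ζ => by simpa [hρσ] using (hgood ζ).2.2.1)
  have hLV : ∀ᶠ x in 𝓝 0, fderiv ℝ (straightening (u₁ ∘ σ) (u₂ ∘ σ)) x (V x) =
      axisField G₁ G₂ (straightening (u₁ ∘ σ) (u₂ ∘ σ) x) := by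
    filter_upwards [hV, hχ1] with x hVx hχx
    rw [← hGL, hVx, axisField, axisField, Function.comp_apply, Function.comp_apply,
      show ρ x = x from (congrArg (· • x) hχx).trans (one_smul ℝ x)]
  have hG₁s := hG.contDiff₁
  have hG₂s := hG.contDiff₂
  have hGres (ζ) : NonResonant (G₁ (0, 0, ζ)).1 (G₂ (0, 0, ζ)).2.1 := by
    rw [hG₁, hG₂]
    exact (hgood ζ).2.2.2
  refine ⟨fun ζ => (G₁ (0, 0, ζ)).1 / (G₂ (0, 0, ζ)).2.1,
    ContDiff.div (by fun_prop) (by fun_prop) fun ζ => (hGres ζ).right_ne_zero, ?_,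
    hG.exists_orbEquiv hGres hLs ?_ ?_ hLV⟩
  · simp [hG₁, hG₂, σ]
  · simp [straightening]
  · exact injective_fderiv_straightening (hu₁.comp hσ) (hu₂.comp hσ) (hgood 0).1

theorem exists_orbEquiv_of_nonResonant (hF₁ : ContDiff ℝ ∞ F₁) (hF₂ : ContDiff ℝ ∞ F₂)
    (hV : V =ᶠ[𝓝 0] axisField F₁ F₂) {r₁ r₂ : ℝ} (hr : r₁ ≠ r₂)
    (hadd : r₁ + r₂ = axisTrace F₁ F₂ 0) (hmul : r₁ * r₂ = axisDet F₁ F₂ 0)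
    (hres : ∀ᶠ ζ in 𝓝 0, ∀ a b, a + b = axisTrace F₁ F₂ ζ → a * b = axisDet F₁ F₂ ζ →
      NonResonant a b) :
    ∃ μ : Z → ℝ, ContDiff ℝ ∞ μ ∧ μ 0 = r₁ / r₂ ∧
      OrbEquiv Set.univ V (fun y => (μ y.2.2 * y.1, y.2.1, 0)) 0 0 := by
  obtain ⟨lam₁, lam₂, hlam₁, hlam₂, rfl, rfl, hadd, hmul⟩ := exists_contDiff_add_eq_mul_eq
    (t := axisTrace F₁ F₂) (d := axisDet F₁ F₂) (by unfold axisTrace; fun_prop)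
    (by unfold axisDet; fun_prop) hr hadd hmul
  let c₁ (ζ : Z) : ℝ × ℝ := ((F₁ (0, 0, ζ)).1, (F₁ (0, 0, ζ)).2.1)
  let c₂ (ζ : Z) : ℝ × ℝ := ((F₂ (0, 0, ζ)).1, (F₂ (0, 0, ζ)).2.1)
  have hc₁ : ContDiff ℝ ∞ c₁ := by fun_prop
  have hc₂ : ContDiff ℝ ∞ c₂ := by fun_prop
  obtain ⟨u₁, hu₁, hu₁0, h₁⟩ := exists_contDiff_isEigenForm hc₁ hc₂ hlam₂ hr hadd hmul
  obtain ⟨u₂, hu₂, hu₂0, h₂⟩ := exists_contDiff_isEigenForm hc₁ hc₂ hlam₁ hr.symm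
    (hadd.mono fun ζ hζ => (add_comm _ _).trans hζ) (hmul.mono fun ζ hζ => (mul_comm _ _).trans hζ)
  have hdet : ContDiff ℝ ∞ fun ζ => (u₁ ζ).1 * (u₂ ζ).2 - (u₁ ζ).2 * (u₂ ζ).1 := by fun_prop
  refine exists_orbEquiv_of_eigenforms hF₁ hF₂ hV hu₁ hu₂
    (hdet.continuous.continuousAt.eventually_ne
      (h₁.self_of_nhds.det_ne_zero h₂.self_of_nhds hr hu₁0 hu₂0)) h₁ h₂ ?_
  filter_upwards [hres, hadd, hmul] with ζ hres using hres _ _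

end OrbitalEquivalence

end OrbitalLinearization

open OrbitalLinearization

/-- If `λ₁(0), λ₂(0)` are real, nonzero and distinct and there are no resonances of first
or second type of any order for `ζ` near `0`, the germ of `V` at `0` is `C^∞`-smoothly
orbitally equivalent to `ξ̇ = μ(ζ)·ξ, η̇ = η, ζ̇ᵢ = 0` with `μ(0) = λ₁(0)/λ₂(0)`. -/
theorem stmt9 (l : ℕ)
    (U₀ : Set (ℝ × ℝ × (Fin l → ℝ))) (hU₀ : IsOpen U₀) (h0 : (0 : ℝ × ℝ × (Fin l → ℝ)) ∈ U₀)
    (v w : (ℝ × ℝ × (Fin l → ℝ)) → ℝ) (α β : Fin l → (ℝ × ℝ × (Fin l → ℝ)) → ℝ)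
    (hv : ContDiffOn ℝ (⊤ : ℕ∞) v U₀) (hw : ContDiffOn ℝ (⊤ : ℕ∞) w U₀)
    (hα : ∀ i, ContDiffOn ℝ (⊤ : ℕ∞) (α i) U₀) (hβ : ∀ i, ContDiffOn ℝ (⊤ : ℕ∞) (β i) U₀)
    (hvanish : ∀ ζ : Fin l → ℝ, ((0 : ℝ), (0 : ℝ), ζ) ∈ U₀ →
      v ((0 : ℝ), (0 : ℝ), ζ) = 0 ∧ w ((0 : ℝ), (0 : ℝ), ζ) = 0)
    (V : (ℝ × ℝ × (Fin l → ℝ)) → (ℝ × ℝ × (Fin l → ℝ)))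
    (hV : V = fun x => (v x, w x, fun i => α i x * v x + β i x * w x))
    (Z : Set (Fin l → ℝ)) (hZ : IsOpen Z) (hZ0 : (0 : Fin l → ℝ) ∈ Z)
    (lam₁ lam₂ : (Fin l → ℝ) → ℂ)
    (hlam : ∀ ζ ∈ Z,
      lam₁ ζ + lam₂ ζ =
        ((fderiv ℝ v ((0 : ℝ), (0 : ℝ), ζ) ((1 : ℝ), (0 : ℝ), (0 : Fin l → ℝ)) +
          fderiv ℝ w ((0 : ℝ), (0 : ℝ), ζ) ((0 : ℝ), (1 : ℝ), (0 : Fin l → ℝ)) : ℝ) : ℂ) ∧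
      lam₁ ζ * lam₂ ζ =
        ((fderiv ℝ v ((0 : ℝ), (0 : ℝ), ζ) ((1 : ℝ), (0 : ℝ), (0 : Fin l → ℝ)) *
          fderiv ℝ w ((0 : ℝ), (0 : ℝ), ζ) ((0 : ℝ), (1 : ℝ), (0 : Fin l → ℝ)) -
          fderiv ℝ v ((0 : ℝ), (0 : ℝ), ζ) ((0 : ℝ), (1 : ℝ), (0 : Fin l → ℝ)) *
          fderiv ℝ w ((0 : ℝ), (0 : ℝ), ζ) ((1 : ℝ), (0 : ℝ), (0 : Fin l → ℝ)) : ℝ) : ℂ))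
    -- λ₁(0), λ₂(0) real, nonzero, distinct
    (him1 : (lam₁ 0).im = 0) (him2 : (lam₂ 0).im = 0)
    (hne1 : lam₁ 0 ≠ 0) (hne2 : lam₂ 0 ≠ 0) (hne12 : lam₁ 0 ≠ lam₂ 0)
    -- no resonances of first type of any order near 0
    (hres1 : ∀ ζ ∈ Z, ∀ p₁ p₂ : ℕ, 1 ≤ p₁ + p₂ →
      (p₁ : ℂ) * lam₁ ζ + (p₂ : ℂ) * lam₂ ζ ≠ 0)
    -- no resonances of second type of any order near 0
    (hres2 : ∀ ζ ∈ Z, ∀ p₁ p₂ : ℕ, 2 ≤ p₁ + p₂ →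
      (p₁ : ℂ) * lam₁ ζ + (p₂ : ℂ) * lam₂ ζ ≠ lam₁ ζ ∧
      (p₁ : ℂ) * lam₁ ζ + (p₂ : ℂ) * lam₂ ζ ≠ lam₂ ζ) :
    ∃ μ : (Fin l → ℝ) → ℝ,
      (∃ Z' : Set (Fin l → ℝ), IsOpen Z' ∧ (0 : Fin l → ℝ) ∈ Z' ∧
        ContDiffOn ℝ (⊤ : ℕ∞) μ Z') ∧
      μ 0 = (lam₁ 0).re / (lam₂ 0).re ∧
      OrbEquiv Set.univ V
        (fun y : ℝ × ℝ × (Fin l → ℝ) => (μ y.2.2 * y.1, y.2.1, (0 : Fin l → ℝ))) 0 0 := by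
  have hVC : ContDiffOn ℝ (⊤ : ℕ∞) V U₀ := hV ▸ hv.prodMk (hw.prodMk (contDiffOn_pi.2 fun i =>
    ((hα i).mul hv).add ((hβ i).mul hw)))
  obtain ⟨F₁, F₂, hF₁, hF₂, hVF⟩ := exists_eventuallyEq_axisField hU₀ h0 hVC fun ζ hζ => by
    obtain ⟨hvζ, hwζ⟩ := hvanish ζ hζ
    simp [hV, hvζ, hwζ, Prod.ext_iff, funext_iff]
  have hvF := eventually_fderiv_eq_of_eventuallyEq hF₁ hF₂ (f := v)
    (L := .fst ℝ ℝ (ℝ × (Fin l → ℝ))) (hVF.mono fun x hx => by simp [← hx, hV])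
  have hwF := eventually_fderiv_eq_of_eventuallyEq hF₁ hF₂ (f := w)
    (L := .fst ℝ ℝ (Fin l → ℝ) ∘L .snd ℝ ℝ (ℝ × (Fin l → ℝ)))
    (hVF.mono fun x hx => by simp [← hx, hV])
  have hlamF : ∀ᶠ ζ in 𝓝 0, lam₁ ζ + lam₂ ζ = (axisTrace F₁ F₂ ζ : ℝ) ∧
      lam₁ ζ * lam₂ ζ = (axisDet F₁ F₂ ζ : ℝ) := by
    filter_upwards [hvF, hwF, hZ.mem_nhds hZ0] with ζ hvζ hwζ hζ
    have h := hlam ζ hζ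
    rw [hvζ.1, hvζ.2, hwζ.1, hwζ.2] at h
    exact h
  have hre₁ : ((lam₁ 0).re : ℂ) = lam₁ 0 := Complex.ext rfl him1.symm
  have hre₂ : ((lam₂ 0).re : ℂ) = lam₂ 0 := Complex.ext rfl him2.symm
  obtain ⟨hadd, hmul⟩ := hlamF.self_of_nhds
  rw [← hre₁, ← hre₂] at hadd hmul hne12
  obtain ⟨μ, hμ, hμ0, hμV⟩ := exists_orbEquiv_of_nonResonant hF₁ hF₂ hVF (mod_cast hne12)
    (mod_cast hadd) (mod_cast hmul) <| by
      filter_upwards [hlamF, hZ.mem_nhds hZ0] with ζ hlamζ hζ a b hab hab'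
      exact nonResonant_ofReal.1 <| NonResonant.of_add_eq_of_mul_eq ⟨hres1 ζ hζ, hres2 ζ hζ⟩
        (by rw [hlamζ.1, ← hab, Complex.ofReal_add]) (by rw [hlamζ.2, ← hab', Complex.ofReal_mul])
  exact ⟨μ, ⟨Set.univ, isOpen_univ, trivial, hμ.contDiffOn⟩, hμ0, hμV⟩
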